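/- arXiv:1302.6375 — 10 statements merged into one kernel-verified Lean document; each statement's English description precedes it below -/
import Mathlib

section
/- Let f : ℝ → ℂ be a 2π-periodic function that is integrable on [0, 2π] and satisfies ∫₀^{2π} f(t) dt = 0, and let λ be a nonzero real number. Then the improper integral ∫₀^∞ t·f(t)/(t² + λ²) dt converges, i.e. the limit as a → ∞ of ∫₀^a t·f(t)/(t² + λ²) dt exists. -/
/-! Write `g t = t / (t ^ 2 + l ^ 2)`. Because `f` has mean zero, its primitive `F` starting at `0` is
continuous and periodic, hence bounded. Integration by parts gives
`∫₀ᵃ g f = g a * F a - ∫₀ᵃ F g'`; the boundary term tends to `0`, since `g` does and `F` is bounded,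
and the remaining integral converges absolutely, since `g' = O(1 / (1 + t ^ 2))`.

As `f` is merely integrable, `F` is only absolutely continuous, so the integration by parts is the
one for absolutely continuous functions. Mathlib has it for real-valued functions: the
argument is carried out in `exists_tendsto_real` for real `f`, and applied to the real and
imaginary parts.
-/

open MeasureTheory Filter Topology

lemma hasDerivAt_kernel (l : ℝ) (hl : l ≠ 0) (t : ℝ) :
    HasDerivAt (fun t : ℝ => t / (t ^ 2 + l ^ 2)) ((l ^ 2 - t ^ 2) / (t ^ 2 + l ^ 2) ^ 2) t := by
  have h0 : t ^ 2 + l ^ 2 ≠ 0 := by positivity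
  convert! (hasDerivAt_id t).div ((hasDerivAt_pow 2 t).add_const (l ^ 2)) h0 using 1
  simp only [id]
  congr 1
  push_cast
  ring

/-- The numerator is at most `t ^ 2 + l ^ 2` in absolute value, so the quotient is at most
`1 / (t ^ 2 + l ^ 2)`; this is compared with `(1 + t ^ 2)⁻¹`, whose integrability is known. -/
lemma abs_deriv_kernel_le (l : ℝ) (hl : l ≠ 0) (t : ℝ) :
    |(l ^ 2 - t ^ 2) / (t ^ 2 + l ^ 2) ^ 2| ≤ (1 + 1 / l ^ 2) * (1 + t ^ 2)⁻¹ := by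
  have hl2 : 0 < l ^ 2 := by positivity
  have h0 : 0 < t ^ 2 + l ^ 2 := by positivity
  have h1 : |l ^ 2 - t ^ 2| ≤ t ^ 2 + l ^ 2 := by
    rw [abs_le]; constructor <;> nlinarith [sq_nonneg t]
  have h2 : 1 + t ^ 2 ≤ (1 + 1 / l ^ 2) * (t ^ 2 + l ^ 2) := by
    have : (1 + 1 / l ^ 2) * (t ^ 2 + l ^ 2) = t ^ 2 + l ^ 2 + t ^ 2 / l ^ 2 + 1 := by
      field_simp; ring
    rw [this]
    have : 0 ≤ t ^ 2 / l ^ 2 := by positivity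
    linarith
  rw [abs_div, abs_of_pos (pow_pos h0 2), ← div_eq_mul_inv, div_le_div_iff₀ (by positivity)
    (by positivity)]
  calc |l ^ 2 - t ^ 2| * (1 + t ^ 2)
      ≤ (t ^ 2 + l ^ 2) * ((1 + 1 / l ^ 2) * (t ^ 2 + l ^ 2)) := by gcongr
    _ = _ := by ring

lemma tendsto_kernel (l : ℝ) : Tendsto (fun t : ℝ => t / (t ^ 2 + l ^ 2)) atTop (𝓝 0) := by
  refine squeeze_zero' ?_ ?_ tendsto_inv_atTop_zero
  · filter_upwards [eventually_gt_atTop 0] with t ht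
    positivity
  · filter_upwards [eventually_gt_atTop 0] with t ht
    rw [← one_div, div_le_div_iff₀ (by positivity) ht]
    nlinarith [sq_nonneg l]

/-- The real-valued case, with the integrand written as kernel times `f`. -/
lemma exists_tendsto_real (f : ℝ → ℝ) (hper : Function.Periodic f (2 * Real.pi))
    (hint : ∀ a b, IntervalIntegrable f volume a b)
    (hmean : (∫ t in (0:ℝ)..(2 * Real.pi), f t) = 0) (l : ℝ) (hl : l ≠ 0) :
    ∃ L : ℝ, Tendsto (fun a : ℝ => ∫ t in (0:ℝ)..a, t / (t ^ 2 + l ^ 2) * f t) atTop (𝓝 L) := by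
  set g : ℝ → ℝ := fun t => t / (t ^ 2 + l ^ 2) with hg
  set F : ℝ → ℝ := fun x => ∫ t in (0:ℝ)..x, f t with hF
  have hFc : Continuous F := intervalIntegral.continuous_primitive hint 0
  have hFper : Function.Periodic F (2 * Real.pi) := fun x => by
    have := hper.intervalIntegral_add_eq_add 0 x hint
    simpa [hF, hmean] using this
  obtain ⟨C, hC⟩ := (hFper.isBounded_of_continuous Real.two_pi_pos.ne' hFc).exists_norm_le
  replace hC : ∀ x, ‖F x‖ ≤ C := fun x => hC _ ⟨x, rfl⟩
  have hgd : deriv g = fun t => (l ^ 2 - t ^ 2) / (t ^ 2 + l ^ 2) ^ 2 :=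
    funext fun t => (hasDerivAt_kernel l hl t).deriv
  have hgb (t : ℝ) : ‖deriv g t‖ ≤ (1 + 1 / l ^ 2) * (1 + t ^ 2)⁻¹ := by
    rw [hgd]; exact abs_deriv_kernel_le l hl t
  have hgdiff : Differentiable ℝ g := fun t => (hasDerivAt_kernel l hl t).differentiableAt
  have hlip : LipschitzWith (Real.toNNReal (1 + 1 / l ^ 2)) g := by
    refine lipschitzWith_of_nnnorm_deriv_le hgdiff fun t => ?_
    rw [← NNReal.coe_le_coe, coe_nnnorm, Real.coe_toNNReal _ (by positivity)]
    refine (hgb t).trans (mul_le_of_le_one_right (by positivity) ?_)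
    exact inv_le_one_of_one_le₀ (by nlinarith [sq_nonneg t])
  have hparts (a : ℝ) : ∫ t in (0:ℝ)..a, g t * f t =
      g a * F a - ∫ t in (0:ℝ)..a, deriv g t * F t := by
    have hgac : AbsolutelyContinuousOnInterval g 0 a :=
      (hlip.lipschitzOnWith (s := Set.uIcc 0 a)).absolutelyContinuousOnInterval
    have hFac : AbsolutelyContinuousOnInterval F 0 a :=
      (hint 0 a).absolutelyContinuousOnInterval_intervalIntegral (by simp)
    have h := hgac.integral_mul_deriv_eq_deriv_mul hFac
    have hF0 : F 0 = 0 := by simp [hF]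
    rw [hF0, mul_zero, sub_zero] at h
    rw [← h]
    -- `deriv F = f` holds only almost everywhere (Lebesgue differentiation).
    refine intervalIntegral.integral_congr_ae ?_
    filter_upwards [(hint 0 a).ae_hasDerivAt_integral] with t ht hta
    rw [(ht (Set.uIoc_subset_uIcc hta) 0 (by simp)).deriv]
  have hgF : Integrable (fun t => deriv g t * F t) := by
    refine ((integrable_inv_one_add_sq.const_mul (1 + 1 / l ^ 2)).mul_const C).mono'
      ((measurable_deriv g).mul hFc.measurable).aestronglyMeasurable (ae_of_all _ fun t => ?_)
    rw [norm_mul]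
    exact mul_le_mul (hgb t) (hC t) (norm_nonneg _) (by positivity)
  have hbdry : Tendsto (fun a => g a * F a) atTop (𝓝 0) :=
    (tendsto_kernel l).zero_mul_isBoundedUnder_le
      (isBoundedUnder_of ⟨C, hC⟩)
  have hlim := hbdry.sub
    (intervalIntegral_tendsto_integral_Ioi 0 hgF.integrableOn tendsto_id)
  exact ⟨_, hlim.congr fun a => (hparts a).symm⟩

theorem stmt1 (f : ℝ → ℂ) (hper : ∀ t : ℝ, f (t + 2 * Real.pi) = f t)
    (hint : IntervalIntegrable f volume 0 (2 * Real.pi))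
    (hmean : (∫ t in (0:ℝ)..(2 * Real.pi), f t) = 0)
    (l : ℝ) (hl : l ≠ 0) :
    ∃ L : ℂ, Tendsto (fun a : ℝ => ∫ t in (0:ℝ)..a, (t : ℂ) * f t / ((t ^ 2 + l ^ 2 : ℝ) : ℂ))
      atTop (𝓝 L) := by
  have hint' : ∀ a b, IntervalIntegrable f volume a b :=
    Function.Periodic.intervalIntegrable₀ hper Real.two_pi_pos.ne' hint
  have hre (a b : ℝ) : IntervalIntegrable (fun t => (f t).re) volume a b :=
    ⟨(hint' a b).1.re, (hint' a b).2.re⟩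
  have him (a b : ℝ) : IntervalIntegrable (fun t => (f t).im) volume a b :=
    ⟨(hint' a b).1.im, (hint' a b).2.im⟩
  have hsplit : (∫ t in (0:ℝ)..(2 * Real.pi), (f t).re) = 0 ∧
      (∫ t in (0:ℝ)..(2 * Real.pi), (f t).im) = 0 := by
    constructor
    · have := Complex.reCLM.intervalIntegral_comp_comm hint
      simpa [hmean] using this
    · have := Complex.imCLM.intervalIntegral_comp_comm hint
      simpa [hmean] using this
  obtain ⟨L₁, h₁⟩ := exists_tendsto_real (fun t => (f t).re)
    (fun t => congrArg Complex.re (hper t)) hre hsplit.1 l hl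
  obtain ⟨L₂, h₂⟩ := exists_tendsto_real (fun t => (f t).im)
    (fun t => congrArg Complex.im (hper t)) him hsplit.2 l hl
  refine ⟨L₁ + L₂ * Complex.I, ?_⟩
  have h₁' := (Complex.continuous_ofReal.tendsto L₁).comp h₁
  have h₂' := (Complex.continuous_ofReal.tendsto L₂).comp h₂
  refine (h₁'.add (h₂'.mul_const Complex.I)).congr fun a => ?_
  have hgc : Continuous fun t : ℝ => t / (t ^ 2 + l ^ 2) :=
    continuous_iff_continuousAt.2 fun t => (hasDerivAt_kernel l hl t).continuousAt
  have i₁ : IntervalIntegrable (fun t => ((t / (t ^ 2 + l ^ 2) * (f t).re : ℝ) : ℂ)) volume 0 a :=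
    have h := (hre 0 a).continuousOn_mul hgc.continuousOn
    ⟨h.1.ofReal, h.2.ofReal⟩
  have i₂ : IntervalIntegrable (fun t => ((t / (t ^ 2 + l ^ 2) * (f t).im : ℝ) : ℂ)) volume 0 a :=
    have h := (him 0 a).continuousOn_mul hgc.continuousOn
    ⟨h.1.ofReal, h.2.ofReal⟩
  simp only [Function.comp_apply]
  rw [← intervalIntegral.integral_ofReal, ← intervalIntegral.integral_ofReal,
    ← intervalIntegral.integral_mul_const, ← intervalIntegral.integral_add i₁ (i₂.mul_const _)]
  refine intervalIntegral.integral_congr fun t _ => ?_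
  conv_rhs => rw [← Complex.re_add_im (f t)]
  push_cast
  ring
end

section
/- Let f : ℝ → ℂ be a 2π-periodic function that is integrable on [0, 2π], and let λ be a nonzero real number. Then the Cauchy principal value L_λ(f) := lim_{a→∞} ∫_{-a}^{a} f(t)/(t + iλ) dt exists and equals 2(J_λ(f) − iλ·I_λ(f)), where I_λ(f) = ∫₀^∞ f_e(t)/(λ² + t²) dt, J_λ(f) = ∫₀^∞ t·f_o(t)/(λ² + t²) dt, and f_e(t) = (f(t) + f(−t))/2, f_o(t) = (f(t) − f(−t))/2 are the even and odd components of f. -/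
/-!
Put `T = 2π` and `h t = t / (l² + t²)`. On the half-line `[0, ∞)` the two parts of `f` behave
differently.

* The even part `g` is integrable against `1 / (l² + t²)`: over the `k`-th period the integral of
  `‖g t‖ / (l² + t²)` is at most `(∫₀ᵀ ‖g‖) / (l² + (kT)²)`, which is summable
  (`integrableOn_Ioi_periodic_mul_kernel`).
* The odd part has zero mean over a period, so over the `k`-th period `h (s + kT)` may be replaced
  by `h (s + kT) - h (kT)`, whose absolute value is at most
  `T / (l² + (kT)²)` (`abs_conjKernel_sub_le`). Hence the integrals over `[0, nT]`
  converge, and since `h` tends to zero so does the integral over the incomplete last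
  period (`exists_tendsto_integral_mul_conjKernel`).

Folding `[-a, a]` onto `[0, a]` and using `1 / (t + il) = (t - il) / (l² + t²)` expresses the
truncated principal value through these two integrals.
-/

open MeasureTheory Filter Topology

/-- The gain of a full order of decay over `h t = t / (l² + t²)` itself, which makes the
sum over periods converge absolutely. -/
lemma abs_conjKernel_sub_le {l T x y : ℝ} (hl : l ≠ 0) (hy : 0 ≤ y) (hyx : y ≤ x)
    (hxT : x ≤ y + T) :
    |x / (l ^ 2 + x ^ 2) - y / (l ^ 2 + y ^ 2)| ≤ T * (1 / (l ^ 2 + y ^ 2)) := by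
  have hl2 : 0 < l ^ 2 := by positivity
  have hx0 : 0 < l ^ 2 + x ^ 2 := by positivity
  have hy0 : 0 < l ^ 2 + y ^ 2 := by positivity
  have e : x / (l ^ 2 + x ^ 2) - y / (l ^ 2 + y ^ 2)
      = (x - y) * ((l ^ 2 - x * y) / (l ^ 2 + x ^ 2)) * (1 / (l ^ 2 + y ^ 2)) := by
    field_simp
    ring
  rw [e, abs_mul, abs_mul, abs_of_pos (one_div_pos.2 hy0), abs_of_nonneg (sub_nonneg.2 hyx)]
  have hq : |(l ^ 2 - x * y) / (l ^ 2 + x ^ 2)| ≤ 1 := by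
    rw [abs_div, abs_of_pos hx0, div_le_one hx0, abs_le]
    constructor <;>
      nlinarith [mul_nonneg (hy.trans hyx) hy, mul_le_mul_of_nonneg_left hyx (hy.trans hyx)]
  have : (x - y) * |(l ^ 2 - x * y) / (l ^ 2 + x ^ 2)| ≤ T * 1 :=
    mul_le_mul (by linarith) hq (abs_nonneg _) (by linarith)
  rw [mul_one] at this
  exact mul_le_mul_of_nonneg_right this (one_div_pos.2 hy0).le

lemma summable_kernel (l : ℝ) {T : ℝ} (hT : 0 < T) :
    Summable fun k : ℕ => 1 / (l ^ 2 + (k * T) ^ 2) := by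
  have h : Summable fun k : ℕ => (1 / (T ^ 2)) * (1 / (k : ℝ) ^ 2) :=
    (Real.summable_one_div_nat_pow.2 one_lt_two).mul_left _
  refine h.of_norm_bounded_eventually_nat ?_
  filter_upwards [eventually_gt_atTop 0] with k hk
  have hk' : (0 : ℝ) < k := by exact_mod_cast hk
  rw [Real.norm_of_nonneg (by positivity), one_div_mul_one_div]
  apply one_div_le_one_div_of_le (by positivity)
  nlinarith [sq_nonneg l]

lemma integral_eq_sum_periods {E : Type*} [NormedAddCommGroup E] [NormedSpace ℝ E] {F : ℝ → E}
    (hF : ∀ a b, IntervalIntegrable F volume a b) (T : ℝ) (n : ℕ) :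
    ∫ t in (0 : ℝ)..n * T, F t = ∑ k ∈ Finset.range n, ∫ s in (0 : ℝ)..T, F (s + k * T) := by
  have h := intervalIntegral.sum_integral_adjacent_intervals (μ := volume) (f := F)
    (a := fun k : ℕ => (k : ℝ) * T) (n := n) fun k _ => hF _ _
  simp only [Nat.cast_zero, zero_mul] at h
  rw [← h]
  refine Finset.sum_congr rfl fun k _ => ?_
  rw [intervalIntegral.integral_comp_add_right]
  congr 1 <;> push_cast <;> ring

lemma continuous_kernel {l : ℝ} (hl : l ≠ 0) : Continuous fun t : ℝ => 1 / (l ^ 2 + t ^ 2) :=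
  continuous_const.div (by fun_prop) fun t => by positivity

lemma continuous_conjKernel {l : ℝ} (hl : l ≠ 0) :
    Continuous fun t : ℝ => t / (l ^ 2 + t ^ 2) :=
  continuous_id.div (by fun_prop) fun t => by positivity

section Periodic

variable {g : ℝ → ℂ} {T l : ℝ}

lemma integrableOn_Ioi_periodic_mul_kernel (hg : Function.Periodic g T)
    (hi : ∀ a b, IntervalIntegrable g volume a b) (hT : 0 < T) (hl : l ≠ 0) :
    IntegrableOn (fun t => g t * ((1 / (l ^ 2 + t ^ 2) : ℝ) : ℂ)) (Set.Ioi 0) := by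
  have hI : ∀ a b, IntervalIntegrable (fun t => g t * ((1 / (l ^ 2 + t ^ 2) : ℝ) : ℂ))
      volume a b := fun a b =>
    (hi a b).mul_continuousOn (Complex.continuous_ofReal.comp (continuous_kernel hl)).continuousOn
  set M := ∫ s in (0 : ℝ)..T, ‖g s‖ with hM
  have hM0 : 0 ≤ M := intervalIntegral.integral_nonneg hT.le fun _ _ => norm_nonneg _
  refine integrableOn_Ioi_of_intervalIntegral_norm_bounded
    (∑' k : ℕ, M * (1 / (l ^ 2 + (k * T) ^ 2))) 0 (l := atTop) (b := fun n : ℕ => (n : ℝ) * T)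
    (fun n => ?_) (tendsto_natCast_atTop_atTop.atTop_mul_const hT) (Eventually.of_forall fun n => ?_)
  · rcases le_total (0 : ℝ) (n * T) with h | h
    · exact (intervalIntegrable_iff_integrableOn_Ioc_of_le h).1 (hI _ _)
    · simp [Set.Ioc_eq_empty_of_le h]
  · rw [integral_eq_sum_periods (fun a b => (hI a b).norm)]
    refine le_trans (Finset.sum_le_sum fun k _ => ?_)
      (((summable_kernel l hT).mul_left M).sum_le_tsum _ fun k _ => by positivity)
    rw [hM, ← intervalIntegral.integral_mul_const]
    refine intervalIntegral.integral_mono_on hT.le ?_ ((hi _ _).norm.mul_const _) fun s hs => ?_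
    · have := (hI (0 + k * T) (T + k * T)).norm
      exact (IntervalIntegrable.comp_add_right_iff enorm_ne_top).2 this
    · rw [norm_mul, show g (s + k * T) = g s from hg.nat_mul k s, Complex.norm_real,
        Real.norm_of_nonneg (by positivity)]
      gcongr
      linarith [hs.1]

lemma exists_tendsto_integral_mul_conjKernel (hg : Function.Periodic g T)
    (hi : ∀ a b, IntervalIntegrable g volume a b) (hT : 0 < T) (hl : l ≠ 0)
    (hmean : ∫ s in (0 : ℝ)..T, g s = 0) :
    ∃ J : ℂ, Tendsto (fun a : ℝ => ∫ t in (0 : ℝ)..a, g t * ((t / (l ^ 2 + t ^ 2) : ℝ) : ℂ))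
      atTop (𝓝 J) := by
  have hI : ∀ a b, IntervalIntegrable (fun t => g t * ((t / (l ^ 2 + t ^ 2) : ℝ) : ℂ))
      volume a b := fun a b => (hi a b).mul_continuousOn
    (Complex.continuous_ofReal.comp (continuous_conjKernel hl)).continuousOn
  set M := ∫ s in (0 : ℝ)..T, ‖g s‖ with hM
  have hM0 : 0 ≤ M := intervalIntegral.integral_nonneg hT.le fun _ _ => norm_nonneg _
  set c : ℕ → ℂ := fun k => ∫ s in (0 : ℝ)..T,
    g (s + k * T) * (((s + k * T) / (l ^ 2 + (s + k * T) ^ 2) : ℝ) : ℂ) with hc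
  have hcle : ∀ k, ‖c k‖ ≤ M * T * (1 / (l ^ 2 + (k * T) ^ 2)) := by
    intro k
    have hIk : IntervalIntegrable (fun s => g (s + k * T) *
        (((s + k * T) / (l ^ 2 + (s + k * T) ^ 2) : ℝ) : ℂ)) volume 0 T :=
      (IntervalIntegrable.comp_add_right_iff
        (f := fun t => g t * ((t / (l ^ 2 + t ^ 2) : ℝ) : ℂ)) enorm_ne_top).2 (hI _ _)
    -- The zero mean of `g` allows the constant `h (kT)` to be subtracted from the kernel.
    have e : c k = ∫ s in (0 : ℝ)..T, (g (s + k * T) *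
        (((s + k * T) / (l ^ 2 + (s + k * T) ^ 2) : ℝ) : ℂ)
          - g s * ((k * T / (l ^ 2 + (k * T) ^ 2) : ℝ) : ℂ)) := by
      rw [intervalIntegral.integral_sub hIk ((hi _ _).mul_const _),
        intervalIntegral.integral_mul_const, hmean, zero_mul, sub_zero]
    rw [e, hM, mul_assoc, ← intervalIntegral.integral_mul_const]
    refine intervalIntegral.norm_integral_le_of_norm_le hT.le
      (Eventually.of_forall fun s hs => ?_) ((hi _ _).norm.mul_const _)
    rw [show g (s + k * T) = g s from hg.nat_mul k s, ← mul_sub, norm_mul, ← Complex.ofReal_sub,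
      Complex.norm_real, Real.norm_eq_abs]
    gcongr
    exact abs_conjKernel_sub_le hl (by positivity) (by linarith [hs.1]) (by linarith [hs.2])
  have hcs : Summable c :=
    Summable.of_norm_bounded ((summable_kernel l hT).mul_left (M * T)) hcle
  refine ⟨∑' k, c k, ?_⟩
  have hfloor : Tendsto (fun a : ℝ => ⌊a / T⌋₊) atTop atTop :=
    tendsto_nat_floor_atTop.comp (tendsto_id.atTop_div_const hT)
  -- Split `[0, a]` into `⌊a / T⌋₊` complete periods and a remainder.
  have hmain := hcs.hasSum.tendsto_sum_nat.comp hfloor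
  have htail : Tendsto (fun a : ℝ => ∫ t in (⌊a / T⌋₊ * T : ℝ)..a,
      g t * ((t / (l ^ 2 + t ^ 2) : ℝ) : ℂ)) atTop (𝓝 0) := by
    have hb : Tendsto (fun a : ℝ => M * ((⌊a / T⌋₊ : ℝ) * T)⁻¹) atTop (𝓝 0) := by
      have := (tendsto_inv_atTop_zero.comp ((tendsto_natCast_atTop_atTop.comp
        hfloor).atTop_mul_const hT)).const_mul M
      simpa using this
    refine squeeze_zero_norm' ?_ hb
    filter_upwards [eventually_ge_atTop T] with a ha
    set n := ⌊a / T⌋₊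
    have hn : (1 : ℝ) ≤ n := by
      exact_mod_cast Nat.le_floor (by simpa using (one_le_div hT).2 ha)
    have h1 : n * T ≤ a := (le_div_iff₀ hT).1 (Nat.floor_le (div_nonneg (hT.le.trans ha) hT.le))
    have h2 : a ≤ n * T + T := by
      have := (div_lt_iff₀ hT).1 (Nat.lt_floor_add_one (a / T))
      linarith
    have hnT : 0 < n * T := by positivity
    calc ‖∫ t in (n * T : ℝ)..a, g t * ((t / (l ^ 2 + t ^ 2) : ℝ) : ℂ)‖
        ≤ ∫ t in (n * T : ℝ)..a, ‖g t‖ * (n * T)⁻¹ := by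
          refine intervalIntegral.norm_integral_le_of_norm_le h1
            (Eventually.of_forall fun t ht => ?_) ((hi _ _).norm.mul_const _)
          have ht0 : 0 < t := hnT.trans ht.1
          rw [norm_mul, Complex.norm_real, Real.norm_of_nonneg (by positivity)]
          gcongr
          rw [div_le_iff₀ (by positivity), inv_mul_eq_div, le_div_iff₀ hnT]
          nlinarith [ht.1, sq_nonneg l]
      _ ≤ ∫ t in (n * T : ℝ)..n * T + T, ‖g t‖ * (n * T)⁻¹ := by
          refine intervalIntegral.integral_mono_interval le_rfl h1 h2
            (Eventually.of_forall fun t => ?_) ((hi _ _).norm.mul_const _)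
          exact mul_nonneg (norm_nonneg _) (by positivity)
      _ = M * (n * T)⁻¹ := by
          have hp : Function.Periodic (fun t => ‖g t‖) T := fun t => by simp only [hg t]
          rw [intervalIntegral.integral_mul_const, hp.intervalIntegral_add_eq (n * T) 0, zero_add]
  have := hmain.add htail
  rw [add_zero] at this
  refine this.congr fun a => ?_
  simp only [Function.comp_apply, hc]
  rw [← integral_eq_sum_periods hI, intervalIntegral.integral_add_adjacent_intervals
    (hI _ _) (hI _ _)]

end Periodic

theorem stmt2 (f : ℝ → ℂ) (hper : ∀ t : ℝ, f (t + 2 * Real.pi) = f t)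
    (hint : IntervalIntegrable f volume 0 (2 * Real.pi))
    (l : ℝ) (hl : l ≠ 0) :
    ∃ J : ℂ,
      Tendsto (fun a : ℝ => ∫ t in (0:ℝ)..a,
          (t : ℂ) * ((f t - f (-t)) / 2) / ((l ^ 2 + t ^ 2 : ℝ) : ℂ)) atTop (𝓝 J) ∧
      Tendsto (fun a : ℝ => ∫ t in (-a : ℝ)..a, f t / ((t : ℂ) + Complex.I * l)) atTop
        (𝓝 (2 * (J - Complex.I * l *
          ∫ t in Set.Ici (0:ℝ), ((f t + f (-t)) / 2) / ((l ^ 2 + t ^ 2 : ℝ) : ℂ)))) := by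
  have hT : 0 < 2 * Real.pi := by positivity
  have hp : Function.Periodic f (2 * Real.pi) := hper
  have hi : ∀ a b, IntervalIntegrable f volume a b := hp.intervalIntegrable₀ hT.ne' hint
  have hpn : Function.Periodic (fun t => f (-t)) (2 * Real.pi) := fun t => by
    have := hp (-(t + 2 * Real.pi))
    simpa using this.symm
  have hin : ∀ a b, IntervalIntegrable (fun t => f (-t)) volume a b := fun a b => by
    simpa using (IntervalIntegrable.iff_comp_neg enorm_ne_top).1 (hi (-a) (-b))
  set fo : ℝ → ℂ := fun t => (f t - f (-t)) / 2 with hfo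
  set fe : ℝ → ℂ := fun t => (f t + f (-t)) / 2 with hfe
  have hpo : Function.Periodic fo (2 * Real.pi) := fun t => by
    simp only [hfo, hp t, hpn t]
  have hpe : Function.Periodic fe (2 * Real.pi) := fun t => by
    simp only [hfe, hp t, hpn t]
  have hio : ∀ a b, IntervalIntegrable fo volume a b := fun a b =>
    ((hi a b).sub (hin a b)).div_const 2
  have hie : ∀ a b, IntervalIntegrable fe volume a b := fun a b =>
    ((hi a b).add (hin a b)).div_const 2
  have hmean : ∫ s in (0 : ℝ)..2 * Real.pi, fo s = 0 := by
    have h := hp.intervalIntegral_add_eq (-(2 * Real.pi)) 0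
    rw [neg_add_cancel, zero_add] at h
    simp only [hfo]
    rw [intervalIntegral.integral_div, intervalIntegral.integral_sub (hi _ _) (hin _ _),
      intervalIntegral.integral_comp_neg, neg_zero, h, sub_self, zero_div]
  obtain ⟨J, hJ⟩ := exists_tendsto_integral_mul_conjKernel hpo hio hT hl hmean
  have hE := intervalIntegral_tendsto_integral_Ioi 0
    (integrableOn_Ioi_periodic_mul_kernel hpe hie hT hl) tendsto_id
  refine ⟨J, hJ.congr fun a => ?_, ?_⟩
  · refine intervalIntegral.integral_congr fun t _ => ?_
    simp only [hfo]
    push_cast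
    ring
  rw [integral_Ici_eq_integral_Ioi]
  have hE' : ∫ t in Set.Ioi (0:ℝ), fe t / ((l ^ 2 + t ^ 2 : ℝ) : ℂ)
      = ∫ t in Set.Ioi (0:ℝ), fe t * ((1 / (l ^ 2 + t ^ 2) : ℝ) : ℂ) := by
    congr 1
    ext t
    push_cast
    ring
  rw [hE']
  refine ((hJ.sub (hE.const_mul (Complex.I * l))).const_mul 2).congr fun a => ?_
  have hden : ∀ t : ℝ, (t : ℂ) + Complex.I * l ≠ 0 := fun t h => hl (by
    simpa using congrArg Complex.im h)
  have hF : ∀ a b, IntervalIntegrable (fun t : ℝ => f t / ((t : ℂ) + Complex.I * l))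
      volume a b := fun a b => by
    simp only [div_eq_mul_inv]
    refine (hi a b).mul_continuousOn (Continuous.continuousOn ?_)
    exact Continuous.inv₀ (by fun_prop) hden
  have hFn : ∀ a b, IntervalIntegrable (fun t : ℝ => f (-t) / (((-t : ℝ) : ℂ) + Complex.I * l))
      volume a b := fun a b => by
    simpa using (IntervalIntegrable.iff_comp_neg enorm_ne_top).1 (hF (-a) (-b))
  have hIo : IntervalIntegrable (fun t => fo t * ((t / (l ^ 2 + t ^ 2) : ℝ) : ℂ)) volume 0 a :=
    (hio 0 a).mul_continuousOn
      (Complex.continuous_ofReal.comp (continuous_conjKernel hl)).continuousOn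
  have hIe : IntervalIntegrable (fun t => fe t * ((1 / (l ^ 2 + t ^ 2) : ℝ) : ℂ)) volume 0 a :=
    (hie 0 a).mul_continuousOn (Complex.continuous_ofReal.comp (continuous_kernel hl)).continuousOn
  -- Fold `[-a, 0]` onto `[0, a]`.
  have hneg : ∫ t in (-a : ℝ)..0, f t / ((t : ℂ) + Complex.I * l)
      = ∫ t in (0 : ℝ)..a, f (-t) / (((-t : ℝ) : ℂ) + Complex.I * l) := by
    rw [intervalIntegral.integral_comp_neg (fun t : ℝ => f t / ((t : ℂ) + Complex.I * l)),
      neg_zero]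
  rw [id, ← intervalIntegral.integral_add_adjacent_intervals (hF (-a) 0) (hF 0 a), hneg,
    ← intervalIntegral.integral_add (hFn 0 a) (hF 0 a), ← intervalIntegral.integral_const_mul,
    ← intervalIntegral.integral_sub hIo (hIe.const_mul _), ← intervalIntegral.integral_const_mul]
  refine intervalIntegral.integral_congr fun t _ => ?_
  have hd : ((l : ℂ) ^ 2 + (t : ℂ) ^ 2) ≠ 0 := by
    have : l ^ 2 + t ^ 2 ≠ 0 := by positivity
    exact_mod_cast this
  have k1 : ((t : ℂ) + Complex.I * l)⁻¹ = (t - Complex.I * l) / ((l : ℂ) ^ 2 + (t : ℂ) ^ 2) := by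
    rw [eq_div_iff hd, inv_mul_eq_iff_eq_mul₀ (hden t)]
    linear_combination (l : ℂ) ^ 2 * Complex.I_sq
  have k2 : (((-t : ℝ) : ℂ) + Complex.I * l)⁻¹
      = (-t - Complex.I * l) / ((l : ℂ) ^ 2 + (t : ℂ) ^ 2) := by
    rw [eq_div_iff hd, inv_mul_eq_iff_eq_mul₀ (hden (-t))]
    push_cast
    linear_combination (l : ℂ) ^ 2 * Complex.I_sq
  simp only [hfo, hfe, div_eq_mul_inv (f t), div_eq_mul_inv (f (-t)), k1, k2]
  push_cast
  ring
end

section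
/- Let f : ℝ → ℂ be a 2π-periodic function that is integrable on [0, 2π], and let λ be a nonzero real number. Then ∫₀^∞ f_e(t)/(λ² + t²) dt = (i/(4λ))·(L_λ(f) − L_{−λ}(f)), where f_e(t) = (f(t) + f(−t))/2 and L_μ(f) = lim_{a→∞} ∫_{-a}^{a} f(t)/(t + iμ) dt denotes the Cauchy principal value. -/
/-!
For `μ = ±l` one has `1 / (t + iμ) = (t - iμ) / (t² + l²)`, so folding `[-a, a]` onto `[0, a]` gives
`∫_{-a}^{a} f(t) / (t + iμ) dt = ∫₀ᵃ (f(t) - f(-t)) t / (t² + l²) dt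
  - iμ ∫₀ᵃ (f(t) + f(-t)) / (t² + l²) dt`.
If both terms on the right converge, to `A` and `-iμB`, the two principal values are `A ∓ ilB`,
their difference is `-2ilB`, and the claimed integral `B / 2` follows.

Both limits come from Dirichlet's test (`exists_tendsto_integral_mul`): a periodic function with
mean zero has a bounded primitive, so after an integration by parts its integral against a weight
that vanishes at infinity and has integrable derivative converges. For `A` this applies directly,
because `f(t) - f(-t)` is odd and periodic, hence has mean zero. For `B` it is applied to
`‖f‖` minus its mean, which shows that `f(t) / (t² + l²)` is absolutely integrable
(`integrableOn_periodic_div`).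
-/

open MeasureTheory Filter Topology

/-- Integration by parts `∫₀ᵃ hφ = H(a)φ(a) - ∫₀ᵃ Hφ'` with `H(x) = ∫₀ˣ h`, for `h` merely locally
integrable: `H` is absolutely continuous with `H' = h` almost everywhere. -/
lemma integral_mul_eq_primitive (h φ φ' : ℝ → ℝ)
    (hh : ∀ a b, IntervalIntegrable h volume a b)
    (hφ : ∀ x, HasDerivAt φ (φ' x) x) (hφ' : Continuous φ') (a : ℝ) :
    ∫ t in (0:ℝ)..a, h t * φ t =
      (∫ t in (0:ℝ)..a, h t) * φ a - ∫ x in (0:ℝ)..a, (∫ t in (0:ℝ)..x, h t) * φ' x := by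
  have hH : AbsolutelyContinuousOnInterval (fun x => ∫ t in (0:ℝ)..x, h t) 0 a :=
    (hh 0 a).absolutelyContinuousOnInterval_intervalIntegral (by simp)
  have hφac : AbsolutelyContinuousOnInterval φ 0 a := by
    have h1 : AbsolutelyContinuousOnInterval (fun x => ∫ t in (0:ℝ)..x, φ' t) 0 a :=
      (hφ'.intervalIntegrable 0 a).absolutelyContinuousOnInterval_intervalIntegral (by simp)
    have h2 : AbsolutelyContinuousOnInterval (fun _ : ℝ => φ 0) 0 a :=
      ((LipschitzWith.const (φ 0)).lipschitzOnWith).absolutelyContinuousOnInterval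
    have h3 := h1.fun_add h2
    refine (funext fun x => ?_ : φ = _) ▸ h3
    rw [intervalIntegral.integral_eq_sub_of_hasDerivAt (fun x _ => hφ x)
      (hφ'.intervalIntegrable 0 x)]
    ring
  have key := hφac.integral_mul_deriv_eq_deriv_mul hH
  have e1 : ∫ x in (0:ℝ)..a, φ x * deriv (fun x => ∫ t in (0:ℝ)..x, h t) x =
      ∫ t in (0:ℝ)..a, h t * φ t := by
    apply intervalIntegral.integral_congr_ae
    filter_upwards [(hh 0 a).ae_hasDerivAt_integral] with x hx hxm
    rw [(hx (Set.uIoc_subset_uIcc hxm) 0 (by simp)).deriv, mul_comm]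
  rw [e1] at key
  rw [key, intervalIntegral.integral_same, mul_zero, sub_zero, mul_comm]
  congr 1
  apply intervalIntegral.integral_congr
  intro x _
  simp only [(hφ x).deriv, mul_comm]

/-- Dirichlet's test: a mean-zero periodic function has a bounded primitive, so its integral
against a weight tending to `0` with integrable derivative converges. -/
lemma exists_tendsto_integral_mul (h φ φ' : ℝ → ℝ) (T : ℝ) (hT : T ≠ 0)
    (hper : Function.Periodic h T)
    (hh : ∀ a b, IntervalIntegrable h volume a b)
    (h0 : ∫ t in (0:ℝ)..T, h t = 0)
    (hφ : ∀ x, HasDerivAt φ (φ' x) x) (hφ' : Continuous φ')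
    (hint : IntegrableOn φ' (Set.Ioi 0)) (hlim : Tendsto φ atTop (𝓝 0)) :
    ∃ L, Tendsto (fun a : ℝ => ∫ t in (0:ℝ)..a, h t * φ t) atTop (𝓝 L) := by
  set H : ℝ → ℝ := fun x => ∫ t in (0:ℝ)..x, h t with hHdef
  have Hc : Continuous H := intervalIntegral.continuous_primitive hh 0
  have Hp : Function.Periodic H T := by
    intro x
    have := hper.intervalIntegral_add_eq_add 0 x hh
    simp only [zero_add] at this
    simp only [hHdef, this, h0, add_zero]
  obtain ⟨C, hC⟩ := (Hp.isBounded_of_continuous hT Hc).exists_norm_le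
  have hC' : ∀ x, ‖H x‖ ≤ C := fun x => hC _ ⟨x, rfl⟩
  have hi : IntegrableOn (fun x => H x * φ' x) (Set.Ioi 0) :=
    Integrable.bdd_mul hint Hc.aestronglyMeasurable (ae_of_all _ hC')
  have l1 := intervalIntegral_tendsto_integral_Ioi 0 hi tendsto_id
  have l2 : Tendsto (fun a => H a * φ a) atTop (𝓝 0) :=
    isBoundedUnder_le_mul_tendsto_zero (isBoundedUnder_of ⟨C, hC'⟩) hlim
  exact ⟨_, (l2.sub l1).congr fun a => (integral_mul_eq_primitive h φ φ' hh hφ hφ' a).symm⟩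

lemma integrable_inv_sq_add_sq (l : ℝ) (hl : l ≠ 0) :
    Integrable (fun t : ℝ => 1 / (l ^ 2 + t ^ 2)) := by
  have hl2 : 0 < l ^ 2 := by positivity
  refine ((integrable_inv_one_add_sq).const_mul (1 + 1 / l ^ 2)).mono'
    (Continuous.aestronglyMeasurable (by
      refine continuous_const.div (by fun_prop) fun t => by positivity)) (ae_of_all _ fun t => ?_)
  rw [Real.norm_of_nonneg (by positivity), ← div_eq_mul_inv, div_le_div_iff₀ (by positivity)
    (by positivity)]
  have : (1 + 1 / l ^ 2) * (l ^ 2 + t ^ 2) = l ^ 2 + t ^ 2 + 1 + t ^ 2 / l ^ 2 := by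
    field_simp
    ring
  have : 0 ≤ t ^ 2 / l ^ 2 := by positivity
  linarith

lemma tendsto_inv_sq_add_sq (l : ℝ) :
    Tendsto (fun t : ℝ => 1 / (l ^ 2 + t ^ 2)) atTop (𝓝 0) :=
  tendsto_const_nhds.div_atTop
    (tendsto_atTop_add_const_left _ _ (tendsto_pow_atTop (by norm_num)))

lemma tendsto_div_sq_add_sq (l : ℝ) :
    Tendsto (fun t : ℝ => t / (l ^ 2 + t ^ 2)) atTop (𝓝 0) := by
  refine squeeze_zero' ?_ ?_ tendsto_inv_atTop_zero
  · filter_upwards [eventually_ge_atTop 0] with t ht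
    positivity
  · filter_upwards [eventually_gt_atTop 0] with t ht
    rw [inv_eq_one_div, div_le_div_iff₀ (by positivity) ht]
    nlinarith [sq_nonneg l]

/-- Convergence of `∫₀^∞ h(t) / (l² + t²) dt` for mean-zero periodic `h`. -/
lemma exists_tendsto_even_weight (l : ℝ) (hl : l ≠ 0) (h : ℝ → ℝ) (T : ℝ) (hT : T ≠ 0)
    (hper : Function.Periodic h T)
    (hh : ∀ a b, IntervalIntegrable h volume a b)
    (h0 : ∫ t in (0:ℝ)..T, h t = 0) :
    ∃ L, Tendsto (fun a : ℝ => ∫ t in (0:ℝ)..a, h t * (1 / (l ^ 2 + t ^ 2))) atTop (𝓝 L) := by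
  have hpos : ∀ t : ℝ, 0 < l ^ 2 + t ^ 2 := fun t => by positivity
  have hc : Continuous (fun t : ℝ => -(2 * t) / (l ^ 2 + t ^ 2) ^ 2) :=
    Continuous.div (by fun_prop) (by fun_prop) fun t => (pow_pos (hpos t) 2).ne'
  refine exists_tendsto_integral_mul h _ (fun t => -(2 * t) / (l ^ 2 + t ^ 2) ^ 2) T hT hper hh h0
    (fun x => ?_) hc ?_ (tendsto_inv_sq_add_sq l)
  · have := (((hasDerivAt_id x).fun_pow 2).const_add (l ^ 2)).fun_inv (hpos x).ne'
    simpa using this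
  · refine (((integrable_inv_sq_add_sq l hl).const_mul (1 / |l|)).mono' hc.aestronglyMeasurable
      (ae_of_all _ fun t => ?_)).integrableOn
    have hl' : 0 < |l| := abs_pos.mpr hl
    rw [norm_div, norm_neg, Real.norm_of_nonneg (pow_pos (hpos t) 2).le, div_mul_div_comm,
      div_le_div_iff₀ (pow_pos (hpos t) 2) (mul_pos hl' (hpos t))]
    have h2 : 2 * |l| * |t| ≤ l ^ 2 + t ^ 2 := by
      nlinarith [sq_nonneg (|l| - |t|), sq_abs l, sq_abs t]
    rw [norm_mul, Real.norm_eq_abs t]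
    simp only [Real.norm_ofNat]
    nlinarith [hpos t]

/-- Convergence of `∫₀^∞ h(t) t / (l² + t²) dt` for mean-zero periodic `h`. -/
lemma exists_tendsto_odd_weight (l : ℝ) (hl : l ≠ 0) (h : ℝ → ℝ) (T : ℝ) (hT : T ≠ 0)
    (hper : Function.Periodic h T)
    (hh : ∀ a b, IntervalIntegrable h volume a b)
    (h0 : ∫ t in (0:ℝ)..T, h t = 0) :
    ∃ L, Tendsto (fun a : ℝ => ∫ t in (0:ℝ)..a, h t * (t / (l ^ 2 + t ^ 2))) atTop (𝓝 L) := by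
  have hpos : ∀ t : ℝ, 0 < l ^ 2 + t ^ 2 := fun t => by positivity
  have hc : Continuous (fun t : ℝ => (l ^ 2 - t ^ 2) / (l ^ 2 + t ^ 2) ^ 2) :=
    Continuous.div (by fun_prop) (by fun_prop) fun t => (pow_pos (hpos t) 2).ne'
  refine exists_tendsto_integral_mul h _ (fun t => (l ^ 2 - t ^ 2) / (l ^ 2 + t ^ 2) ^ 2) T hT hper
    hh h0 (fun x => ?_) hc ?_ (tendsto_div_sq_add_sq l)
  · have := (hasDerivAt_id x).fun_div (((hasDerivAt_id x).fun_pow 2).const_add (l ^ 2)) (hpos x).ne'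
    refine this.congr_deriv ?_
    simp only [id_eq]
    ring
  · refine ((integrable_inv_sq_add_sq l hl).mono' hc.aestronglyMeasurable
      (ae_of_all _ fun t => ?_)).integrableOn
    rw [norm_div, Real.norm_of_nonneg (pow_pos (hpos t) 2).le,
      div_le_div_iff₀ (pow_pos (hpos t) 2) (hpos t)]
    have h2 : ‖l ^ 2 - t ^ 2‖ ≤ l ^ 2 + t ^ 2 := by
      rw [Real.norm_eq_abs, abs_le]
      constructor <;> nlinarith [sq_nonneg l, sq_nonneg t]
    nlinarith [hpos t]

/-- For periodic `f` the function `f(t) / (l² + t²)` is integrable on `(0, ∞)`: subtract from `‖f‖`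
its mean over a period and apply Dirichlet's test to the difference. -/
lemma integrableOn_periodic_div (l : ℝ) (hl : l ≠ 0) (f : ℝ → ℂ) (T : ℝ) (hT : T ≠ 0)
    (hper : Function.Periodic f T)
    (hf : ∀ a b, IntervalIntegrable f volume a b) :
    IntegrableOn (fun t => f t / ((l ^ 2 + t ^ 2 : ℝ) : ℂ)) (Set.Ioi 0) := by
  have hpos : ∀ t : ℝ, 0 < l ^ 2 + t ^ 2 := fun t => by positivity
  have hcw : Continuous (fun t : ℝ => 1 / (l ^ 2 + t ^ 2)) :=
    continuous_const.div (by fun_prop) fun t => (hpos t).ne'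
  set m : ℝ := (∫ t in (0:ℝ)..T, ‖f t‖) / T with hm
  have hk : ∀ a b, IntervalIntegrable (fun t => ‖f t‖ - m) volume a b := fun a b =>
    (hf a b).norm.sub intervalIntegrable_const
  obtain ⟨L, hL⟩ := exists_tendsto_even_weight l hl (fun t => ‖f t‖ - m) T hT
    (fun t => by simp only [hper t]) hk (by
      rw [intervalIntegral.integral_sub (hf 0 T).norm intervalIntegrable_const]
      simp only [intervalIntegral.integral_const, smul_eq_mul, hm]
      field_simp
      ring)
  have hM := intervalIntegral_tendsto_integral_Ioi 0
    ((integrable_inv_sq_add_sq l hl).const_mul m).integrableOn tendsto_id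
  refine integrableOn_Ioi_of_intervalIntegral_norm_tendsto _ 0 (b := id) (l := atTop) (fun a => ?_)
    tendsto_id ((hL.add hM).congr fun a => ?_)
  · by_cases ha : 0 ≤ a
    · have : IntervalIntegrable (fun t => f t / ((l ^ 2 + t ^ 2 : ℝ) : ℂ)) volume 0 a := by
        have h1 := (hf 0 a).mul_continuousOn
          (Complex.continuous_ofReal.comp hcw).continuousOn
        refine h1.congr (fun t _ => ?_)
        simp [div_eq_mul_inv]
      exact (intervalIntegrable_iff_integrableOn_Ioc_of_le ha).1 this
    · simp [Set.Ioc_eq_empty_of_le (not_le.1 ha).le]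
  · simp only [id]
    rw [← intervalIntegral.integral_add ((hk 0 a).mul_continuousOn hcw.continuousOn)
      ((hcw.const_mul m).intervalIntegrable _ _)]
    apply intervalIntegral.integral_congr
    intro t _
    simp only [norm_div, Complex.norm_real, Real.norm_of_nonneg (hpos t).le]
    ring

/-- Complex form of `exists_tendsto_odd_weight`, by real and imaginary parts. -/
lemma exists_tendsto_odd_weight_complex (l : ℝ) (hl : l ≠ 0) (g : ℝ → ℂ) (T : ℝ) (hT : T ≠ 0)
    (hper : Function.Periodic g T)
    (hg : ∀ a b, IntervalIntegrable g volume a b)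
    (h0 : ∫ t in (0:ℝ)..T, g t = 0) :
    ∃ L : ℂ, Tendsto (fun a : ℝ => ∫ t in (0:ℝ)..a, g t * ((t / (l ^ 2 + t ^ 2) : ℝ) : ℂ))
      atTop (𝓝 L) := by
  have hcw : Continuous (fun t : ℝ => t / (l ^ 2 + t ^ 2)) :=
    continuous_id.div (by fun_prop) fun t => by positivity
  have hre : ∀ a b, IntervalIntegrable (fun t => (g t).re) volume a b := fun a b =>
    ⟨(hg a b).1.re, (hg a b).2.re⟩
  have him : ∀ a b, IntervalIntegrable (fun t => (g t).im) volume a b := fun a b =>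
    ⟨(hg a b).1.im, (hg a b).2.im⟩
  obtain ⟨L, hL⟩ := exists_tendsto_odd_weight l hl (fun t => (g t).re) T hT
    (fun t => by simp only [hper t]) hre (by
      have := Complex.reCLM.intervalIntegral_comp_comm (hg 0 T)
      simpa [h0] using this)
  obtain ⟨M, hM⟩ := exists_tendsto_odd_weight l hl (fun t => (g t).im) T hT
    (fun t => by simp only [hper t]) him (by
      have := Complex.imCLM.intervalIntegral_comp_comm (hg 0 T)
      simpa [h0] using this)
  refine ⟨L + M * Complex.I, (((Complex.continuous_ofReal.tendsto L).comp hL).add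
    (((Complex.continuous_ofReal.tendsto M).comp hM).mul_const Complex.I)).congr fun a => ?_⟩
  have i1 := (hre 0 a).mul_continuousOn hcw.continuousOn
  have i2 := (him 0 a).mul_continuousOn hcw.continuousOn
  have j1 : IntervalIntegrable (fun t => (((g t).re * (t / (l ^ 2 + t ^ 2)) : ℝ) : ℂ))
      volume 0 a := ⟨i1.1.ofReal, i1.2.ofReal⟩
  have j2 : IntervalIntegrable (fun t => (((g t).im * (t / (l ^ 2 + t ^ 2)) : ℝ) : ℂ))
      volume 0 a := ⟨i2.1.ofReal, i2.2.ofReal⟩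
  simp only [Function.comp]
  rw [← intervalIntegral.integral_ofReal, ← intervalIntegral.integral_ofReal,
    ← intervalIntegral.integral_mul_const, ← intervalIntegral.integral_add j1 (j2.mul_const _)]
  apply intervalIntegral.integral_congr
  intro t _
  simp only [Complex.ofReal_mul]
  conv_rhs => rw [← Complex.re_add_im (g t)]
  ring

theorem stmt3 (f : ℝ → ℂ) (hper : ∀ t : ℝ, f (t + 2 * Real.pi) = f t)
    (hint : IntervalIntegrable f volume 0 (2 * Real.pi))
    (l : ℝ) (hl : l ≠ 0) :
    ∃ L₁ L₂ : ℂ,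
      Tendsto (fun a : ℝ => ∫ t in (-a : ℝ)..a, f t / ((t : ℂ) + Complex.I * l)) atTop (𝓝 L₁) ∧
      Tendsto (fun a : ℝ => ∫ t in (-a : ℝ)..a, f t / ((t : ℂ) + Complex.I * (-l))) atTop (𝓝 L₂) ∧
      (∫ t in Set.Ici (0:ℝ), ((f t + f (-t)) / 2) / ((l ^ 2 + t ^ 2 : ℝ) : ℂ))
        = (Complex.I / (4 * l)) * (L₁ - L₂) := by
  have hT : (2 * Real.pi) ≠ 0 := by positivity
  have hp : Function.Periodic f (2 * Real.pi) := hper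
  have hf : ∀ a b, IntervalIntegrable f volume a b := hp.intervalIntegrable₀ hT hint
  have hp' : Function.Periodic (fun t => f (-t)) (2 * Real.pi) := fun t => by
    have := hp.sub_eq (-t)
    simp only [← this]
    ring_nf
  have hf' : ∀ a b, IntervalIntegrable (fun t => f (-t)) volume a b := fun a b => by
    simpa using IntervalIntegrable.iff_comp_neg (by simp) |>.1 (hf (-a) (-b))
  -- The odd part has mean zero over a period.
  have h0 : ∫ t in (0:ℝ)..(2 * Real.pi), (f t - f (-t)) = 0 := by
    rw [intervalIntegral.integral_sub (hf _ _) (hf' _ _), intervalIntegral.integral_comp_neg]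
    have := hp.intervalIntegral_add_eq (-(2 * Real.pi)) 0
    simp only [neg_add_cancel, zero_add] at this
    simp [this]
  obtain ⟨A, hA⟩ := exists_tendsto_odd_weight_complex l hl (fun t => f t - f (-t)) _ hT
    (hp.sub hp') (fun a b => (hf a b).sub (hf' a b)) h0
  have hB := intervalIntegral_tendsto_integral_Ioi 0
    (integrableOn_periodic_div l hl (fun t => f t + f (-t)) _ hT (hp.add hp')
      (fun a b => (hf a b).add (hf' a b))) tendsto_id
  set B : ℂ := ∫ t in Set.Ioi (0:ℝ), (f t + f (-t)) / ((l ^ 2 + t ^ 2 : ℝ) : ℂ) with hBdef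
  have hpos : ∀ t : ℝ, 0 < l ^ 2 + t ^ 2 := fun t => by positivity
  have hcw : Continuous (fun t : ℝ => t / (l ^ 2 + t ^ 2)) :=
    continuous_id.div (by fun_prop) fun t => by positivity
  have hcv : Continuous (fun t : ℝ => 1 / (l ^ 2 + t ^ 2)) :=
    continuous_const.div (by fun_prop) fun t => (hpos t).ne'
  -- Folding `[-a, a]` onto `[0, a]` uses `1 / (t + iμ) = (t - iμ) / (t² + μ²)`.
  have main : ∀ μ : ℝ, μ ^ 2 = l ^ 2 →
      Tendsto (fun a : ℝ => ∫ t in (-a : ℝ)..a, f t / ((t : ℂ) + Complex.I * μ)) atTop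
        (𝓝 (A - Complex.I * μ * B)) := by
    intro μ hμ
    have hμ0 : μ ≠ 0 := by
      rintro rfl
      exact hl (by simpa using hμ.symm)
    have hne : ∀ t : ℝ, (t : ℂ) + Complex.I * μ ≠ 0 := fun t h => hμ0 (by
      simpa using congrArg Complex.im h)
    refine (hA.sub (hB.const_mul (Complex.I * μ))).congr fun a => ?_
    have hq : ∀ a b, IntervalIntegrable (fun t : ℝ => f t / ((t : ℂ) + Complex.I * μ))
        volume a b := fun a b => by
      simp only [div_eq_mul_inv]
      exact (hf a b).mul_continuousOn
        (Continuous.inv₀ (by fun_prop) hne).continuousOn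
    have hq' : IntervalIntegrable (fun t : ℝ => f (-t) / (((-t : ℝ) : ℂ) + Complex.I * μ))
        volume 0 a := by
      simpa using IntervalIntegrable.iff_comp_neg (by simp) |>.1 (hq (-0) (-a))
    have i2 : IntervalIntegrable (fun t : ℝ => (f t + f (-t)) / ((l ^ 2 + t ^ 2 : ℝ) : ℂ))
        volume 0 a := by
      refine (((hf 0 a).add (hf' 0 a)).mul_continuousOn
        (Complex.continuous_ofReal.comp hcv).continuousOn).congr fun t _ => ?_
      simp [div_eq_mul_inv]
    have i1 : IntervalIntegrable
        (fun t : ℝ => (f t - f (-t)) * ((t / (l ^ 2 + t ^ 2) : ℝ) : ℂ)) volume 0 a :=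
      ((hf 0 a).sub (hf' 0 a)).mul_continuousOn
        (Complex.continuous_ofReal.comp hcw).continuousOn
    have e1 : ∫ t in (-a)..(0:ℝ), f t / ((t : ℂ) + Complex.I * μ) =
        ∫ t in (0:ℝ)..a, f (-t) / (((-t : ℝ) : ℂ) + Complex.I * μ) := by
      rw [intervalIntegral.integral_comp_neg (fun t : ℝ => f t / ((t : ℂ) + Complex.I * μ))]
      simp
    rw [← intervalIntegral.integral_add_adjacent_intervals (hq (-a) 0) (hq 0 a), e1,
      ← intervalIntegral.integral_add hq' (hq 0 a), id, ← intervalIntegral.integral_const_mul,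
      ← intervalIntegral.integral_sub i1 (i2.const_mul _)]
    apply intervalIntegral.integral_congr
    intro t _
    have n1 := hne t
    have n2 := hne (-t)
    have hsq : ((l ^ 2 + t ^ 2 : ℝ) : ℂ) =
        -(((t : ℂ) + Complex.I * μ) * (((-t : ℝ) : ℂ) + Complex.I * μ)) := by
      rw [← hμ]
      push_cast
      linear_combination (μ : ℂ) ^ 2 * Complex.I_sq
    simp only [Complex.ofReal_div, hsq]
    field_simp
    push_cast
    ring
  refine ⟨_, _, main l rfl, by simpa using main (-l) (by ring), ?_⟩
  have hl' : (l : ℂ) ≠ 0 := by exact_mod_cast hl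
  have e : (∫ t in Set.Ici (0:ℝ), ((f t + f (-t)) / 2) / ((l ^ 2 + t ^ 2 : ℝ) : ℂ)) = B / 2 := by
    rw [integral_Ici_eq_integral_Ioi, hBdef, ← integral_div]
    congr 1
    ext t
    ring
  rw [e]
  field_simp
  linear_combination (4 : ℂ) * B * l * Complex.I_sq
end

section
/- Let f : ℝ → ℂ be a 2π-periodic function that is integrable on [0, 2π], and let λ be a nonzero real number. Then ∫₀^∞ t·f_o(t)/(λ² + t²) dt = (1/4)·(L_λ(f) + L_{−λ}(f)), where f_o(t) = (f(t) − f(−t))/2 and L_μ(f) = lim_{a→∞} ∫_{-a}^{a} f(t)/(t + iμ) dt denotes the Cauchy principal value. -/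
/-!
Write `k c t = 1 / (t + i c)`. Folding the symmetric integral over `[-a, a]` onto `[0, a]`
(`integral_neg_self`) shows that the identity already holds at every finite `a`, because
`1 / (t + i l) + 1 / (t - i l) = 2 t / (l ^ 2 + t ^ 2)` is odd. What remains is the existence of the
principal values. With `m` the mean of `f`, the folded integrand is
`(f t - m) * k c t - (f (-t) - m) * k (-c) t + m * (k c t - k (-c) t)`. The last term is
`O(1 / t ^ 2)`. The first two are handled by a Dirichlet test (`tendsto_integral_mul_of_mean_zero`):
a periodic function of mean zero has a bounded primitive, `k` tends to zero and `k'` is integrable.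
Since `f` is merely integrable, the integration by parts behind that test is obtained from
Fubini's theorem on a triangle (`integral_mul_eq_sub_integral_primitive_mul`).
-/

open MeasureTheory Filter Topology

/-- Integration by parts in which the factor `g` is only assumed integrable: its primitive need not
be differentiable everywhere, so the formula comes from Fubini's theorem on `0 < t ≤ s ≤ a`. -/
lemma integral_mul_eq_sub_integral_primitive_mul {g k k' : ℝ → ℂ} {a : ℝ} (ha : 0 ≤ a)
    (hg : IntervalIntegrable g volume 0 a) (hk : ∀ t, HasDerivAt k (k' t) t)
    (hk' : Continuous k') :
    ∫ t in (0:ℝ)..a, g t * k t =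
      (∫ t in (0:ℝ)..a, g t) * k a - ∫ s in (0:ℝ)..a, (∫ t in (0:ℝ)..s, g t) * k' s := by
  have hkc : Continuous k := continuous_iff_continuousAt.2 fun t => (hk t).continuousAt
  have hgi : IntegrableOn g (Set.Ioc 0 a) := (intervalIntegrable_iff_integrableOn_Ioc_of_le ha).1 hg
  have hki : IntegrableOn k' (Set.Ioc 0 a) :=
    (intervalIntegrable_iff_integrableOn_Ioc_of_le ha).1 (hk'.intervalIntegrable _ _)
  have hswap := integral_integral_swap
    (f := fun t s => Set.indicator {p : ℝ × ℝ | p.1 ≤ p.2} (fun p => g p.1 * k' p.2) (t, s))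
    (μ := volume.restrict (Set.Ioc 0 a)) (ν := volume.restrict (Set.Ioc 0 a))
    ((hgi.mul_prod hki).indicator (measurableSet_le measurable_fst measurable_snd))
  have hleft : ∀ t ∈ Set.Ioc 0 a, (∫ s in Set.Ioc 0 a,
      Set.indicator {p : ℝ × ℝ | p.1 ≤ p.2} (fun p => g p.1 * k' p.2) (t, s))
        = g t * (k a - k t) := by
    intro t ht
    have h1 : (fun s => Set.indicator {p : ℝ × ℝ | p.1 ≤ p.2} (fun p => g p.1 * k' p.2) (t, s))
        = Set.indicator (Set.Ici t) (fun s => g t * k' s) := by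
      funext s
      simp [Set.indicator_apply]
    have h2 : Set.Ioc 0 a ∩ Set.Ici t = Set.Icc t a := by
      ext s
      simp only [Set.mem_inter_iff, Set.mem_Ioc, Set.mem_Ici, Set.mem_Icc]
      exact ⟨fun h => ⟨h.2, h.1.2⟩, fun h => ⟨⟨ht.1.trans_le h.1, h.2⟩, h.1⟩⟩
    rw [h1, setIntegral_indicator measurableSet_Ici, h2, integral_Icc_eq_integral_Ioc,
      ← intervalIntegral.integral_of_le ht.2, intervalIntegral.integral_const_mul,
      intervalIntegral.integral_eq_sub_of_hasDerivAt (fun s _ => hk s)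
        (hk'.intervalIntegrable _ _)]
  have hright : ∀ s ∈ Set.Ioc 0 a, (∫ t in Set.Ioc 0 a,
      Set.indicator {p : ℝ × ℝ | p.1 ≤ p.2} (fun p => g p.1 * k' p.2) (t, s))
        = (∫ t in (0:ℝ)..s, g t) * k' s := by
    intro s hs
    have h1 : (fun t => Set.indicator {p : ℝ × ℝ | p.1 ≤ p.2} (fun p => g p.1 * k' p.2) (t, s))
        = Set.indicator (Set.Iic s) (fun t => g t * k' s) := by
      funext t
      simp [Set.indicator_apply]
    have h2 : Set.Ioc 0 a ∩ Set.Iic s = Set.Ioc 0 s := by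
      ext t
      simp only [Set.mem_inter_iff, Set.mem_Ioc, Set.mem_Iic]
      exact ⟨fun h => ⟨h.1.1, h.2⟩, fun h => ⟨⟨h.1, h.2.trans hs.2⟩, h.2⟩⟩
    rw [h1, setIntegral_indicator measurableSet_Iic, h2,
      ← intervalIntegral.integral_of_le hs.1.le, intervalIntegral.integral_mul_const]
  rw [setIntegral_congr_fun measurableSet_Ioc hleft,
    setIntegral_congr_fun measurableSet_Ioc hright,
    ← intervalIntegral.integral_of_le ha, ← intervalIntegral.integral_of_le ha] at hswap
  rw [← hswap, ← intervalIntegral.integral_mul_const, ← intervalIntegral.integral_sub]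
  · congr 1
    funext t
    ring
  · exact hg.mul_const _
  · exact hg.mul_continuousOn (continuous_const.sub hkc).continuousOn

/-- Dirichlet's test for a periodic function of mean zero. -/
lemma tendsto_integral_mul_of_mean_zero {g k k' : ℝ → ℂ} {T : ℝ} (hT : T ≠ 0)
    (hper : Function.Periodic g T) (hg : IntervalIntegrable g volume 0 T)
    (hmean : ∫ t in (0:ℝ)..T, g t = 0) (hk : ∀ t, HasDerivAt k (k' t) t)
    (hk' : Continuous k') (hki : Integrable k') (hk0 : Tendsto k atTop (𝓝 0)) :
    ∃ L : ℂ, Tendsto (fun a : ℝ => ∫ t in (0:ℝ)..a, g t * k t) atTop (𝓝 L) := by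
  have hgi : ∀ x y, IntervalIntegrable g volume x y := hper.intervalIntegrable₀ hT hg
  have hFc : Continuous fun s => ∫ t in (0:ℝ)..s, g t :=
    intervalIntegral.continuous_primitive hgi 0
  have hFp : Function.Periodic (fun s => ∫ t in (0:ℝ)..s, g t) T := by
    intro s
    have h := hper.intervalIntegral_add_eq s 0
    rw [zero_add, hmean] at h
    have h' := intervalIntegral.integral_add_adjacent_intervals (hgi 0 s) (hgi s (s + T))
    rw [h, add_zero] at h'
    exact h'.symm
  obtain ⟨C, hC⟩ := (hFp.isBounded_of_continuous hT hFc).exists_norm_le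
  have hC' : ∀ s, ‖∫ t in (0:ℝ)..s, g t‖ ≤ C := fun s => hC _ ⟨s, rfl⟩
  have hFk : Tendsto (fun a => (∫ t in (0:ℝ)..a, g t) * k a) atTop (𝓝 0) :=
    isBoundedUnder_le_mul_tendsto_zero (isBoundedUnder_of ⟨C, hC'⟩) hk0
  have hint : Integrable fun s => (∫ t in (0:ℝ)..s, g t) * k' s :=
    hki.bdd_mul hFc.aestronglyMeasurable (ae_of_all _ hC')
  refine ⟨_, (hFk.sub (intervalIntegral_tendsto_integral_Ioi 0 hint.integrableOn
    tendsto_id)).congr' ?_⟩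
  filter_upwards [eventually_ge_atTop 0] with a ha
  exact (integral_mul_eq_sub_integral_primitive_mul ha (hgi 0 a) hk hk').symm

lemma ofReal_add_I_mul_ne_zero {c : ℝ} (hc : c ≠ 0) (t : ℝ) : (t : ℂ) + Complex.I * c ≠ 0 := by
  intro h
  simpa using hc (by simpa using congrArg Complex.im h)

lemma continuous_inv_kernel {c : ℝ} (hc : c ≠ 0) :
    Continuous fun t : ℝ => ((t : ℂ) + Complex.I * c)⁻¹ :=
  Continuous.inv₀ (by fun_prop) (ofReal_add_I_mul_ne_zero hc)

lemma integrable_inv_sq_add_sq_s4 {c : ℝ} (hc : c ≠ 0) :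
    Integrable fun t : ℝ => (c ^ 2 + t ^ 2)⁻¹ := by
  have h := (integrable_inv_one_add_sq.comp_div hc).const_mul (c ^ 2)⁻¹
  refine h.congr (ae_of_all _ fun t => ?_)
  have h1 : c ^ 2 + t ^ 2 ≠ 0 := by positivity
  have h2 : 1 + (t / c) ^ 2 ≠ 0 := by positivity
  dsimp only
  rw [← mul_inv]
  congr 1
  field_simp

lemma norm_ofReal_add_I_mul_sq (c t : ℝ) : ‖(t : ℂ) + Complex.I * c‖ ^ 2 = c ^ 2 + t ^ 2 := by
  rw [Complex.sq_norm, Complex.normSq_apply]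
  simp
  ring

/-- Dirichlet's test applied to the kernel `1 / (t + i c)`, whose derivative has norm
`1 / (c ^ 2 + t ^ 2)`. -/
lemma tendsto_integral_mul_kernel {g : ℝ → ℂ} {T c : ℝ} (hT : T ≠ 0) (hc : c ≠ 0)
    (hper : Function.Periodic g T) (hg : IntervalIntegrable g volume 0 T)
    (hmean : ∫ t in (0:ℝ)..T, g t = 0) :
    ∃ L : ℂ, Tendsto (fun a : ℝ => ∫ t in (0:ℝ)..a, g t * ((t : ℂ) + Complex.I * c)⁻¹)
      atTop (𝓝 L) := by
  have hk' : Continuous fun t : ℝ => -1 / ((t : ℂ) + Complex.I * c) ^ 2 :=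
    Continuous.div (by fun_prop) (by fun_prop) fun t => pow_ne_zero 2 (ofReal_add_I_mul_ne_zero hc t)
  refine tendsto_integral_mul_of_mean_zero hT hper hg hmean
    (k' := fun t : ℝ => -1 / ((t : ℂ) + Complex.I * c) ^ 2) (fun t => ?_) hk' ?_ ?_
  · exact ((Complex.ofRealCLM.hasDerivAt (x := t)).add_const (Complex.I * c)).fun_inv
      (ofReal_add_I_mul_ne_zero hc t)
  · refine (integrable_inv_sq_add_sq_s4 hc).mono' hk'.aestronglyMeasurable (ae_of_all _ fun t => ?_)
    rw [norm_div, norm_pow, norm_ofReal_add_I_mul_sq]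
    simp
  · refine tendsto_inv₀_cobounded.comp ?_
    rw [← tendsto_norm_atTop_iff_cobounded]
    refine tendsto_atTop_mono (fun t => ?_) tendsto_id
    have h := Complex.re_le_norm ((t : ℂ) + Complex.I * c)
    simpa using h

/-- Folding a symmetric integral onto `[0, a]`; no sign condition on `a` is needed. -/
lemma integral_neg_self {φ : ℝ → ℂ} (hφ : ∀ x y, IntervalIntegrable φ volume x y) (a : ℝ) :
    ∫ t in (-a)..a, φ t = ∫ t in (0:ℝ)..a, (φ t + φ (-t)) := by
  have hneg : IntervalIntegrable (fun t => φ (-t)) volume 0 a := by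
    simpa using (IntervalIntegrable.iff_comp_neg (by simp)).1 (hφ (-0) (-a))
  rw [intervalIntegral.integral_add (hφ 0 a) hneg, intervalIntegral.integral_comp_neg, neg_zero,
    add_comm, intervalIntegral.integral_add_adjacent_intervals (hφ _ _) (hφ _ _)]

/-- The Cauchy principal value `L_c(f)` exists: after folding onto `[0, a]`, the means of `f` and
`f (-·)` agree, so their contributions combine into an absolutely convergent integral. -/
lemma exists_tendsto_principal_value {f : ℝ → ℂ} {T c : ℝ} (hT : T ≠ 0) (hc : c ≠ 0)
    (hper : Function.Periodic f T) (hf : IntervalIntegrable f volume 0 T) :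
    ∃ L : ℂ, Tendsto (fun a : ℝ => ∫ t in (-a)..a, f t / ((t : ℂ) + Complex.I * c))
      atTop (𝓝 L) := by
  have hfi : ∀ x y, IntervalIntegrable f volume x y := hper.intervalIntegrable₀ hT hf
  have hni : ∀ x y, IntervalIntegrable (fun t => f (-t)) volume x y := fun x y => by
    simpa using (IntervalIntegrable.iff_comp_neg (by simp)).1 (hfi (-x) (-y))
  have hT' : (T : ℂ) ≠ 0 := by exact_mod_cast hT
  have hc' : -c ≠ 0 := neg_ne_zero.2 hc
  have hnper : Function.Periodic (fun t => f (-t)) T := fun t => by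
    have h := hper (-(t + T))
    rw [show -(t + T) + T = -t by ring] at h
    exact h.symm
  have hnmean : ∫ t in (0:ℝ)..T, f (-t) = ∫ t in (0:ℝ)..T, f t := by
    have h := hper.intervalIntegral_add_eq (-T) 0
    rw [neg_add_cancel, zero_add] at h
    rw [intervalIntegral.integral_comp_neg, neg_zero, h]
  set m : ℂ := (∫ t in (0:ℝ)..T, f t) / T with hm
  obtain ⟨L₁, h₁⟩ := tendsto_integral_mul_kernel (g := fun t => f t - m) hT hc
    (fun t => by simp only [hper t]) (hf.sub intervalIntegrable_const) (by
      rw [intervalIntegral.integral_sub hf intervalIntegrable_const,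
        intervalIntegral.integral_const, hm, sub_zero, Complex.real_smul]
      field_simp
      ring)
  obtain ⟨L₂, h₂⟩ := tendsto_integral_mul_kernel (g := fun t => f (-t) - m) hT hc'
    (fun t => by simp only [hnper t]) ((hni _ _).sub intervalIntegrable_const) (by
      rw [intervalIntegral.integral_sub (hni _ _) intervalIntegrable_const,
        intervalIntegral.integral_const, hnmean, hm, sub_zero, Complex.real_smul]
      field_simp
      ring)
  have hq : Integrable fun t : ℝ => m * (-2 * Complex.I * c) * (((c ^ 2 + t ^ 2)⁻¹ : ℝ) : ℂ) :=
    (integrable_inv_sq_add_sq_s4 hc).ofReal.const_mul _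
  have h₃ := intervalIntegral_tendsto_integral_Ioi 0 hq.integrableOn tendsto_id
  refine ⟨_, ((h₁.sub h₂).add h₃).congr fun a => ?_⟩
  have hk := continuous_inv_kernel hc
  have hk2 := continuous_inv_kernel hc'
  have i₁ := (((hfi 0 a).sub intervalIntegrable_const).mul_continuousOn hk.continuousOn :
    IntervalIntegrable (fun t => (f t - m) * ((t : ℂ) + Complex.I * c)⁻¹) volume 0 a)
  have i₂ := (((hni 0 a).sub intervalIntegrable_const).mul_continuousOn hk2.continuousOn :
    IntervalIntegrable (fun t => (f (-t) - m) * ((t : ℂ) + Complex.I * (-c : ℝ))⁻¹) volume 0 a)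
  rw [integral_neg_self (fun x y => by
      simpa only [div_eq_mul_inv] using (hfi x y).mul_continuousOn hk.continuousOn),
    ← intervalIntegral.integral_sub i₁ i₂, id,
    ← intervalIntegral.integral_add (i₁.sub i₂) hq.intervalIntegrable]
  congr 1
  funext t
  have e1 := ofReal_add_I_mul_ne_zero hc t
  have e2 := ofReal_add_I_mul_ne_zero hc' t
  have e3 : ((-t : ℝ) : ℂ) + Complex.I * c = -((t : ℂ) + Complex.I * (-c : ℝ)) := by
    push_cast; ring
  have e4 : (((c ^ 2 + t ^ 2)⁻¹ : ℝ) : ℂ)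
      = ((t : ℂ) + Complex.I * c)⁻¹ * ((t : ℂ) + Complex.I * (-c : ℝ))⁻¹ := by
    rw [← mul_inv, Complex.ofReal_inv]
    congr 1
    push_cast
    linear_combination (c : ℂ) ^ 2 * Complex.I_sq
  have e5 : -2 * Complex.I * (c : ℂ)
      = ((t : ℂ) + Complex.I * (-c : ℝ)) - ((t : ℂ) + Complex.I * c) := by
    push_cast; ring
  -- In terms of the two kernels' denominators `u` and `v` the identity is purely rational.
  rw [e3, e4, e5]
  generalize (t : ℂ) + Complex.I * c = u at *
  generalize (t : ℂ) + Complex.I * (-c : ℝ) = v at *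
  field_simp
  ring

theorem stmt4 (f : ℝ → ℂ) (hper : ∀ t : ℝ, f (t + 2 * Real.pi) = f t)
    (hint : IntervalIntegrable f volume 0 (2 * Real.pi))
    (l : ℝ) (hl : l ≠ 0) :
    ∃ L₁ L₂ J : ℂ,
      Tendsto (fun a : ℝ => ∫ t in (-a : ℝ)..a, f t / ((t : ℂ) + Complex.I * l)) atTop (𝓝 L₁) ∧
      Tendsto (fun a : ℝ => ∫ t in (-a : ℝ)..a, f t / ((t : ℂ) + Complex.I * (-l))) atTop (𝓝 L₂) ∧
      Tendsto (fun a : ℝ => ∫ t in (0:ℝ)..a,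
          (t : ℂ) * ((f t - f (-t)) / 2) / ((l ^ 2 + t ^ 2 : ℝ) : ℂ)) atTop (𝓝 J) ∧
      J = (1 / 4 : ℂ) * (L₁ + L₂) := by
  have hT : 2 * Real.pi ≠ 0 := Real.two_pi_pos.ne'
  have hl' : -l ≠ 0 := neg_ne_zero.2 hl
  have hfi : ∀ x y, IntervalIntegrable f volume x y :=
    Function.Periodic.intervalIntegrable₀ hper hT hint
  obtain ⟨L₁, h₁⟩ := exists_tendsto_principal_value hT hl hper hint
  obtain ⟨L₂, h₂⟩ := exists_tendsto_principal_value hT hl' hper hint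
  refine ⟨L₁, L₂, _, h₁, by simpa only [Complex.ofReal_neg] using h₂,
    ((h₁.add h₂).const_mul (1 / 4 : ℂ)).congr fun a => ?_, rfl⟩
  have j₁ : ∀ x y, IntervalIntegrable (fun t : ℝ => f t / ((t : ℂ) + Complex.I * l))
      volume x y := fun x y => by
    simpa only [div_eq_mul_inv] using
      (hfi x y).mul_continuousOn (continuous_inv_kernel hl).continuousOn
  have j₂ : ∀ x y, IntervalIntegrable (fun t : ℝ => f t / ((t : ℂ) + Complex.I * (-l : ℝ)))
      volume x y := fun x y => by
    simpa only [div_eq_mul_inv] using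
      (hfi x y).mul_continuousOn (continuous_inv_kernel hl').continuousOn
  rw [← intervalIntegral.integral_add (j₁ _ _) (j₂ _ _),
    integral_neg_self (fun x y => (j₁ x y).add (j₂ x y)), ← intervalIntegral.integral_const_mul]
  congr 1
  funext t
  have e1 := ofReal_add_I_mul_ne_zero hl t
  have e2 := ofReal_add_I_mul_ne_zero hl' t
  have e3 : ((-t : ℝ) : ℂ) + Complex.I * l = -((t : ℂ) + Complex.I * (-l : ℝ)) := by
    push_cast; ring
  have e4 : ((-t : ℝ) : ℂ) + Complex.I * (-l : ℝ) = -((t : ℂ) + Complex.I * l) := by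
    push_cast; ring
  have e5 : ((l ^ 2 + t ^ 2 : ℝ) : ℂ)
      = ((t : ℂ) + Complex.I * l) * ((t : ℂ) + Complex.I * (-l : ℝ)) := by
    push_cast
    linear_combination (l : ℂ) ^ 2 * Complex.I_sq
  have e6 : (t : ℂ)
      = (((t : ℂ) + Complex.I * l) + ((t : ℂ) + Complex.I * (-l : ℝ))) / 2 := by
    push_cast; ring
  -- In terms of the two kernels' denominators `u` and `v` the identity is purely rational.
  rw [e3, e4, e5]
  generalize (t : ℂ) + Complex.I * l = u at *
  generalize (t : ℂ) + Complex.I * (-l : ℝ) = v at *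
  rw [e6]
  field_simp
  ring
end

section
/- Let f : ℝ → ℂ be a 2π-periodic function that is integrable on [0, 2π], and let λ be a nonzero real number. Then the Cauchy principal value L_λ(f) = lim_{a→∞} ∫_{-a}^{a} f(t)/(t + iλ) dt equals (1/2)·∫₀^{2π} cot((t + iλ)/2)·f(t) dt, where cot denotes the complex cotangent. -/
/-!
Write `z = t + iλ` and `T = 2π`. The Mittag-Leffler expansion of the cotangent reads
`cot (z / 2) / 2 = 1 / z + ∑_{k ≥ 1} (1 / (z - k T) + 1 / (z + k T))`.
For `t ∈ [0, T]` the `k`-th paired term is `O(1 / k ^ 2)` uniformly in `t`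
(`norm_pairTerm_le`), so after multiplication by `f` the series may be integrated term by term
over a period. By periodicity of `f` the translates of `[0, T]` reassemble, and the partial sums
are the integrals of `f t / (t + iλ)` over `[-N T, (N + 1) T]`
(`tendsto_integral_periods`). For real `a` with `N = ⌊a / T⌋`, the interval `[-a, a]` differs from
that one by two intervals of length at most `T` on which `|t| ≥ N T`; their contribution is at
most `2 ‖f‖₁ / (N T)` (`norm_integral_le_of_far`), which tends to `0`.
-/

open MeasureTheory Filter Topology

/-- The `k = n + 1` term of the Mittag-Leffler expansion of `cot (z / 2) / 2`, with the poles
`± 2πk` paired. -/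
noncomputable def pairTerm (z : ℂ) (n : ℕ) : ℂ :=
  1 / (z - (n + 1) * (2 * Real.pi)) + 1 / (z + (n + 1) * (2 * Real.pi))

lemma im_add_I_mul (t l : ℝ) : ((t : ℂ) + Complex.I * l).im = l := by simp

lemma add_I_mul_ne_zero (t : ℝ) {l : ℝ} (hl : l ≠ 0) : (t : ℂ) + Complex.I * l ≠ 0 := by
  intro h
  apply hl
  simpa using congrArg Complex.im h

lemma abs_le_norm_add_I_mul (t l : ℝ) : |t| ≤ ‖(t : ℂ) + Complex.I * l‖ := by
  simpa using Complex.abs_re_le_norm ((t : ℂ) + Complex.I * l)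

lemma abs_le_norm_add_I_mul' (t l : ℝ) : |l| ≤ ‖(t : ℂ) + Complex.I * l‖ := by
  simpa using Complex.abs_im_le_norm ((t : ℂ) + Complex.I * l)

/-- The expansion of the cotangent, rescaled from `π cot (π x)` by `x = z / (2π)`. -/
lemma hasSum_pairTerm {z : ℂ} (hz : z.im ≠ 0) :
    HasSum (pairTerm z) (Complex.cot (z / 2) / 2 - 1 / z) := by
  have hpi : (Real.pi : ℂ) ≠ 0 := by exact_mod_cast Real.pi_ne_zero
  have hx : z / (2 * Real.pi) ∈ Complex.integerComplement := by
    rw [Complex.mem_integerComplement_iff]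
    rintro ⟨n, hn⟩
    apply hz
    have h : z = ((n * (2 * Real.pi) : ℝ) : ℂ) := by
      push_cast
      rw [hn]
      field_simp
    rw [h, Complex.ofReal_im]
  have h := (summable_cotTerm hx).hasSum
  have e : ∑' n, cotTerm (z / (2 * Real.pi)) n = _ := (cot_series_rep' hx).symm
  rw [e] at h
  have h2 := h.mul_left (1 / (2 * Real.pi) : ℂ)
  have hz0 : z ≠ 0 := by
    rintro rfl
    simp at hz
  have key : ∀ w : ℂ, (1 / (2 * Real.pi) : ℂ) * (1 / (w / (2 * Real.pi))) = 1 / w := by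
    intro w
    by_cases hw : w = 0
    · simp [hw]
    · field_simp
  have e1 : pairTerm z = fun n => (1 / (2 * Real.pi) : ℂ) * cotTerm (z / (2 * Real.pi)) n := by
    funext n
    rw [cotTerm, mul_add, pairTerm, ← key (z - _), ← key (z + _)]
    congr 4 <;> field_simp
  have e2 : Complex.cot (z / 2) / 2 - 1 / z = (1 / (2 * Real.pi) : ℂ) *
      (Real.pi * Complex.cot (Real.pi * (z / (2 * Real.pi))) - 1 / (z / (2 * Real.pi))) := by
    have : (Real.pi : ℂ) * (z / (2 * Real.pi)) = z / 2 := by field_simp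
    rw [this, mul_sub, key]
    field_simp
  rw [e1, e2]
  exact h2

lemma sub_period (t l : ℝ) (n : ℕ) :
    (t : ℂ) + Complex.I * l - (n + 1) * (2 * Real.pi)
      = ((t - (n + 1) * (2 * Real.pi) : ℝ) : ℂ) + Complex.I * l := by
  push_cast
  ring

lemma add_period (t l : ℝ) (n : ℕ) :
    (t : ℂ) + Complex.I * l + (n + 1) * (2 * Real.pi)
      = ((t + (n + 1) * (2 * Real.pi) : ℝ) : ℂ) + Complex.I * l := by
  push_cast
  ring

/-- Over one period the paired terms decay quadratically: the numerator `2 z` is bounded, and both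
factors of the denominator grow linearly. -/
lemma norm_pairTerm_le {l : ℝ} (hl : l ≠ 0) :
    ∃ C : ℝ, ∀ (n : ℕ) (t : ℝ), 0 ≤ t → t ≤ 2 * Real.pi →
      ‖pairTerm ((t : ℂ) + Complex.I * l) n‖ ≤ C * (1 / ((n : ℝ) + 1) ^ 2) := by
  have hT : 0 < 2 * Real.pi := by positivity
  set T := 2 * Real.pi with hTdef
  set m := min T |l| with hm
  have hm0 : 0 < m := lt_min hT (abs_pos.mpr hl)
  have hmT : m ≤ T := min_le_left _ _
  have hml : m ≤ |l| := min_le_right _ _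
  refine ⟨2 * (T + |l|) / (m / 2 * T), fun n t ht0 htT => ?_⟩
  set w : ℂ := (t : ℂ) + Complex.I * l with hw
  have hA0 : w - (n + 1) * (2 * Real.pi) ≠ 0 := by
    rw [hw, sub_period]; exact add_I_mul_ne_zero _ hl
  have hB0 : w + (n + 1) * (2 * Real.pi) ≠ 0 := by
    rw [hw, add_period]; exact add_I_mul_ne_zero _ hl
  have hB : ((n : ℝ) + 1) * T ≤ ‖w + (n + 1) * (2 * Real.pi)‖ := by
    rw [hw, add_period]
    refine le_trans ?_ (abs_le_norm_add_I_mul _ _)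
    refine le_trans ?_ (le_abs_self _)
    linarith
  -- For `n = 0` only the imaginary part keeps `w - T` away from zero, whence `m ≤ |l|`.
  have hA : m / 2 * ((n : ℝ) + 1) ≤ ‖w - (n + 1) * (2 * Real.pi)‖ := by
    rw [hw, sub_period]
    have h1 := abs_le_norm_add_I_mul (t - (n + 1) * (2 * Real.pi)) l
    have h2 := abs_le_norm_add_I_mul' (t - (n + 1) * (2 * Real.pi)) l
    have h3 := neg_abs_le (t - (n + 1) * (2 * Real.pi))
    have h4 : m * n ≤ T * n := by gcongr
    rw [← hTdef] at h1 h2 h3 ⊢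
    linarith
  have hN : ‖2 * w‖ ≤ 2 * (T + |l|) := by
    rw [norm_mul]
    have : ‖w‖ ≤ T + |l| := by
      refine (norm_add_le _ _).trans ?_
      simp only [norm_mul, Complex.norm_I, one_mul, Complex.norm_real, Real.norm_eq_abs]
      rw [abs_of_nonneg ht0]
      linarith
    simpa using this
  have e : pairTerm w n
      = 2 * w / ((w - (n + 1) * (2 * Real.pi)) * (w + (n + 1) * (2 * Real.pi))) := by
    rw [pairTerm, one_div_add_one_div hA0 hB0]
    ring
  rw [e, norm_div, norm_mul (w - _)]
  calc _ ≤ 2 * (T + |l|) / ((m / 2 * ((n : ℝ) + 1)) * (((n : ℝ) + 1) * T)) := by gcongr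
    _ = _ := by field_simp

lemma intervalIntegrable_div {f : ℝ → ℂ} {l : ℝ} (hl : l ≠ 0) {a b : ℝ}
    (hf : IntervalIntegrable f volume a b) :
    IntervalIntegrable (fun t => f t / ((t : ℂ) + Complex.I * l)) volume a b := by
  simp_rw [div_eq_mul_inv]
  refine hf.mul_continuousOn (Continuous.continuousOn ?_)
  exact Continuous.inv₀ (by fun_prop) (fun t => add_I_mul_ne_zero t hl)

/-- The paired term, integrated against a periodic `f`, is the integral of `f t / (t + iλ)` over
two translates of the period. -/
lemma integral_pairTerm {f : ℝ → ℂ} (hper : Function.Periodic f (2 * Real.pi))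
    (hf : ∀ a b, IntervalIntegrable f volume a b) {l : ℝ} (hl : l ≠ 0) (n : ℕ) :
    ∫ t in (0 : ℝ)..(2 * Real.pi), pairTerm ((t : ℂ) + Complex.I * l) n * f t
      = (∫ t in (-((n + 1 : ℕ) * (2 * Real.pi)) : ℝ)..(-(n * (2 * Real.pi))),
          f t / ((t : ℂ) + Complex.I * l))
        + ∫ t in ((n + 1 : ℕ) * (2 * Real.pi) : ℝ)..((n + 1 + 1 : ℕ) * (2 * Real.pi)),
          f t / ((t : ℂ) + Complex.I * l) := by
  set g : ℝ → ℂ := fun t => f t / ((t : ℂ) + Complex.I * l) with hg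
  have hgi : ∀ a b, IntervalIntegrable g volume a b := fun a b => intervalIntegrable_div hl (hf a b)
  have e : ∀ t : ℝ, pairTerm ((t : ℂ) + Complex.I * l) n * f t
      = g (t - (n + 1 : ℕ) * (2 * Real.pi)) + g (t + (n + 1 : ℕ) * (2 * Real.pi)) := by
    intro t
    have h1 : f (t - (n + 1 : ℕ) * (2 * Real.pi)) = f t := hper.sub_nat_mul_eq (n + 1)
    have h2 : f (t + (n + 1 : ℕ) * (2 * Real.pi)) = f t := hper.nat_mul (n + 1) t
    simp only [hg]
    rw [h1, h2, pairTerm, sub_period, add_period]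
    push_cast
    ring
  simp_rw [e]
  rw [intervalIntegral.integral_add, intervalIntegral.integral_comp_sub_right,
    intervalIntegral.integral_comp_add_right]
  · congr 2 <;> push_cast <;> ring
  · have := (hgi (0 - (n + 1 : ℕ) * (2 * Real.pi)) (2 * Real.pi - (n + 1 : ℕ) * (2 * Real.pi)))
    simpa using this.comp_sub_right ((n + 1 : ℕ) * (2 * Real.pi))
  · have := (hgi (0 + (n + 1 : ℕ) * (2 * Real.pi)) (2 * Real.pi + (n + 1 : ℕ) * (2 * Real.pi)))
    simpa using this.comp_add_right ((n + 1 : ℕ) * (2 * Real.pi))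

/-- Integrals over a symmetric family of whole periods converge to the cotangent integral. -/
lemma tendsto_integral_periods {f : ℝ → ℂ} (hper : Function.Periodic f (2 * Real.pi))
    (hf : ∀ a b, IntervalIntegrable f volume a b) {l : ℝ} (hl : l ≠ 0) :
    Tendsto (fun N : ℕ => ∫ t in (-(N * (2 * Real.pi)) : ℝ)..((N + 1 : ℕ) * (2 * Real.pi)),
        f t / ((t : ℂ) + Complex.I * l)) atTop
      (𝓝 ((1 / 2 : ℂ) * ∫ t in (0:ℝ)..(2 * Real.pi),
        Complex.cot (((t : ℂ) + Complex.I * l) / 2) * f t)) := by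
  have hT : 0 < 2 * Real.pi := by positivity
  set g : ℝ → ℂ := fun t => f t / ((t : ℂ) + Complex.I * l) with hg
  have hgi : ∀ a b, IntervalIntegrable g volume a b := fun a b => intervalIntegrable_div hl (hf a b)
  have hsin : ∀ t : ℝ, Complex.sin (((t : ℂ) + Complex.I * l) / 2) ≠ 0 := by
    intro t h
    rw [Complex.sin_eq_zero_iff] at h
    obtain ⟨k, hk⟩ := h
    have := congrArg Complex.im hk
    simp at this
    exact hl this
  have hcot : Continuous fun t : ℝ => Complex.cot (((t : ℂ) + Complex.I * l) / 2) := by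
    simp only [Complex.cot]
    exact Continuous.div (by fun_prop) (by fun_prop) hsin
  obtain ⟨C, hC⟩ := norm_pairTerm_le hl
  have hsq : Summable fun n : ℕ => (1 / ((n : ℝ) + 1) ^ 2) := by
    have := (summable_nat_add_iff 1).mpr (Real.summable_one_div_nat_pow.mpr one_lt_two)
    simpa using this
  have hs := intervalIntegral.hasSum_integral_of_dominated_convergence
    (μ := volume) (a := 0) (b := 2 * Real.pi)
    (F := fun n t => pairTerm ((t : ℂ) + Complex.I * l) n * f t)
    (f := fun t => (Complex.cot (((t : ℂ) + Complex.I * l) / 2) / 2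
      - 1 / ((t : ℂ) + Complex.I * l)) * f t)
    (fun n t => C * (1 / ((n : ℝ) + 1) ^ 2) * ‖f t‖)
    (by
      intro n
      refine AEStronglyMeasurable.mul ?_ (hf _ _).def'.aestronglyMeasurable
      refine Continuous.aestronglyMeasurable ?_
      simp only [pairTerm, sub_period, add_period]
      exact ((continuous_const.div (by fun_prop) fun t => add_I_mul_ne_zero _ hl)).add
        ((continuous_const.div (by fun_prop) fun t => add_I_mul_ne_zero _ hl)))
    (by
      intro n
      refine Eventually.of_forall fun t ht => ?_
      rw [Set.uIoc_of_le hT.le] at ht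
      rw [norm_mul]
      exact mul_le_mul_of_nonneg_right (hC n t ht.1.le ht.2) (norm_nonneg _))
    (Eventually.of_forall fun t _ => (hsq.mul_left C).mul_right _)
    (by
      simp_rw [tsum_mul_right]
      exact (hf _ _).norm.const_mul _)
    (Eventually.of_forall fun t _ =>
      (hasSum_pairTerm (by rw [im_add_I_mul]; exact hl)).mul_right _)
  have hlim := hs.tendsto_sum_nat.add_const (∫ t in (0:ℝ)..(2 * Real.pi), g t)
  have hval : (∫ t in (0:ℝ)..(2 * Real.pi), (Complex.cot (((t : ℂ) + Complex.I * l) / 2) / 2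
      - 1 / ((t : ℂ) + Complex.I * l)) * f t) + (∫ t in (0:ℝ)..(2 * Real.pi), g t)
      = (1 / 2 : ℂ) * ∫ t in (0:ℝ)..(2 * Real.pi),
        Complex.cot (((t : ℂ) + Complex.I * l) / 2) * f t := by
    have hci : IntervalIntegrable
        (fun t : ℝ => (1 / 2 : ℂ) * (Complex.cot (((t : ℂ) + Complex.I * l) / 2) * f t))
        volume 0 (2 * Real.pi) :=
      ((hf _ _).continuousOn_mul hcot.continuousOn).const_mul _
    have e : ∀ t : ℝ, (Complex.cot (((t : ℂ) + Complex.I * l) / 2) / 2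
        - 1 / ((t : ℂ) + Complex.I * l)) * f t
        = (1 / 2 : ℂ) * (Complex.cot (((t : ℂ) + Complex.I * l) / 2) * f t) - g t := by
      intro t
      simp only [hg]
      ring
    simp_rw [e]
    rw [intervalIntegral.integral_sub hci (hgi _ _), sub_add_cancel,
      intervalIntegral.integral_const_mul]
  rw [hval] at hlim
  refine hlim.congr fun N => ?_
  induction N with
  | zero => simp
  | succ N ih =>
    rw [Finset.sum_range_succ, add_right_comm, ih, integral_pairTerm hper hf hl N]
    rw [add_comm (∫ t in (-((N + 1 : ℕ) * (2 * Real.pi)) : ℝ)..(-(N * (2 * Real.pi))), _),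
      ← add_assoc, intervalIntegral.integral_add_adjacent_intervals (hgi _ _) (hgi _ _), add_comm,
      intervalIntegral.integral_add_adjacent_intervals (hgi _ _) (hgi _ _)]

/-- An interval no longer than a period and at distance at least `R` from `0` contributes at most
`‖f‖₁ / R`. -/
lemma norm_integral_le_of_far {f : ℝ → ℂ} (hper : Function.Periodic f (2 * Real.pi))
    (hf : ∀ a b, IntervalIntegrable f volume a b) {l R u v : ℝ} (hR : 0 < R)
    (huv : u ≤ v) (hvu : v ≤ u + 2 * Real.pi) (hfar : ∀ t, u ≤ t → t ≤ v → R ≤ |t|) :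
    ‖∫ t in u..v, f t / ((t : ℂ) + Complex.I * l)‖
      ≤ (∫ t in (0 : ℝ)..(2 * Real.pi), ‖f t‖) / R := by
  have hpn : Function.Periodic (fun t => ‖f t‖) (2 * Real.pi) := fun t => by simp only [hper t]
  calc ‖∫ t in u..v, f t / ((t : ℂ) + Complex.I * l)‖
      ≤ ∫ t in u..v, ‖f t‖ / R := by
        refine intervalIntegral.norm_integral_le_of_norm_le huv
          (Eventually.of_forall fun t ht => ?_) ((hf _ _).norm.div_const _)
        rw [norm_div]
        exact div_le_div_of_nonneg_left (norm_nonneg _) hR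
          ((hfar t ht.1.le ht.2).trans (abs_le_norm_add_I_mul t l))
    _ = (∫ t in u..v, ‖f t‖) / R := intervalIntegral.integral_div _ _
    _ ≤ (∫ t in u..(u + 2 * Real.pi), ‖f t‖) / R := by
        refine div_le_div_of_nonneg_right ?_ hR.le
        exact intervalIntegral.integral_mono_interval le_rfl huv hvu
          (Eventually.of_forall fun t => norm_nonneg _) (hf _ _).norm
    _ = _ := by
        rw [hpn.intervalIntegral_add_eq u 0, zero_add]

theorem stmt5 (f : ℝ → ℂ) (hper : ∀ t : ℝ, f (t + 2 * Real.pi) = f t)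
    (hint : IntervalIntegrable f volume 0 (2 * Real.pi))
    (l : ℝ) (hl : l ≠ 0) :
    Tendsto (fun a : ℝ => ∫ t in (-a : ℝ)..a, f t / ((t : ℂ) + Complex.I * l)) atTop
      (𝓝 ((1 / 2 : ℂ) * ∫ t in (0:ℝ)..(2 * Real.pi),
        Complex.cot (((t : ℂ) + Complex.I * l) / 2) * f t)) := by
  have hT : 0 < 2 * Real.pi := by positivity
  have hp : Function.Periodic f (2 * Real.pi) := hper
  have hf : ∀ a b, IntervalIntegrable f volume a b :=
    fun a b => hp.intervalIntegrable₀ hT.ne' hint a b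
  have hgi : ∀ a b, IntervalIntegrable (fun t => f t / ((t : ℂ) + Complex.I * l)) volume a b :=
    fun a b => intervalIntegrable_div hl (hf a b)
  have hN : Tendsto (fun a : ℝ => ⌊a / (2 * Real.pi)⌋₊) atTop atTop :=
    tendsto_nat_floor_atTop.comp (tendsto_id.atTop_div_const hT)
  have hmain := (tendsto_integral_periods hp hf hl).comp hN
  refine tendsto_of_tendsto_of_dist hmain ?_
  set M := ∫ t in (0 : ℝ)..(2 * Real.pi), ‖f t‖ with hM
  have hz : Tendsto (fun a : ℝ => 2 * (M / ((⌊a / (2 * Real.pi)⌋₊ : ℝ) * (2 * Real.pi))))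
      atTop (𝓝 0) := by
    have h1 : Tendsto (fun a : ℝ => (⌊a / (2 * Real.pi)⌋₊ : ℝ) * (2 * Real.pi)) atTop atTop :=
      (tendsto_natCast_atTop_atTop.comp hN).atTop_mul_const hT
    simpa using (h1.const_div_atTop M).const_mul 2
  refine squeeze_zero' (Eventually.of_forall fun _ => dist_nonneg) ?_ hz
  filter_upwards [eventually_ge_atTop (2 * Real.pi)] with a ha
  simp only [Function.comp]
  set N := ⌊a / (2 * Real.pi)⌋₊ with hNdef
  have hN1 : 1 ≤ N := Nat.le_floor (by rw [Nat.cast_one, le_div_iff₀ hT]; linarith)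
  have hNa : (N : ℝ) * (2 * Real.pi) ≤ a := by
    rw [← le_div_iff₀ hT]
    exact Nat.floor_le (div_nonneg (hT.le.trans ha) hT.le)
  have haN : a < ((N + 1 : ℕ) : ℝ) * (2 * Real.pi) := by
    rw [← div_lt_iff₀ hT]
    push_cast
    exact Nat.lt_floor_add_one _
  have hR : 0 < (N : ℝ) * (2 * Real.pi) := by positivity
  have haN' : a ≤ N * (2 * Real.pi) + 2 * Real.pi := by
    push_cast at haN
    linarith
  have b1 := norm_integral_le_of_far (l := l) hp hf (u := -a) (v := -(N * (2 * Real.pi))) hR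
    (by linarith) (by linarith)
    (fun t _ h2 => by
      have := neg_abs_le t
      linarith)
  have b2 := norm_integral_le_of_far (l := l) hp hf (u := a) (v := (N + 1 : ℕ) * (2 * Real.pi)) hR
    haN.le (by push_cast; linarith) (fun t h1 _ => by
      have := le_abs_self t
      linarith)
  have e1 := intervalIntegral.integral_add_adjacent_intervals
    (hgi (-a) (-(N * (2 * Real.pi)))) (hgi _ ((N + 1 : ℕ) * (2 * Real.pi)))
  have e2 := intervalIntegral.integral_add_adjacent_intervals
    (hgi (-a) a) (hgi _ ((N + 1 : ℕ) * (2 * Real.pi)))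
  have e3 : ∀ x y z w v : ℂ, x + y = v → z + w = v → y - z = w - x := by
    intro x y z w v h1 h2
    linear_combination h1 - h2
  rw [dist_eq_norm, e3 _ _ _ _ _ e1 e2]
  refine (norm_sub_le _ _).trans ?_
  linarith
end

section
/- Let λ be a nonzero real number and define the 2π-periodic function g_λ(t) = cot((t − iλ)/2), where cot is the complex cotangent. Then for every integer n the exponential Fourier coefficient C_n(g_λ) = (1/(2π))∫₀^{2π} g_λ(t) e^{−int} dt equals i·(sgn(λ) − sgn(n))·e^{−|nλ|}, where sgn(x) is the sign of x for x ≠ 0 and sgn(0) = 0. -/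
/-!
With `q = exp (l + i t)` one has `cot ((t - i l) / 2) = i (q + 1) / (q - 1)`. Put `s = -sgn l` and
`p = q ^ s`, so that `|p| = exp (-|l|) < 1`; the cotangent then equals `-i s (1 + p) / (1 - p)`, and
`(1 + p) / (1 - p) = 1 + 2 ∑_{k ≥ 1} p ^ k` is a Fourier series that converges absolutely and
uniformly in `t`. Integrating it termwise against `exp (-i n t)` leaves at most the one term with
`s k = n`. This is `integral_kernel`; treating both signs `s` at once covers `l < 0` and `l > 0`.
-/

open MeasureTheory Filter Topology

lemma integral_exp_int (m : ℤ) :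
    ∫ t in (0:ℝ)..(2 * Real.pi), Complex.exp (Complex.I * m * t)
      = if m = 0 then (2 * Real.pi : ℂ) else 0 := by
  split_ifs with h
  · simp [h]
  · have hc : Complex.I * (m : ℂ) ≠ 0 := by simp [h]
    rw [integral_exp_mul_complex hc]
    have : Complex.exp (Complex.I * m * ((2 * Real.pi : ℝ) : ℂ)) = 1 := by
      rw [Complex.exp_eq_one_iff]
      exact ⟨m, by push_cast; ring⟩
    rw [this]; simp

lemma hasSum_one_add_div_one_sub {p : ℂ} (hp : ‖p‖ < 1) :
    HasSum (fun k : ℕ => (if k = 0 then 1 else 2 : ℂ) * p ^ k) ((1 + p) / (1 - p)) := by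
  have hp1 : 1 - p ≠ 0 := by
    intro h
    rw [← sub_eq_zero.mp h] at hp
    simp at hp
  have h1 := ((hasSum_geometric_of_norm_lt_one hp).mul_left 2).sub (hasSum_ite_eq (0:ℕ) (1:ℂ))
  have he : (1 + p) / (1 - p) = 2 * (1 - p)⁻¹ - 1 := by field_simp; ring
  rw [he]
  have hf : (fun k : ℕ => (if k = 0 then 1 else 2 : ℂ) * p ^ k)
      = fun k => 2 * p ^ k - if k = 0 then 1 else 0 := by
    ext k
    by_cases hk : k = 0
    · simp [hk]; norm_num
    · simp [hk]
  rwa [hf]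

/-- The Fourier coefficients of `(1 + p) / (1 - p)` for `p = r * exp (i s t)` on the circle of
radius `r < 1`, run through in the positive (`s = 1`) or negative (`s = -1`) direction. -/
lemma integral_kernel {r : ℝ} (hr0 : 0 ≤ r) (hr : r < 1) {s : ℤ} (hs : s = 1 ∨ s = -1) (n : ℤ) :
    ∫ t in (0:ℝ)..(2 * Real.pi),
        (1 + r * Complex.exp (Complex.I * s * t)) / (1 - r * Complex.exp (Complex.I * s * t))
          * Complex.exp (-Complex.I * n * t)
      = 2 * Real.pi * ((1 + s * (Int.sign n : ℂ)) * (r : ℂ) ^ n.natAbs) := by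
  have hexp : ∀ (m : ℤ) (t : ℝ), ‖Complex.exp (Complex.I * m * t)‖ = 1 := by
    intro m t
    rw [Complex.norm_exp]; simp
  have hexp' : ∀ t : ℝ, ‖Complex.exp (-Complex.I * n * t)‖ = 1 := by
    intro t
    rw [Complex.norm_exp]; simp
  have hnorm : ∀ t : ℝ, ‖(r : ℂ) * Complex.exp (Complex.I * s * t)‖ = r := by
    intro t
    rw [norm_mul, hexp]; simp [abs_of_nonneg hr0]
  have hsum := intervalIntegral.hasSum_integral_of_dominated_convergence
    (μ := volume) (a := 0) (b := 2 * Real.pi)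
    (F := fun (k : ℕ) (t : ℝ) => (if k = 0 then 1 else 2 : ℂ)
      * (r * Complex.exp (Complex.I * s * t)) ^ k * Complex.exp (-Complex.I * n * t))
    (f := fun t : ℝ => (1 + r * Complex.exp (Complex.I * s * t))
      / (1 - r * Complex.exp (Complex.I * s * t)) * Complex.exp (-Complex.I * n * t))
    (fun k _ => 2 * r ^ k)
    (fun k => (Continuous.aestronglyMeasurable (by fun_prop)))
    (fun k => Eventually.of_forall fun t _ => by
      rw [norm_mul, norm_mul, norm_pow, hnorm, hexp', mul_one]
      gcongr
      split_ifs <;> simp)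
    (Eventually.of_forall fun t _ => (summable_geometric_of_lt_one hr0 hr).mul_left 2)
    (by simp)
    (Eventually.of_forall fun t _ =>
      (hasSum_one_add_div_one_sub (by rw [hnorm]; exact hr)).mul_right _)
  have hterm : ∀ k : ℕ, (∫ t in (0:ℝ)..(2 * Real.pi), (if k = 0 then 1 else 2 : ℂ)
      * (r * Complex.exp (Complex.I * s * t)) ^ k * Complex.exp (-Complex.I * n * t))
      = (if k = 0 then 1 else 2 : ℂ) * r ^ k * if s * k - n = 0 then (2 * Real.pi : ℂ) else 0 := by
    intro k
    rw [← integral_exp_int, ← intervalIntegral.integral_const_mul]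
    congr 1
    ext t
    rw [mul_pow, ← Complex.exp_nat_mul, mul_assoc, mul_assoc, ← Complex.exp_add, ← mul_assoc]
    congr 2
    push_cast
    ring
  simp only [hterm] at hsum
  -- As `s = ±1`, a natural `k` with `s * k = n` can only be `|n|`.
  rw [hsum.unique (hasSum_single n.natAbs fun k hk => ?_)]
  · rcases lt_trichotomy n 0 with h | h | h
    · have h1 : (n.natAbs : ℤ) = -n := by omega
      have h2 : n.natAbs ≠ 0 := by omega
      rw [h1, Int.sign_eq_neg_one_of_neg h]
      rcases hs with rfl | rfl
      · rw [if_neg (show ¬ (1 * -n - n = 0) by omega)]; simp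
      · rw [if_pos (show (-1 * -n - n = 0) by omega)]; simp [h2]; ring
    · subst h; simp
    · have h1 : (n.natAbs : ℤ) = n := by omega
      have h2 : n.natAbs ≠ 0 := by omega
      rw [h1, Int.sign_eq_one_of_pos h]
      rcases hs with rfl | rfl
      · rw [if_pos (show (1 * n - n = 0) by omega)]; simp [h2]; ring
      · rw [if_neg (show ¬ (-1 * n - n = 0) by omega)]; simp
  · have hk' : s * (k : ℤ) - n ≠ 0 := by rcases hs with rfl | rfl <;> omega
    rw [if_neg hk', mul_zero]

/-- The cotangent as a Möbius function of `p = exp (s (l + i t))`, for either sign `s`. -/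
lemma cot_eq_kernel (l : ℝ) {s : ℤ} (hs : s = 1 ∨ s = -1) (t : ℝ) :
    Complex.cot (((t : ℂ) - Complex.I * l) / 2) = -Complex.I * s *
      ((1 + Real.exp (s * l) * Complex.exp (Complex.I * s * t))
        / (1 - Real.exp (s * l) * Complex.exp (Complex.I * s * t))) := by
  have hI : 2 * Complex.I * (((t : ℂ) - Complex.I * l) / 2) = l + Complex.I * t := by
    linear_combination (-(l : ℂ)) * Complex.I_sq
  have hp : ((Real.exp (s * l) : ℝ) : ℂ) * Complex.exp (Complex.I * s * t)
      = Complex.exp (s * (l + Complex.I * t)) := by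
    rw [Complex.ofReal_exp, ← Complex.exp_add]
    congr 1
    push_cast
    ring
  rw [Complex.cot_eq_exp_ratio, hI, hp]
  rcases hs with rfl | rfl
  · simp only [Int.cast_one, one_mul, mul_one]
    rw [div_mul_eq_div_div_swap, div_eq_mul_inv _ Complex.I, Complex.inv_I, add_comm]
    ring
  · simp only [Int.cast_neg, Int.cast_one, neg_mul, one_mul, Complex.exp_neg]
    have hq := Complex.exp_ne_zero (l + Complex.I * t)
    set q := Complex.exp (l + Complex.I * t)
    have h1 : (1 + q⁻¹) / (1 - q⁻¹) = (q + 1) / (q - 1) := by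
      rw [← mul_div_mul_left (1 + q⁻¹) (1 - q⁻¹) hq]
      congr 1 <;> field_simp
    rw [h1, div_mul_eq_div_div_swap, div_eq_mul_inv _ Complex.I, Complex.inv_I,
      ← neg_sub q 1, div_neg]
    ring

theorem stmt6 (l : ℝ) (hl : l ≠ 0) (n : ℤ) :
    (1 / (2 * Real.pi) : ℂ) * ∫ t in (0:ℝ)..(2 * Real.pi),
        Complex.cot (((t : ℂ) - Complex.I * l) / 2) * Complex.exp (-Complex.I * n * t)
      = Complex.I * ((Real.sign l : ℂ) - (Int.sign n : ℂ))
        * Real.exp (-|(n : ℝ) * l|) := by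
  obtain ⟨s, hs, hsign, habs⟩ :
      ∃ s : ℤ, (s = 1 ∨ s = -1) ∧ Real.sign l = -s ∧ s * l = -|l| := by
    rcases lt_or_gt_of_ne hl with h | h
    · exact ⟨1, Or.inl rfl, by simp [Real.sign_of_neg h], by simp [abs_of_neg h]⟩
    · exact ⟨-1, Or.inr rfl, by simp [Real.sign_of_pos h], by simp [abs_of_pos h]⟩
  have hlt : Real.exp (s * l) < 1 := by
    rw [habs, Real.exp_lt_one_iff]
    simpa using hl
  have hpow : Real.exp (-|(n : ℝ) * l|) = Real.exp (s * l) ^ n.natAbs := by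
    rw [← Real.exp_nat_mul, habs, abs_mul, Nat.cast_natAbs, Int.cast_abs]
    ring_nf
  have hss : (s : ℂ) * s = 1 := by rcases hs with rfl | rfl <;> simp
  have hpi : (Real.pi : ℂ) ≠ 0 := by exact_mod_cast Real.pi_ne_zero
  simp_rw [cot_eq_kernel l hs, mul_assoc (-Complex.I * (s : ℂ))]
  rw [intervalIntegral.integral_const_mul, integral_kernel (Real.exp_pos _).le hlt hs,
    hsign, hpow, ← mul_assoc, mul_left_comm, ← mul_assoc]
  push_cast
  field_simp
  linear_combination (-(Int.sign n : ℂ)) * hss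
end

section
/- Let f : ℝ → ℂ be a 2π-periodic function that is integrable on [0, 2π], and let λ be a nonzero real number. Then the Cauchy principal value L_λ(f) = lim_{a→∞} ∫_{-a}^{a} f(t)/(t + iλ) dt equals iπ·Σ_{n∈ℤ} (sgn(n) − sgn(λ))·e^{−|nλ|}·C_n(f), where C_n(f) = (1/(2π))∫₀^{2π} f(t) e^{−int} dt are the exponential Fourier coefficients of f and sgn(x) is the sign of x for x ≠ 0 with sgn(0) = 0. -/
/-!
Fold the interval `[-2πN, 2πN]` onto one period: with `z = t + i l`, the integral becomes
`∫₀^{2π} f(t) ∑_{k < N} (1 / (z + 2πk) + 1 / (z - 2π(k + 1))) dt`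
(`integral_eq_sum_pvPair`). The paired terms are `O(1 / k²)` uniformly in `t` (`norm_pvPair_le`)
and sum to `cot (z / 2) / 2` by the partial fraction expansion of the cotangent
(`hasSum_pvPair`), so dominated convergence gives the limit `∫₀^{2π} f(t) cot (z / 2) / 2 dt` along
`a = 2πN`. For general `a` the two incomplete periods at the ends contribute `O(1 / a)`
(`tendsto_of_period`).

On the other hand, since `l ≠ 0`, the function `-i cot (z / 2)` has the absolutely convergent Fourier
expansion `∑ₙ (sgn n - sgn l) e^{-|n l|} e^{-int}`, a geometric series in `e^{iz}` when `0 < l`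
(`hasSum_pvCoeff`). Integrating it termwise against `f` produces the Fourier coefficients of `f`.
-/

open MeasureTheory Filter Topology

/-- The coefficients `(sgn n - sgn l) e^{-|n l|}`. -/
noncomputable def pvCoeff (l : ℝ) (n : ℤ) : ℂ :=
  ((Int.sign n : ℂ) - (Real.sign l : ℂ)) * Real.exp (-|(n : ℝ) * l|)

/-- The sum of the kernels `1 / (z + 2πj)` for `j = k` and `j = -(k + 1)`. -/
noncomputable def pvPair (z : ℂ) (k : ℕ) : ℂ :=
  1 / (z + 2 * Real.pi * k) + 1 / (z - 2 * Real.pi * (k + 1))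

lemma hasSum_of_forall_eq {ι : Type*} {u v : ι → ℂ} {S : ℂ} (h : ∀ i, u i = v i)
    (hv : HasSum v S) : HasSum u S := by
  rwa [funext h]

/-- With `q = e^{i(t + i l)}`, of modulus `e^{-l} < 1`, the term `n = 0` is `-1`, the terms `n > 0`
vanish and the term `n = -m < 0` is `-2 q ^ m`; the sum is `-(1 + q) / (1 - q)`. -/
lemma hasSum_pvCoeff_of_pos (l : ℝ) (hl : 0 < l) (t : ℝ) :
    HasSum (fun n : ℤ => pvCoeff l n * Complex.exp (-Complex.I * n * t))
      (-Complex.I * Complex.cot (((t : ℂ) + Complex.I * l) / 2)) := by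
  set q : ℂ := Complex.exp (Complex.I * ((t : ℂ) + Complex.I * l)) with hq
  have hqn : ‖q‖ < 1 := by
    rw [hq, Complex.norm_exp]
    simpa using hl
  have hq1 : q - 1 ≠ 0 := by
    intro h
    rw [sub_eq_zero.mp h] at hqn
    simp at hqn
  have hpos : HasSum (fun n : ℕ => pvCoeff l (n : ℤ) * Complex.exp (-Complex.I * (n : ℤ) * t))
      (-1) := by
    refine hasSum_of_forall_eq (fun n => ?_) (hasSum_ite_eq (0 : ℕ) (-1 : ℂ))
    rcases Nat.eq_zero_or_pos n with rfl | hn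
    · simp [pvCoeff, Real.sign_of_pos hl]
    · have h1 : Int.sign (n : ℤ) = 1 := Int.sign_eq_one_of_pos (by exact_mod_cast hn)
      simp [pvCoeff, Real.sign_of_pos hl, hn.ne', h1]
  have hneg : HasSum (fun n : ℕ => pvCoeff l (-((n : ℤ) + 1)) *
      Complex.exp (-Complex.I * ((-((n : ℤ) + 1) : ℤ) : ℂ) * t)) (-2 * q * (1 - q)⁻¹) := by
    have h := (hasSum_geometric_of_norm_lt_one hqn).mul_left (-2 * q)
    refine hasSum_of_forall_eq (fun n => ?_) h
    have h1 : Int.sign (-((n : ℤ) + 1)) = -1 := Int.sign_eq_neg_one_of_neg (by lia)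
    have h2 : |((-((n : ℤ) + 1) : ℤ) : ℝ) * l| = (n + 1) * l := by
      push_cast
      rw [abs_mul, abs_neg, abs_of_pos hl, abs_of_pos (by positivity)]
    have h3 : q * q ^ n = Complex.exp (-((n + 1) * l)) *
        Complex.exp (Complex.I * (n + 1) * t) := by
      rw [hq, ← Complex.exp_nat_mul, ← Complex.exp_add, ← Complex.exp_add]
      congr 1
      linear_combination (l * (n + 1) : ℂ) * Complex.I_sq
    rw [mul_assoc (-2 : ℂ), h3, pvCoeff, h1, h2, Real.sign_of_pos hl]
    push_cast
    have h4 : -Complex.I * (-((n : ℂ) + 1)) * t = Complex.I * (n + 1) * t := by ring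
    rw [h4]
    ring
  have h := HasSum.of_nat_of_neg_add_one
    (f := fun n : ℤ => pvCoeff l n * Complex.exp (-Complex.I * n * t)) hpos hneg
  have h6 : Complex.exp (2 * Complex.I * (((t : ℂ) + Complex.I * l) / 2)) = q := by
    rw [hq]; congr 1; ring
  have hq1' : 1 - q ≠ 0 := by
    intro h; apply hq1; linear_combination -h
  have h7 : -Complex.I * Complex.cot (((t : ℂ) + Complex.I * l) / 2) =
      -1 + -2 * q * (1 - q)⁻¹ := by
    rw [Complex.cot_eq_exp_ratio, h6]
    have := Complex.I_ne_zero
    field_simp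
    ring
  rw [h7]
  exact h

/-- For `l < 0` the substitution `(n, t, l) ↦ (-n, -t, -l)` changes the sign of both sides, which
reduces the expansion to the case `0 < l`. -/
lemma hasSum_pvCoeff (l : ℝ) (hl : l ≠ 0) (t : ℝ) :
    HasSum (fun n : ℤ => pvCoeff l n * Complex.exp (-Complex.I * n * t))
      (-Complex.I * Complex.cot (((t : ℂ) + Complex.I * l) / 2)) := by
  rcases lt_or_gt_of_ne hl with h | h
  · have h1 := hasSum_pvCoeff_of_pos (-l) (by linarith) (-t)
    have h2 := ((Equiv.neg ℤ).hasSum_iff.mpr h1).neg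
    have h3 : -Complex.I * Complex.cot (((t : ℂ) + Complex.I * l) / 2) =
        -(-Complex.I * Complex.cot ((((-t : ℝ) : ℂ) + Complex.I * ((-l : ℝ) : ℂ)) / 2)) := by
      have : (((-t : ℝ) : ℂ) + Complex.I * ((-l : ℝ) : ℂ)) / 2
          = -(((t : ℂ) + Complex.I * l) / 2) := by push_cast; ring
      rw [this, Complex.cot, Complex.cot, Complex.cos_neg, Complex.sin_neg]
      simp only [div_neg, mul_neg, neg_neg]
    rw [h3]
    refine hasSum_of_forall_eq (fun n => ?_) h2
    · simp only [Function.comp, Equiv.neg_apply, pvCoeff, Real.sign_of_neg h,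
        Real.sign_of_pos (neg_pos.mpr h), Int.sign_neg]
      push_cast
      simp only [mul_neg, neg_mul]
      ring_nf
  · exact hasSum_pvCoeff_of_pos l h t

lemma ne_zero_of_im (l : ℝ) (hl : l ≠ 0) (x : ℝ) : (x : ℂ) + Complex.I * l ≠ 0 := by
  intro h
  apply hl
  simpa using congrArg Complex.im h

lemma le_norm_kernel (l x : ℝ) : |x| ≤ ‖(x : ℂ) + Complex.I * l‖ := by
  simpa using Complex.abs_re_le_norm ((x : ℂ) + Complex.I * l)

lemma le_norm_kernel' (l x : ℝ) : |l| ≤ ‖(x : ℂ) + Complex.I * l‖ := by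
  simpa using Complex.abs_im_le_norm ((x : ℂ) + Complex.I * l)

/-- A summable bound for `pvPair`, uniform for `t ∈ [0, 2π]`. The index `k = 0` is governed by
`|l|` because there either denominator may have vanishing real part. -/
noncomputable def pvBound (l : ℝ) (k : ℕ) : ℝ :=
  (2 * Real.pi + 2 * |l|) * ((if k = 0 then 1 / l ^ 2 else 0) + 1 / (k : ℝ) ^ 2)

lemma summable_pvBound (l : ℝ) : Summable (pvBound l) := by
  apply Summable.mul_left
  apply Summable.add
  · exact (hasSum_ite_eq (0 : ℕ) (1 / l ^ 2)).summable
  · exact Real.summable_one_div_nat_pow.mpr (by norm_num)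

lemma norm_pvPair_le (l : ℝ) (hl : l ≠ 0) (t : ℝ) (ht : t ∈ Set.Icc 0 (2 * Real.pi)) (k : ℕ) :
    ‖pvPair ((t : ℂ) + Complex.I * l) k‖ ≤ pvBound l k := by
  obtain ⟨h0, h1⟩ := ht
  have hpi := Real.pi_gt_three
  have hA : (t : ℂ) + Complex.I * l + 2 * Real.pi * k
      = ((t + 2 * Real.pi * k : ℝ) : ℂ) + Complex.I * l := by push_cast; ring
  have hB : (t : ℂ) + Complex.I * l - 2 * Real.pi * (k + 1)
      = ((t - 2 * Real.pi * (k + 1) : ℝ) : ℂ) + Complex.I * l := by push_cast; ring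
  have hA0 := ne_zero_of_im l hl (t + 2 * Real.pi * k)
  have hB0 := ne_zero_of_im l hl (t - 2 * Real.pi * (k + 1))
  have hA1 := le_norm_kernel l (t + 2 * Real.pi * k)
  have hB1 := le_norm_kernel l (t - 2 * Real.pi * (k + 1))
  have hA2 := le_norm_kernel' l (t + 2 * Real.pi * k)
  have hB2 := le_norm_kernel' l (t - 2 * Real.pi * (k + 1))
  rw [← hA] at hA0 hA1 hA2
  rw [← hB] at hB0 hB1 hB2
  have hsum : pvPair ((t : ℂ) + Complex.I * l) k =
      (((2 * t - 2 * Real.pi : ℝ) : ℂ) + Complex.I * ((2 * l : ℝ) : ℂ)) /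
      (((t : ℂ) + Complex.I * l + 2 * Real.pi * k) *
        ((t : ℂ) + Complex.I * l - 2 * Real.pi * (k + 1))) := by
    rw [pvPair, div_add_div _ _ hA0 hB0]
    congr 1
    push_cast
    ring
  have hnum : ‖((2 * t - 2 * Real.pi : ℝ) : ℂ) + Complex.I * ((2 * l : ℝ) : ℂ)‖
      ≤ 2 * Real.pi + 2 * |l| := by
    refine (norm_add_le _ _).trans ?_
    rw [norm_mul, Complex.norm_I, one_mul, Complex.norm_real, Complex.norm_real, Real.norm_eq_abs,
      Real.norm_eq_abs, abs_mul, abs_two]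
    gcongr
    rw [abs_le]; constructor <;> linarith
  rw [hsum, norm_div, norm_mul, pvBound, div_eq_mul_inv, ← one_div]
  refine mul_le_mul hnum ?_ (by positivity) (by positivity)
  -- For `k ≥ 1` both real parts are at least `k` in absolute value; for `k = 0` use `|l|`.
  rcases Nat.eq_zero_or_pos k with rfl | hk
  · have : l ^ 2 = |l| * |l| := by rw [abs_mul_abs_self, sq]
    simp only [if_true, Nat.cast_zero, ne_eq, OfNat.ofNat_ne_zero, not_false_eq_true, zero_pow,
      div_zero, add_zero] at *
    rw [this]
    have : 0 < |l| := abs_pos.mpr hl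
    gcongr
  · have hk' : (1 : ℝ) ≤ k := by exact_mod_cast hk
    have e1 : (k : ℝ) ≤ |t + 2 * Real.pi * k| := by
      refine le_trans ?_ (le_abs_self _)
      nlinarith
    have e2 : (k : ℝ) ≤ |t - 2 * Real.pi * (k + 1)| := by
      refine le_trans ?_ (neg_le_abs _)
      nlinarith
    simp only [hk.ne', if_false, zero_add]
    rw [sq]
    have := e1.trans hA1
    have := e2.trans hB1
    gcongr

/-- A rearrangement of the partial fraction expansion of the cotangent: pairing `k` with `-(k+1)`
instead of `k` with `-k` changes the `N`-th partial sum by `1 / (z + 2πN)`, which tends to zero. -/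
lemma hasSum_pvPair (l : ℝ) (hl : l ≠ 0) (t : ℝ) (ht : t ∈ Set.Icc 0 (2 * Real.pi)) :
    HasSum (pvPair ((t : ℂ) + Complex.I * l))
      (Complex.cot (((t : ℂ) + Complex.I * l) / 2) / 2) := by
  have hs : Summable (pvPair ((t : ℂ) + Complex.I * l)) :=
    Summable.of_norm_bounded (summable_pvBound l) (norm_pvPair_le l hl t ht)
  rw [hs.hasSum_iff_tendsto_nat]
  set z : ℂ := (t : ℂ) + Complex.I * l with hz
  have hpi : (Real.pi : ℂ) ≠ 0 := by exact_mod_cast Real.pi_ne_zero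
  set x : ℂ := z / (2 * Real.pi) with hx
  have hzx : z = 2 * Real.pi * x := by rw [hx]; field_simp
  have hadd : ∀ y : ℝ, z + y ≠ 0 := by
    intro y
    have := ne_zero_of_im l hl (t + y)
    convert this using 1
    rw [hz]; push_cast; ring
  have hxadd : ∀ y : ℝ, x + y ≠ 0 := by
    intro y h
    apply hadd (2 * Real.pi * y)
    rw [hzx]; push_cast
    linear_combination (2 * Real.pi : ℂ) * h
  have hxZ : x ∈ Complex.integerComplement := by
    rintro ⟨n, hn⟩
    apply hxadd (-n)
    rw [← hn]; push_cast; ring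
  have hseries : Tendsto (fun N : ℕ => ∑ n ∈ Finset.range N,
      (1 / (x - (n + 1)) + 1 / (x + (n + 1)))) atTop
      (𝓝 (Real.pi * Complex.cot (Real.pi * x) - 1 / x)) := tendsto_logDeriv_euler_cot_sub hxZ
  have hpart : ∀ N : ℕ, ∑ k ∈ Finset.range N, pvPair z k =
      (1 / x + ∑ n ∈ Finset.range N, (1 / (x - (n + 1)) + 1 / (x + (n + 1))) - 1 / (x + N))
        / (2 * Real.pi) := by
    intro N
    induction N with
    | zero => simp
    | succ N ih =>
      rw [Finset.sum_range_succ, Finset.sum_range_succ, ih, pvPair, hzx]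
      have a1 : x + N ≠ 0 := by simpa using hxadd N
      have a2 : x + (N + 1) ≠ 0 := by simpa using hxadd (N + 1)
      have a3 : x - (N + 1) ≠ 0 := by
        have := hxadd (-(N + 1)); push_cast at this; rwa [← sub_eq_add_neg] at this
      have b1 : 2 * (Real.pi : ℂ) * x + 2 * Real.pi * N = 2 * Real.pi * (x + N) := by ring
      have b2 : 2 * (Real.pi : ℂ) * x - 2 * Real.pi * (N + 1) = 2 * Real.pi * (x - (N + 1)) := by
        ring
      rw [b1, b2]
      push_cast
      field_simp
      ring
  have hlast : Tendsto (fun N : ℕ => 1 / (x + N)) atTop (𝓝 0) := by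
    simp_rw [one_div]
    refine tendsto_inv₀_cobounded.comp ?_
    refine (tendsto_const_add_cobounded x).comp ?_
    rw [← tendsto_norm_atTop_iff_cobounded]
    simpa using tendsto_natCast_atTop_atTop (R := ℝ)
  have hlim := ((hseries.const_add (1 / x)).sub hlast).div_const (2 * (Real.pi : ℂ))
  simp_rw [hpart]
  convert hlim using 2
  have hw : (Real.pi : ℂ) * x = z / 2 := by rw [hzx]; ring
  rw [hw]
  field_simp
  ring

lemma kernel_integrable (f : ℝ → ℂ) (hf : ∀ a b, IntervalIntegrable f volume a b)
    (l : ℝ) (hl : l ≠ 0) (a b : ℝ) :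
    IntervalIntegrable (fun t : ℝ => f t / ((t : ℂ) + Complex.I * l)) volume a b := by
  simp_rw [div_eq_mul_inv]
  refine (hf a b).mul_continuousOn (Continuous.continuousOn ?_)
  exact Continuous.inv₀ (by fun_prop) (ne_zero_of_im l hl)

lemma continuous_pvPair (l : ℝ) (hl : l ≠ 0) (k : ℕ) :
    Continuous (fun t : ℝ => pvPair ((t : ℂ) + Complex.I * l) k) := by
  unfold pvPair
  refine Continuous.add ?_ ?_
  · refine Continuous.div continuous_const (by fun_prop) fun t => ?_
    convert ne_zero_of_im l hl (t + 2 * Real.pi * k) using 1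
    push_cast; ring
  · refine Continuous.div continuous_const (by fun_prop) fun t => ?_
    convert ne_zero_of_im l hl (t - 2 * Real.pi * (k + 1)) using 1
    push_cast; ring

/-- Folding `[-2πN, 2πN]` onto one period. -/
lemma integral_eq_sum_pvPair (f : ℝ → ℂ) (hper : Function.Periodic f (2 * Real.pi))
    (hf : ∀ a b, IntervalIntegrable f volume a b) (l : ℝ) (hl : l ≠ 0) (N : ℕ) :
    ∫ t in (-(2 * Real.pi * N))..(2 * Real.pi * N), f t / ((t : ℂ) + Complex.I * l) =
      ∑ k ∈ Finset.range N, ∫ t in (0 : ℝ)..(2 * Real.pi),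
        f t * pvPair ((t : ℂ) + Complex.I * l) k := by
  have hg := kernel_integrable f hf l hl
  induction N with
  | zero => simp
  | succ N ih =>
    rw [Finset.sum_range_succ, ← ih,
      ← intervalIntegral.integral_add_adjacent_intervals (hg _ (-(2 * Real.pi * N))) (hg _ _),
      ← intervalIntegral.integral_add_adjacent_intervals (hg (-(2 * Real.pi * N)) (2 * Real.pi * N))
        (hg _ _)]
    have hR : ∫ t in (2 * Real.pi * N)..(2 * Real.pi * (N + 1 : ℕ)),
        f t / ((t : ℂ) + Complex.I * l) =
        ∫ t in (0 : ℝ)..(2 * Real.pi), f t * (1 / ((t : ℂ) + Complex.I * l + 2 * Real.pi * N)) := by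
      have := intervalIntegral.integral_comp_add_right (a := 0) (b := 2 * Real.pi)
        (fun t : ℝ => f t / ((t : ℂ) + Complex.I * l)) (2 * Real.pi * N)
      rw [show (2 * Real.pi * (N + 1 : ℕ)) = 2 * Real.pi + 2 * Real.pi * N by push_cast; ring,
        show (2 * Real.pi * N : ℝ) = 0 + 2 * Real.pi * N by ring]
      rw [zero_add] at this ⊢
      rw [← this]
      refine intervalIntegral.integral_congr fun t _ => ?_
      have hp : f (t + 2 * Real.pi * N) = f t := by
        have := hper.nat_mul N t
        rwa [mul_comm] at this
      simp only [hp]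
      push_cast
      rw [mul_one_div]
      congr 1
      ring
    have hL : ∫ t in (-(2 * Real.pi * (N + 1 : ℕ)))..(-(2 * Real.pi * N)),
        f t / ((t : ℂ) + Complex.I * l) =
        ∫ t in (0 : ℝ)..(2 * Real.pi),
          f t * (1 / ((t : ℂ) + Complex.I * l - 2 * Real.pi * (N + 1))) := by
      have := intervalIntegral.integral_comp_sub_right (a := 0) (b := 2 * Real.pi)
        (fun t : ℝ => f t / ((t : ℂ) + Complex.I * l)) (2 * Real.pi * (N + 1 : ℕ))
      rw [show -(2 * Real.pi * N : ℝ) = 2 * Real.pi - 2 * Real.pi * (N + 1 : ℕ) by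
        push_cast; ring]
      rw [zero_sub] at this
      rw [← this]
      refine intervalIntegral.integral_congr fun t _ => ?_
      have hp : f (t - 2 * Real.pi * (N + 1 : ℕ)) = f t := by
        have := hper.sub_nat_mul_eq (x := t) (N + 1)
        rwa [mul_comm] at this
      simp only [hp]
      push_cast
      rw [mul_one_div]
      congr 1
      ring
    have hsplit : ∫ t in (0 : ℝ)..(2 * Real.pi), f t * pvPair ((t : ℂ) + Complex.I * l) N =
        (∫ t in (0 : ℝ)..(2 * Real.pi), f t * (1 / ((t : ℂ) + Complex.I * l + 2 * Real.pi * N))) +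
        ∫ t in (0 : ℝ)..(2 * Real.pi),
          f t * (1 / ((t : ℂ) + Complex.I * l - 2 * Real.pi * (N + 1))) := by
      rw [← intervalIntegral.integral_add]
      · simp only [pvPair, mul_add]
      · refine (hf _ _).mul_continuousOn (Continuous.continuousOn ?_)
        refine Continuous.div continuous_const (by fun_prop) fun t => ?_
        convert ne_zero_of_im l hl (t + 2 * Real.pi * N) using 1
        push_cast; ring
      · refine (hf _ _).mul_continuousOn (Continuous.continuousOn ?_)
        refine Continuous.div continuous_const (by fun_prop) fun t => ?_
        convert ne_zero_of_im l hl (t - 2 * Real.pi * (N + 1)) using 1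
        push_cast; ring
    rw [hR, hL, hsplit]
    ring

/-- Away from the origin an incomplete period contributes at most `‖f‖₁ / R`. -/
lemma norm_integral_remainder_le (f : ℝ → ℂ) (hper : Function.Periodic f (2 * Real.pi))
    (hf : ∀ a b, IntervalIntegrable f volume a b) (l : ℝ) (x y R : ℝ)
    (hxy : x ≤ y) (hyx : y ≤ x + 2 * Real.pi) (hR : 0 < R)
    (habs : ∀ t ∈ Set.Ioc x y, R ≤ |t|) :
    ‖∫ t in x..y, f t / ((t : ℂ) + Complex.I * l)‖ ≤
      (∫ t in (0 : ℝ)..(2 * Real.pi), ‖f t‖) / R := by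
  have hpn : Function.Periodic (fun t => ‖f t‖) (2 * Real.pi) := fun t => by simp only [hper t]
  calc ‖∫ t in x..y, f t / ((t : ℂ) + Complex.I * l)‖
      ≤ ∫ t in x..y, ‖f t‖ / R := by
        refine intervalIntegral.norm_integral_le_of_norm_le hxy ?_ ((hf x y).norm.div_const R)
        refine Eventually.of_forall fun t ht => ?_
        rw [norm_div]
        have := (habs t ht).trans (le_norm_kernel l t)
        gcongr
    _ = (∫ t in x..y, ‖f t‖) / R := intervalIntegral.integral_div _ _
    _ ≤ (∫ t in x..(x + 2 * Real.pi), ‖f t‖) / R := by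
        gcongr
        exact intervalIntegral.integral_mono_interval le_rfl hxy hyx
          (Eventually.of_forall fun t => norm_nonneg _) (hf _ _).norm
    _ = (∫ t in (0 : ℝ)..(2 * Real.pi), ‖f t‖) / R := by
        rw [hpn.intervalIntegral_add_eq x 0, zero_add]

lemma tendsto_of_period (f : ℝ → ℂ) (hper : Function.Periodic f (2 * Real.pi))
    (hf : ∀ a b, IntervalIntegrable f volume a b) (l : ℝ) (hl : l ≠ 0) (S : ℂ)
    (hS : Tendsto (fun N : ℕ => ∫ t in (-(2 * Real.pi * N))..(2 * Real.pi * N),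
      f t / ((t : ℂ) + Complex.I * l)) atTop (𝓝 S)) :
    Tendsto (fun a : ℝ => ∫ t in (-a : ℝ)..a, f t / ((t : ℂ) + Complex.I * l)) atTop (𝓝 S) := by
  have hg := kernel_integrable f hf l hl
  have hT : (0 : ℝ) < 2 * Real.pi := by positivity
  set M : ℝ := ∫ t in (0 : ℝ)..(2 * Real.pi), ‖f t‖ with hM
  have hfl : Tendsto (fun a : ℝ => ⌊a / (2 * Real.pi)⌋₊) atTop atTop :=
    tendsto_nat_floor_atTop.comp (tendsto_id.atTop_div_const hT)
  have hmain := hS.comp hfl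
  have hz : Tendsto (fun a : ℝ => 2 * (M / (2 * Real.pi * (⌊a / (2 * Real.pi)⌋₊ : ℕ)))) atTop
      (𝓝 0) := by
    have h1 : Tendsto (fun a : ℝ => 2 * Real.pi * ((⌊a / (2 * Real.pi)⌋₊ : ℕ) : ℝ)) atTop atTop :=
      (tendsto_natCast_atTop_atTop.comp hfl).const_mul_atTop hT
    simpa using (h1.const_div_atTop M).const_mul 2
  have hdiff : Tendsto (fun a : ℝ => (∫ t in (-a : ℝ)..a, f t / ((t : ℂ) + Complex.I * l)) -
      ∫ t in (-(2 * Real.pi * (⌊a / (2 * Real.pi)⌋₊ : ℕ)))..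
        (2 * Real.pi * (⌊a / (2 * Real.pi)⌋₊ : ℕ)), f t / ((t : ℂ) + Complex.I * l))
      atTop (𝓝 0) := by
    refine squeeze_zero_norm' ?_ hz
    filter_upwards [eventually_ge_atTop (2 * Real.pi)] with a ha
    set N := ⌊a / (2 * Real.pi)⌋₊ with hN
    have ha1 : 1 ≤ a / (2 * Real.pi) := by rwa [one_le_div hT]
    have hN1 : 1 ≤ N := Nat.le_floor (by simpa using ha1)
    have hle : 2 * Real.pi * N ≤ a := by
      have := Nat.floor_le (zero_le_one.trans ha1)
      rw [le_div_iff₀ hT] at this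
      linarith
    have hlt : a ≤ 2 * Real.pi * N + 2 * Real.pi := by
      have := (Nat.lt_floor_add_one (a / (2 * Real.pi))).le
      rw [div_le_iff₀ hT] at this
      linarith
    have hpos : 0 < 2 * Real.pi * (N : ℝ) := by
      have : (0 : ℝ) < N := by exact_mod_cast hN1
      positivity
    have e1 := norm_integral_remainder_le f hper hf l (2 * Real.pi * N) a (2 * Real.pi * N) hle hlt
      hpos (fun t ht => ht.1.le.trans (le_abs_self t))
    have e2 := norm_integral_remainder_le f hper hf l (-a) (-(2 * Real.pi * N)) (2 * Real.pi * N)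
      (by linarith) (by linarith) hpos
      (fun t ht => le_trans (by linarith [ht.2]) (neg_le_abs t))
    rw [← intervalIntegral.integral_add_adjacent_intervals (hg (-a) (-(2 * Real.pi * N))) (hg _ a),
      ← intervalIntegral.integral_add_adjacent_intervals (hg (-(2 * Real.pi * N)) (2 * Real.pi * N))
        (hg _ a)]
    rw [add_sub_assoc, add_sub_cancel_left]
    refine (norm_add_le _ _).trans ?_
    linarith
  simpa using hdiff.add hmain

theorem stmt7 (f : ℝ → ℂ) (hper : ∀ t : ℝ, f (t + 2 * Real.pi) = f t)
    (hint : IntervalIntegrable f volume 0 (2 * Real.pi))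
    (l : ℝ) (hl : l ≠ 0) :
    Tendsto (fun a : ℝ => ∫ t in (-a : ℝ)..a, f t / ((t : ℂ) + Complex.I * l)) atTop
      (𝓝 (Complex.I * Real.pi * ∑' n : ℤ,
        ((Int.sign n : ℂ) - (Real.sign l : ℂ)) * Real.exp (-|(n : ℝ) * l|)
          * ((1 / (2 * Real.pi) : ℂ) *
            ∫ t in (0:ℝ)..(2 * Real.pi), f t * Complex.exp (-Complex.I * n * t)))) := by
  have hT : (0 : ℝ) < 2 * Real.pi := by positivity
  have hp : Function.Periodic f (2 * Real.pi) := hper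
  have hf : ∀ a b, IntervalIntegrable f volume a b :=
    fun a b => hp.intervalIntegrable hT.ne' (t := 0) (by simpa using hint) a b
  have hpi : (Real.pi : ℂ) ≠ 0 := by exact_mod_cast Real.pi_ne_zero
  have hmeas : AEStronglyMeasurable f (volume.restrict (Set.uIoc 0 (2 * Real.pi))) :=
    (intervalIntegrable_iff.mp hint).aestronglyMeasurable
  have hmem : ∀ t ∈ Set.uIoc 0 (2 * Real.pi), t ∈ Set.Icc 0 (2 * Real.pi) := fun t ht => by
    rw [Set.uIoc_of_le hT.le] at ht
    exact Set.Ioc_subset_Icc_self ht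
  have hA : HasSum (fun k : ℕ => ∫ t in (0 : ℝ)..(2 * Real.pi),
      f t * pvPair ((t : ℂ) + Complex.I * l) k)
      (∫ t in (0 : ℝ)..(2 * Real.pi), f t * (Complex.cot (((t : ℂ) + Complex.I * l) / 2) / 2)) := by
    refine intervalIntegral.hasSum_integral_of_dominated_convergence
      (fun k t => ‖f t‖ * pvBound l k) (fun k => ?_) (fun k => ?_) ?_ ?_ ?_
    · exact hmeas.mul (continuous_pvPair l hl k).aestronglyMeasurable
    · refine Eventually.of_forall fun t ht => ?_
      rw [norm_mul]
      exact mul_le_mul_of_nonneg_left (norm_pvPair_le l hl t (hmem t ht) k) (norm_nonneg _)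
    · exact Eventually.of_forall fun t _ => (summable_pvBound l).mul_left _
    · simp_rw [tsum_mul_left]
      exact hint.norm.mul_const _
    · exact Eventually.of_forall fun t ht => (hasSum_pvPair l hl t (hmem t ht)).mul_left _
  have hB : HasSum (fun n : ℤ => ∫ t in (0 : ℝ)..(2 * Real.pi),
      f t * (pvCoeff l n * Complex.exp (-Complex.I * n * t)))
      (∫ t in (0 : ℝ)..(2 * Real.pi),
        f t * (-Complex.I * Complex.cot (((t : ℂ) + Complex.I * l) / 2))) := by
    -- The norms of the terms do not depend on `t`, so `t = 0` gives summability.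
    have hc : Summable (fun n : ℤ => ‖pvCoeff l n‖) := by
      simpa using (hasSum_pvCoeff l hl 0).summable.norm
    refine intervalIntegral.hasSum_integral_of_dominated_convergence
      (fun n t => ‖f t‖ * ‖pvCoeff l n‖) (fun n => ?_) (fun n => ?_) ?_ ?_ ?_
    · exact hmeas.mul (Continuous.aestronglyMeasurable (by fun_prop))
    · refine Eventually.of_forall fun t _ => ?_
      have : ‖Complex.exp (-Complex.I * n * t)‖ = 1 := by
        rw [Complex.norm_exp]; simp
      rw [norm_mul, norm_mul, this, mul_one]
    · exact Eventually.of_forall fun t _ => hc.mul_left _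
    · simp_rw [tsum_mul_left]
      exact hint.norm.mul_const _
    · exact Eventually.of_forall fun t _ => (hasSum_pvCoeff l hl t).mul_left _
  apply tendsto_of_period f hp hf l hl
  simp_rw [integral_eq_sum_pvPair f hp hf l hl]
  convert hA.tendsto_sum_nat using 2
  have hterm : ∀ n : ℤ, ((Int.sign n : ℂ) - (Real.sign l : ℂ)) * Real.exp (-|(n : ℝ) * l|)
      * ((1 / (2 * Real.pi) : ℂ) *
        ∫ t in (0:ℝ)..(2 * Real.pi), f t * Complex.exp (-Complex.I * n * t)) =
      (1 / (2 * Real.pi) : ℂ) * ∫ t in (0 : ℝ)..(2 * Real.pi),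
        f t * (pvCoeff l n * Complex.exp (-Complex.I * n * t)) := by
    intro n
    simp_rw [mul_left_comm (f _)]
    rw [intervalIntegral.integral_const_mul, pvCoeff]
    ring
  simp_rw [hterm]
  rw [tsum_mul_left, hB.tsum_eq]
  simp_rw [mul_left_comm (f _), mul_div_assoc', intervalIntegral.integral_const_mul,
    intervalIntegral.integral_div]
  field_simp
  simp
end

section
/- Let f : ℝ → ℂ be a 2π-periodic function that is integrable on [0, 2π], and let λ > 0. Then ∫₀^∞ f_e(t)/(λ² + t²) dt = (π/(2λ))·Σ_{n∈ℤ} e^{−|n|λ}·C_n(f), where f_e(t) = (f(t) + f(−t))/2 is the even component of f and C_n(f) = (1/(2π))∫₀^{2π} f(t) e^{−int} dt are the exponential Fourier coefficients of f. -/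
open MeasureTheory Filter Topology
open scoped FourierTransform ENNReal

/-!
Since `1 / (l² + t²)` is even, the left-hand side is half of `∫ f(t) / (l² + t²)` over the whole
line. By periodicity of `f` that integral folds onto one period, where it becomes
`∫ f(t) P(t)` over `(0, 2π]` with `P(t) = ∑ₖ 1 / (l² + (t + 2πk)²)`. Poisson summation for
`x ↦ exp (-|x| l) exp (-itx)`, whose Fourier transform at `ξ` is `2l / (l² + (t + 2πξ)²)`, gives
`P(t) = (1 / 2l) ∑ₙ exp (-|n| l) exp (-int)` (`poisson_tsum`). Integrating this absolutely
convergent series against `f` term by term produces the Fourier coefficients.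

The same identity bounds `P` uniformly (`poisson_bound`). As all terms of `P` are positive, this
makes `f(t) / (l² + t²)` integrable on the line and justifies exchanging sum and integral after
folding.
-/

theorem summable_cauchy (l : ℝ) (hl : 0 < l) (t : ℝ) :
    Summable fun k : ℤ => 1 / (l ^ 2 + (t + 2 * Real.pi * k) ^ 2) := by
  refine summable_of_isBigO (Real.summable_abs_int_rpow one_lt_two) ?_
  have h : (fun ξ : ℝ => 1 / (l ^ 2 + (t + 2 * Real.pi * ξ) ^ 2)) =O[cocompact ℝ]
      fun x : ℝ => |x| ^ (-2 : ℝ) := by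
    refine Asymptotics.IsBigO.of_bound 1 ?_
    have : ∀ᶠ x : ℝ in cocompact ℝ, |t| ≤ ‖x‖ :=
      tendsto_norm_cocompact_atTop.eventually_ge_atTop |t|
    have h1 : ∀ᶠ x : ℝ in cocompact ℝ, 1 ≤ ‖x‖ :=
      tendsto_norm_cocompact_atTop.eventually_ge_atTop 1
    filter_upwards [this, h1] with x hx hx1
    rw [Real.norm_eq_abs] at hx hx1
    have hx0 : 0 < |x| := by linarith
    rw [Real.rpow_neg (abs_nonneg x), Real.norm_of_nonneg (by positivity),
      Real.norm_of_nonneg (by positivity), one_mul, one_div]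
    norm_cast
    refine inv_anti₀ (by positivity) ?_
    -- `|t| ≤ |x|` and `2π ≥ 2` make the shift by `t` harmless.
    have h3 : |x| ≤ |t + 2 * Real.pi * x| := by
      have e : |2 * Real.pi * x| = 2 * Real.pi * |x| := by
        rw [abs_mul, abs_of_pos Real.two_pi_pos]
      have := abs_add_le (t + 2 * Real.pi * x) (-t)
      rw [show t + 2 * Real.pi * x + -t = 2 * Real.pi * x by ring, e, abs_neg] at this
      nlinarith [Real.pi_gt_three]
    have := sq_le_sq' (by linarith [abs_nonneg (t + 2 * Real.pi * x)]) h3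
    rw [sq_abs, sq_abs] at this
    rw [sq_abs]
    nlinarith
  exact h.comp_tendsto Int.tendsto_coe_cofinite

theorem summable_exp (l : ℝ) (hl : 0 < l) :
    Summable fun n : ℤ => Real.exp (-|(n : ℝ)| * l) := by
  have := Real.summable_exp_nat_mul_iff.mpr (neg_lt_zero.mpr hl)
  refine Summable.of_nat_of_neg ?_ ?_ <;> simpa using this

/-- The Fourier transform of a modulated two-sided exponential is a translated Cauchy kernel. -/
theorem fourier_twisted (l : ℝ) (hl : 0 < l) (t ξ : ℝ) :
    𝓕 (fun x : ℝ => ((Real.exp (-|x| * l) : ℝ) : ℂ) * Complex.exp (Complex.I * t * x)) ξ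
      = ((2 * l * (1 / (l ^ 2 + (t - 2 * Real.pi * ξ) ^ 2)) : ℝ) : ℂ) := by
  rw [Real.fourier_real_eq_integral_exp_smul]
  set s : ℂ := Complex.I * (t - 2 * Real.pi * ξ : ℝ) with hs
  have hsre : s.re = 0 := by simp [hs]
  have e1 : ∀ x ∈ Set.Iic (0:ℝ), Complex.exp (↑(-2 * Real.pi * x * ξ) * Complex.I) •
      (((Real.exp (-|x| * l) : ℝ) : ℂ) * Complex.exp (Complex.I * t * x))
        = Complex.exp ((s + l) * x) := by
    intro x hx
    rw [abs_of_nonpos hx, smul_eq_mul, Complex.ofReal_exp, ← Complex.exp_add, ← Complex.exp_add]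
    congr 1; rw [hs]; push_cast; ring
  have e2 : ∀ x ∈ Set.Ioi (0:ℝ), Complex.exp (↑(-2 * Real.pi * x * ξ) * Complex.I) •
      (((Real.exp (-|x| * l) : ℝ) : ℂ) * Complex.exp (Complex.I * t * x))
        = Complex.exp ((s - l) * x) := by
    intro x hx
    rw [abs_of_pos hx, smul_eq_mul, Complex.ofReal_exp, ← Complex.exp_add, ← Complex.exp_add]
    congr 1; rw [hs]; push_cast; ring
  have r1 : 0 < (s + l).re := by simp [hsre, hl]
  have r2 : (s - l).re < 0 := by simp [hsre, hl]
  rw [← intervalIntegral.integral_Iic_add_Ioi (b := 0)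
    ((integrableOn_exp_mul_complex_Iic r1 0).congr_fun (fun x hx => (e1 x hx).symm) measurableSet_Iic)
    ((integrableOn_exp_mul_complex_Ioi r2 0).congr_fun (fun x hx => (e2 x hx).symm) measurableSet_Ioi),
    setIntegral_congr_fun measurableSet_Iic e1, setIntegral_congr_fun measurableSet_Ioi e2,
    integral_exp_mul_complex_Iic r1, integral_exp_mul_complex_Ioi r2]
  have n1 : s + l ≠ 0 := fun h => by simp [h] at r1
  have n2 : s - l ≠ 0 := fun h => by simp [h] at r2
  have n3 : ((l ^ 2 + (t - 2 * Real.pi * ξ) ^ 2 : ℝ) : ℂ) ≠ 0 := by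
    exact_mod_cast (by positivity : l ^ 2 + (t - 2 * Real.pi * ξ) ^ 2 ≠ 0)
  have n4 : ((l ^ 2 + (t - 2 * Real.pi * ξ) ^ 2 : ℝ) : ℂ) = -((s + l) * (s - l)) := by
    rw [hs]; push_cast; ring_nf; rw [Complex.I_sq]; ring
  rw [Complex.ofReal_mul, Complex.ofReal_div, n4]
  field_simp
  simp
  ring

/-- The `2π`-periodization of the Cauchy kernel is the Poisson kernel, as a Fourier series. -/
theorem poisson_tsum (l : ℝ) (hl : 0 < l) (t : ℝ) :
    ((∑' k : ℤ, 1 / (l ^ 2 + (t + 2 * Real.pi * k) ^ 2) : ℝ) : ℂ)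
      = 1 / (2 * l) * ∑' n : ℤ,
          (Real.exp (-|(n : ℝ)| * l) : ℂ) * Complex.exp (-Complex.I * n * t) := by
  -- The shift `t` is put into the frequency variable, so that Poisson summation is needed at
  -- the point `0` only.
  have hc : Continuous (fun x : ℝ =>
      ((Real.exp (-|x| * l) : ℝ) : ℂ) * Complex.exp (Complex.I * (-t : ℝ) * x)) := by fun_prop
  have hO : (fun x : ℝ =>
      ((Real.exp (-|x| * l) : ℝ) : ℂ) * Complex.exp (Complex.I * (-t : ℝ) * x))
      =O[cocompact ℝ] fun x : ℝ => |x| ^ (-2 : ℝ) := by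
    have h := ((isLittleO_exp_neg_mul_rpow_atTop hl (-2)).comp_tendsto
      (tendsto_norm_cocompact_atTop (E := ℝ))).isBigO
    refine Asymptotics.IsBigO.trans (Asymptotics.IsBigO.of_bound 1 ?_) h
    filter_upwards with x
    have : ‖Complex.exp (Complex.I * (-t : ℝ) * x)‖ = 1 := by
      rw [mul_assoc, mul_comm, ← Complex.ofReal_mul, Complex.norm_exp_ofReal_mul_I]
    rw [norm_mul, this, Complex.norm_real]
    simp [mul_comm]
  have hF : ∀ n : ℤ, 𝓕 (fun x : ℝ =>
      ((Real.exp (-|x| * l) : ℝ) : ℂ) * Complex.exp (Complex.I * (-t : ℝ) * x)) n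
      = ((2 * l * (1 / (l ^ 2 + (t + 2 * Real.pi * n) ^ 2)) : ℝ) : ℂ) := by
    intro n
    rw [fourier_twisted l hl]
    congr 4; ring
  have key := Real.tsum_eq_tsum_fourier_of_rpow_decay_of_summable hc one_lt_two hO
    (by simp_rw [hF]; exact_mod_cast (summable_cauchy l hl t).mul_left (2 * l)) 0
  simp_rw [hF] at key
  simp only [QuotientAddGroup.mk_zero, fourier_eval_zero, mul_one, zero_add] at key
  rw [← Complex.ofReal_tsum, tsum_mul_left] at key
  have hl' : (l : ℂ) ≠ 0 := by exact_mod_cast hl.ne'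
  have e : ∀ n : ℤ, (Real.exp (-|(n : ℝ)| * l) : ℂ) * Complex.exp (-Complex.I * n * t)
      = ((Real.exp (-|(n : ℝ)| * l) : ℝ) : ℂ) * Complex.exp (Complex.I * (-t : ℝ) * (n : ℝ)) := by
    intro n; congr 2; push_cast; ring
  rw [tsum_congr e, key, Complex.ofReal_mul]
  push_cast
  field_simp

/-- The subgroup `2πℤ` of `ℝ`, indexed by the integers. -/
noncomputable def intEquiv : ℤ ≃ AddSubgroup.zmultiples (2 * Real.pi) :=
  Equiv.ofBijective (fun k => ⟨k • (2 * Real.pi), AddSubgroup.mem_zmultiples_iff.mpr ⟨k, rfl⟩⟩)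
    ⟨fun _ _ h => (zsmul_left_strictMono Real.two_pi_pos).injective (congrArg Subtype.val h),
      fun ⟨_, hx⟩ => by
        obtain ⟨k, rfl⟩ := AddSubgroup.mem_zmultiples_iff.mp hx
        exact ⟨k, rfl⟩⟩

theorem intEquiv_vadd (k : ℤ) (x : ℝ) : intEquiv k +ᵥ x = x + 2 * Real.pi * k := by
  change k • (2 * Real.pi) + x = _
  rw [zsmul_eq_mul]; ring

theorem lintegral_unfold (g : ℝ → ℝ≥0∞) :
    ∫⁻ t, g t = ∑' k : ℤ, ∫⁻ t in Set.Ioc 0 (2 * Real.pi), g (t + 2 * Real.pi * k) := by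
  have h := isAddFundamentalDomain_Ioc Real.two_pi_pos 0
  rw [h.lintegral_eq_tsum'', ← intEquiv.tsum_eq]
  simp_rw [intEquiv_vadd, zero_add]

theorem integral_unfold (g : ℝ → ℂ) (hg : Integrable g) :
    ∫ t, g t = ∑' k : ℤ, ∫ t in Set.Ioc 0 (2 * Real.pi), g (t + 2 * Real.pi * k) := by
  have h := isAddFundamentalDomain_Ioc Real.two_pi_pos 0
  rw [h.integral_eq_tsum'' _ hg, ← intEquiv.tsum_eq]
  simp_rw [intEquiv_vadd, zero_add]

theorem poisson_bound (l : ℝ) (hl : 0 < l) (t : ℝ) :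
    ∑' k : ℤ, 1 / (l ^ 2 + (t + 2 * Real.pi * k) ^ 2)
      ≤ 1 / (2 * l) * ∑' n : ℤ, Real.exp (-|(n : ℝ)| * l) := by
  have e : ∀ n : ℤ,
      ‖(Real.exp (-|(n : ℝ)| * l) : ℂ) * Complex.exp (-Complex.I * n * t)‖
        = Real.exp (-|(n : ℝ)| * l) := by
    intro n
    rw [show -Complex.I * n * t = ((-n * t : ℝ) : ℂ) * Complex.I by push_cast; ring,
      norm_mul, Complex.norm_exp_ofReal_mul_I, Complex.norm_real, mul_one,
      Real.norm_of_nonneg (Real.exp_pos _).le]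
  calc _ ≤ ‖((∑' k : ℤ, 1 / (l ^ 2 + (t + 2 * Real.pi * k) ^ 2) : ℝ) : ℂ)‖ := by
        rw [Complex.norm_real]; exact le_abs_self _
    _ ≤ _ := by
        rw [poisson_tsum l hl, norm_mul]
        refine mul_le_mul (by simp [abs_of_pos hl]) ?_ (norm_nonneg _) (by positivity)
        refine (norm_tsum_le_tsum_norm (by simp_rw [e]; exact summable_exp l hl)).trans_eq ?_
        simp_rw [e]

section

variable {f : ℝ → ℂ} {l : ℝ}

theorem periodic_int (hper : Function.Periodic f (2 * Real.pi)) (t : ℝ) (k : ℤ) :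
    f (t + 2 * Real.pi * k) = f t := by
  rw [mul_comm]; exact hper.int_mul k t

/-- Absolute convergence of the folded integral: it justifies both the integrability of
`f(t) / (l² + t²)` on the line and the exchange of sum and integral. -/
theorem lintegral_finite (hint : IntervalIntegrable f volume 0 (2 * Real.pi)) (hl : 0 < l) :
    ∑' k : ℤ, ∫⁻ t in Set.Ioc 0 (2 * Real.pi),
      ‖f t * ((1 / (l ^ 2 + (t + 2 * Real.pi * k) ^ 2) : ℝ) : ℂ)‖ₑ ≠ ∞ := by
  rw [intervalIntegrable_iff_integrableOn_Ioc_of_le Real.two_pi_pos.le] at hint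
  have hm : ∀ k : ℤ, AEMeasurable (fun t : ℝ =>
      ‖f t * ((1 / (l ^ 2 + (t + 2 * Real.pi * k) ^ 2) : ℝ) : ℂ)‖ₑ)
      (volume.restrict (Set.Ioc 0 (2 * Real.pi))) := fun k =>
    (hint.aestronglyMeasurable.mul (Measurable.aestronglyMeasurable (by fun_prop))).enorm
  rw [← lintegral_tsum hm]
  have hb : ∀ t : ℝ, ∑' k : ℤ, ‖f t * ((1 / (l ^ 2 + (t + 2 * Real.pi * k) ^ 2) : ℝ) : ℂ)‖ₑ
      ≤ ‖f t‖ₑ * ENNReal.ofReal (1 / (2 * l) * ∑' n : ℤ, Real.exp (-|(n : ℝ)| * l)) := by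
    intro t
    have : ∀ k : ℤ, ‖f t * ((1 / (l ^ 2 + (t + 2 * Real.pi * k) ^ 2) : ℝ) : ℂ)‖ₑ
        = ‖f t‖ₑ * ENNReal.ofReal (1 / (l ^ 2 + (t + 2 * Real.pi * k) ^ 2)) := by
      intro k
      rw [enorm_mul, ← ofReal_norm (Complex.ofReal _), Complex.norm_real,
        Real.norm_of_nonneg (by positivity)]
    simp_rw [this]
    rw [ENNReal.tsum_mul_left, ← ENNReal.ofReal_tsum_of_nonneg (fun k => by positivity)
      (summable_cauchy l hl t)]
    gcongr
    exact poisson_bound l hl t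
  refine ((lintegral_mono hb).trans_lt ?_).ne
  rw [lintegral_mul_const' _ _ ENNReal.ofReal_ne_top]
  exact ENNReal.mul_lt_top hint.2 ENNReal.ofReal_lt_top

theorem aestronglyMeasurable_of_periodic (hper : Function.Periodic f (2 * Real.pi))
    (hint : IntervalIntegrable f volume 0 (2 * Real.pi)) : AEStronglyMeasurable f := by
  have hu : (⋃ n : ℤ, Set.Ioc (n : ℝ) (n + 1)) = Set.univ := iUnion_Ioc_intCast ℝ
  rw [← Measure.restrict_univ (μ := (volume : Measure ℝ)), ← hu, aestronglyMeasurable_iUnion_iff]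
  intro n
  exact (hper.intervalIntegrable₀ Real.two_pi_pos.ne' hint n (n + 1)).1.aestronglyMeasurable

theorem integrable_mul_cauchy (hper : Function.Periodic f (2 * Real.pi))
    (hint : IntervalIntegrable f volume 0 (2 * Real.pi)) (hl : 0 < l) :
    Integrable fun t : ℝ => f t * ((1 / (l ^ 2 + t ^ 2) : ℝ) : ℂ) := by
  refine ⟨(aestronglyMeasurable_of_periodic hper hint).mul (Measurable.aestronglyMeasurable (by fun_prop)), ?_⟩
  rw [HasFiniteIntegral, lintegral_unfold]
  simp_rw [periodic_int hper]
  exact (lintegral_finite hint hl).lt_top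

theorem integral_mul_cauchy (hper : Function.Periodic f (2 * Real.pi))
    (hint : IntervalIntegrable f volume 0 (2 * Real.pi)) (hl : 0 < l) :
    ∫ t : ℝ, f t * ((1 / (l ^ 2 + t ^ 2) : ℝ) : ℂ)
      = 1 / (2 * l) * ∑' n : ℤ, (Real.exp (-|(n : ℝ)| * l) : ℂ) *
          ∫ t in (0:ℝ)..(2 * Real.pi), f t * Complex.exp (-Complex.I * n * t) := by
  have hI := (intervalIntegrable_iff_integrableOn_Ioc_of_le Real.two_pi_pos.le).mp hint
  rw [integral_unfold _ (integrable_mul_cauchy hper hint hl)]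
  simp_rw [periodic_int hper]
  have hk : ∀ k : ℤ, AEStronglyMeasurable (fun t : ℝ =>
      f t * ((1 / (l ^ 2 + (t + 2 * Real.pi * k) ^ 2) : ℝ) : ℂ))
      (volume.restrict (Set.Ioc 0 (2 * Real.pi))) := fun k =>
    hI.aestronglyMeasurable.mul (Measurable.aestronglyMeasurable (by fun_prop))
  rw [← integral_tsum hk (lintegral_finite hint hl)]
  simp_rw [tsum_mul_left, ← Complex.ofReal_tsum, poisson_tsum l hl,
    intervalIntegral.integral_of_le Real.two_pi_pos.le, ← integral_const_mul, mul_left_comm (f _),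
    ← tsum_mul_left (a := f _)]
  rw [integral_const_mul]
  congr 1
  have hn : ∀ (n : ℤ) (t : ℝ),
      ‖(Real.exp (-|(n : ℝ)| * l) : ℂ) * (f t * Complex.exp (-Complex.I * n * t))‖
        = Real.exp (-|(n : ℝ)| * l) * ‖f t‖ := by
    intro n t
    rw [show -Complex.I * n * t = ((-n * t : ℝ) : ℂ) * Complex.I by push_cast; ring,
      norm_mul, norm_mul, Complex.norm_exp_ofReal_mul_I, Complex.norm_real, mul_one,
      Real.norm_of_nonneg (Real.exp_pos _).le]
  have hm : ∀ n : ℤ, AEStronglyMeasurable (fun t : ℝ =>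
      (Real.exp (-|(n : ℝ)| * l) : ℂ) * (f t * Complex.exp (-Complex.I * n * t)))
      (volume.restrict (Set.Ioc 0 (2 * Real.pi))) := fun n =>
    (hI.aestronglyMeasurable.mul (Measurable.aestronglyMeasurable (by fun_prop))).const_mul _
  simp_rw [mul_left_comm (f _)]
  refine (hasSum_integral_of_summable_integral_norm (fun n => ?_) ?_).tsum_eq.symm
  · refine (integrable_norm_iff (hm n)).mp ?_
    simp_rw [hn]
    exact hI.norm.const_mul _
  · simp_rw [hn, integral_const_mul]
    exact (summable_exp l hl).mul_right _

end

theorem stmt8 (f : ℝ → ℂ) (hper : ∀ t : ℝ, f (t + 2 * Real.pi) = f t)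
    (hint : IntervalIntegrable f volume 0 (2 * Real.pi))
    (l : ℝ) (hl : 0 < l) :
    (∫ t in Set.Ici (0:ℝ), ((f t + f (-t)) / 2) / ((l ^ 2 + t ^ 2 : ℝ) : ℂ))
      = (Real.pi / (2 * l) : ℝ) * ∑' n : ℤ,
          (Real.exp (-|(n : ℝ)| * l) : ℂ) *
            ((1 / (2 * Real.pi) : ℂ) *
              ∫ t in (0:ℝ)..(2 * Real.pi), f t * Complex.exp (-Complex.I * n * t)) := by
  set g : ℝ → ℂ := fun t => f t * ((1 / (l ^ 2 + t ^ 2) : ℝ) : ℂ) with hg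
  have hgi : Integrable g := integrable_mul_cauchy hper hint hl
  have e : ∀ t : ℝ, ((f t + f (-t)) / 2) / ((l ^ 2 + t ^ 2 : ℝ) : ℂ)
      = (1 / 2) * (g t + g (-t)) := by
    intro t
    simp only [hg, neg_sq, Complex.ofReal_div, Complex.ofReal_one]
    ring
  simp_rw [e]
  rw [integral_Ici_eq_integral_Ioi, integral_const_mul,
    integral_add hgi.integrableOn hgi.comp_neg.integrableOn, integral_comp_neg_Ioi, neg_zero,
    add_comm, intervalIntegral.integral_Iic_add_Ioi hgi.integrableOn hgi.integrableOn,
    integral_mul_cauchy hper hint hl]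
  simp_rw [mul_left_comm _ (1 / (2 * Real.pi) : ℂ), tsum_mul_left]
  have h1 : (l : ℂ) ≠ 0 := by exact_mod_cast hl.ne'
  have h2 : (Real.pi : ℂ) ≠ 0 := by exact_mod_cast Real.pi_ne_zero
  push_cast
  field_simp
end

section
/- Let f : ℝ → ℂ be a 2π-periodic function that is integrable on [0, 2π], and let λ > 0. Then the improper integral ∫₀^∞ t·f_o(t)/(λ² + t²) dt converges and equals (iπ/2)·Σ_{n∈ℤ} sgn(n)·e^{−|n|λ}·C_n(f), where f_o(t) = (f(t) − f(−t))/2 is the odd component of f, C_n(f) = (1/(2π))∫₀^{2π} f(t) e^{−int} dt are the exponential Fourier coefficients of f, and sgn(n) is the sign of n with sgn(0) = 0. -/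
open MeasureTheory Filter Topology

/-!
Write `K(t) = t / (l² + t²)`, the real part of `1 / (t + i l)`. Folding the half-line integral of
`K · f_o` onto one period, and using that `K` and `f_o` are odd, the integral over
`[0, (2N + 1)π]` becomes half the integral over `[-π, π]` of `f` times the symmetric partial sum
`∑_{|k| ≤ N} K(t + 2πk)` (`first_step`, `period_step`). Paired as `k` and `-k`, the terms are
`O(1 / k²)` uniformly on `[-π, π]` (`pair_bound`), so dominated convergence applies to the merely
integrable `f` (`hasSum_integral_mul`).

The Mittag-Leffler expansion of the cotangent identifies the periodized kernel as
`S(t) = Re (½ cot ((t + i l) / 2))` (`hasSum_pair`), and geometric series in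
`q = exp (i t - l)` and its conjugate expand it as
`-2i S(t) = ∑ sgn(n) e^{-|n| l} e^{-int}` (`hasSum_exp`). Integrating this second series against
`f` term by term produces the Fourier coefficients.

For a general upper limit, what is left beyond the last odd multiple `a` of `π` is at most
`a⁻¹ ∫ |f_o|` over one period (`remainder_bound`), which tends to zero.
-/

/-! ### The kernel and its periodization -/

/-- The conjugate Poisson-type kernel `t / (l² + t²)` on the line. -/
noncomputable def cker (l t : ℝ) : ℝ := t / (l ^ 2 + t ^ 2)

/-- The `2π`-periodization of `cker l`, in closed form: the real part of
`½ cot ((t + i l) / 2)`, with the cotangent written as a rational function of `exp (i t - l)`. -/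
noncomputable def perKer (l t : ℝ) : ℝ :=
  (Complex.I / 2 * ((Complex.exp (Complex.I * t - l) + 1) /
    (Complex.exp (Complex.I * t - l) - 1))).re

lemma norm_q (l t : ℝ) : ‖Complex.exp (Complex.I * t - l)‖ = Real.exp (-l) := by
  rw [Complex.norm_exp]; simp

lemma q_sub_one_ne {l : ℝ} (hl : 0 < l) (t : ℝ) :
    Complex.exp (Complex.I * t - l) - 1 ≠ 0 := by
  intro h
  have h1 := norm_q l t
  rw [sub_eq_zero.mp h, norm_one] at h1
  have : Real.exp (-l) < 1 := by simpa using hl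
  linarith

lemma continuous_perKer {l : ℝ} (hl : 0 < l) : Continuous (perKer l) := by
  unfold perKer
  refine Complex.continuous_re.comp (continuous_const.mul (Continuous.div ?_ ?_ (q_sub_one_ne hl)))
  all_goals fun_prop

lemma continuous_cker {l : ℝ} (hl : 0 < l) : Continuous (cker l) := by
  unfold cker
  exact Continuous.div (by fun_prop) (by fun_prop) (fun t => by positivity)

lemma cker_neg (l t : ℝ) : cker l (-t) = -cker l t := by
  simp [cker, neg_div]

lemma re_inv (l t : ℝ) : ((t : ℂ) + l * Complex.I)⁻¹.re = cker l t := by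
  rw [Complex.inv_re]
  simp [Complex.normSq_apply, cker]
  ring_nf

/-! ### Series expansions of the periodized kernel -/

/-- The symmetric periodization of `cker l` sums to `perKer l`. The terms with translations
`±2π(k + 1)` are grouped together (the negative one rewritten by oddness), since the unpaired
series converges only conditionally. -/
lemma hasSum_pair {l : ℝ} (hl : 0 < l) (t : ℝ) :
    HasSum (fun k : ℕ => cker l (t + 2 * Real.pi * (k + 1)) - cker l (-t + 2 * Real.pi * (k + 1)))
      (perKer l t - cker l t) := by
  have hpi : (Real.pi : ℂ) ≠ 0 := by exact_mod_cast Real.pi_ne_zero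
  set z : ℂ := ((t : ℂ) + l * Complex.I) / (2 * Real.pi) with hzdef
  have him : 0 < z.im := by
    have : z.im = l / (2 * Real.pi) := by
      rw [hzdef, show (2 * (Real.pi : ℂ)) = ((2 * Real.pi : ℝ) : ℂ) by push_cast; ring,
        Complex.div_ofReal_im]
      simp
    rw [this]; positivity
  have hz : z ∈ Complex.integerComplement := UpperHalfPlane.coe_mem_integerComplement ⟨z, him⟩
  have h1 : HasSum (fun n : ℕ => 1 / (z - (n + 1)) + 1 / (z + (n + 1)))
      (Real.pi * Complex.cot (Real.pi * z) - 1 / z) := by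
    rw [cot_series_rep' hz]
    exact (summable_cotTerm hz).hasSum
  have h2 := Complex.hasSum_re (h1.mul_left ((1 : ℂ) / (2 * Real.pi)))
  have hexp : Complex.exp (2 * Complex.I * (Real.pi * z)) = Complex.exp (Complex.I * t - l) := by
    congr 1
    rw [hzdef]
    field_simp
    ring_nf
    simp
    ring
  have key : ∀ a : ℝ, (1 / (2 * Real.pi : ℂ)) * (1 / (z + a)) =
      (((t + 2 * Real.pi * a : ℝ) : ℂ) + l * Complex.I)⁻¹ := by
    intro a
    rw [← one_div, one_div_mul_one_div]
    congr 1
    rw [hzdef]; push_cast; field_simp; ring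
  convert h2 using 1
  · funext k
    have e1 := key (k + 1)
    have e2 := key (-(k + 1))
    push_cast at e1 e2
    rw [sub_eq_add_neg z, mul_add (1 / (2 * (Real.pi : ℂ))), e1, e2, Complex.add_re]
    have r1 := re_inv l (t + 2 * Real.pi * (k + 1))
    have r2 := re_inv l (t + 2 * Real.pi * (-(k + 1)))
    push_cast at r1 r2
    rw [r1, r2, show t + 2 * Real.pi * (-((k : ℝ) + 1)) = -(-t + 2 * Real.pi * (k + 1)) by ring,
      cker_neg]
    ring
  · have e0 := key 0
    simp only [Complex.ofReal_zero, mul_zero, add_zero] at e0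
    rw [mul_sub, e0, Complex.sub_re, re_inv, Complex.cot_eq_exp_ratio, hexp, perKer]
    congr 2
    have hq := q_sub_one_ne hl t
    have hq' : 1 - Complex.exp (Complex.I * t - l) ≠ 0 := by
      rw [← neg_sub]; exact neg_ne_zero.mpr hq
    generalize Complex.exp (Complex.I * t - l) = q at hq hq' ⊢
    rw [← neg_sub q 1]
    field_simp
    simp

/-- Fourier expansion of the periodized kernel. -/
lemma hasSum_exp {l : ℝ} (hl : 0 < l) (t : ℝ) :
    HasSum (fun n : ℤ => (Int.sign n : ℂ) * Real.exp (-|(n : ℝ)| * l) *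
      Complex.exp (-Complex.I * n * t)) (-2 * Complex.I * perKer l t) := by
  set q := Complex.exp (Complex.I * t - l) with hq
  have hconj : (starRingEnd ℂ) q = Complex.exp (-(Complex.I * t) - l) := by
    rw [hq, ← Complex.exp_conj]; simp
  have hlt : Real.exp (-l) < 1 := by simpa using hl
  have hn : ‖q‖ < 1 := by rw [hq, norm_q]; exact hlt
  have hn' : ‖(starRingEnd ℂ) q‖ < 1 := by rwa [RCLike.norm_conj]
  have s1 := (hasSum_geometric_of_norm_lt_one hn').mul_left ((starRingEnd ℂ) q)
  have s2 := (hasSum_geometric_of_norm_lt_one hn).mul_left (-q)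
  have hq1 : q - 1 ≠ 0 := q_sub_one_ne hl t
  have hq1' : (starRingEnd ℂ) q - 1 ≠ 0 := by
    intro h; apply hq1
    have := congrArg (starRingEnd ℂ) h
    simpa using this
  have hval : -2 * Complex.I * perKer l t =
      (starRingEnd ℂ) q * (1 - (starRingEnd ℂ) q)⁻¹ +
      (((Int.sign 0 : ℤ) : ℂ) * Real.exp (-|((0 : ℤ) : ℝ)| * l) *
        Complex.exp (-Complex.I * (0 : ℤ) * t)) + -q * (1 - q)⁻¹ := by
    rw [perKer, Complex.re_eq_add_conj, ← hq]
    simp only [map_mul, map_div₀, map_add, map_sub, map_one, Complex.conj_I, map_ofNat]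
    rw [← neg_sub q 1, ← neg_sub ((starRingEnd ℂ) q) 1, inv_neg, inv_neg]
    generalize (starRingEnd ℂ) q = r at hq1' ⊢
    field_simp
    simp only [Complex.I_sq]
    simp
    ring
  rw [hval]
  refine HasSum.of_add_one_of_neg_add_one (f := fun n : ℤ => (Int.sign n : ℂ) *
    Real.exp (-|(n : ℝ)| * l) * Complex.exp (-Complex.I * n * t)) ?_ ?_
  · refine s1.congr_fun fun n => ?_
    have : Int.sign ((n : ℤ) + 1) = 1 := Int.sign_eq_one_of_pos (by positivity)
    have habs : |(((n : ℤ) + 1 : ℤ) : ℝ)| = (n : ℝ) + 1 := by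
      push_cast; exact abs_of_nonneg (by positivity)
    rw [this, habs, ← pow_succ', hconj, ← Complex.exp_nat_mul, Complex.ofReal_exp,
      Int.cast_one, one_mul, ← Complex.exp_add]
    congr 1; push_cast; ring
  · refine s2.congr_fun fun n => ?_
    have : Int.sign (-((n : ℤ) + 1)) = -1 := Int.sign_eq_neg_one_of_neg (by lia)
    have habs : |((-((n : ℤ) + 1) : ℤ) : ℝ)| = (n : ℝ) + 1 := by
      push_cast; rw [abs_neg]; exact abs_of_nonneg (by positivity)
    rw [this, habs, neg_mul q, ← pow_succ', hq, ← Complex.exp_nat_mul, Complex.ofReal_exp,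
      Int.cast_neg, Int.cast_one, neg_mul, one_mul, neg_mul, ← Complex.exp_add]
    congr 2; push_cast; ring

/-! ### Dominated convergence -/

/-- The grouped terms of the periodization decay quadratically in the translation `a`, uniformly
on one period. -/
lemma pair_bound {l : ℝ} (t a : ℝ) (ht : |t| ≤ Real.pi) (ha : 2 * Real.pi ≤ a) :
    |cker l (t + a) - cker l (-t + a)| ≤ 32 * Real.pi / a ^ 2 := by
  have hpi := Real.pi_pos
  obtain ⟨h1, h2⟩ := abs_le.mp ht
  have hA : a ^ 2 / 4 + l ^ 2 ≤ l ^ 2 + (t + a) ^ 2 := by nlinarith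
  have hB : a ^ 2 / 4 + l ^ 2 ≤ l ^ 2 + (-t + a) ^ 2 := by nlinarith
  have hapos : 0 < a := by linarith
  have hC : 0 < a ^ 2 / 4 + l ^ 2 := by positivity
  have hA0 := hC.trans_le hA
  have hB0 := hC.trans_le hB
  have e : cker l (t + a) - cker l (-t + a) =
      2 * t * (l ^ 2 + t ^ 2 - a ^ 2) / ((l ^ 2 + (t + a) ^ 2) * (l ^ 2 + (-t + a) ^ 2)) := by
    unfold cker
    field_simp
    ring
  have hnum : |2 * t * (l ^ 2 + t ^ 2 - a ^ 2)| ≤ 2 * Real.pi * (4 * (a ^ 2 / 4 + l ^ 2)) := by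
    rw [abs_mul, abs_mul, abs_two]
    have : |l ^ 2 + t ^ 2 - a ^ 2| ≤ 4 * (a ^ 2 / 4 + l ^ 2) := by
      have : t ^ 2 ≤ a ^ 2 := by nlinarith
      rw [abs_le]; constructor <;> nlinarith [sq_nonneg l, sq_nonneg t]
    gcongr
  rw [e, abs_div, abs_of_pos (mul_pos hA0 hB0)]
  calc _ ≤ 2 * Real.pi * (4 * (a ^ 2 / 4 + l ^ 2)) /
        ((a ^ 2 / 4 + l ^ 2) * (a ^ 2 / 4 + l ^ 2)) := by gcongr
    _ = 8 * Real.pi / (a ^ 2 / 4 + l ^ 2) := by field_simp; ring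
    _ ≤ 8 * Real.pi / (a ^ 2 / 4) := by
        gcongr; nlinarith [sq_nonneg l]
    _ = _ := by field_simp; ring

/-- A series of continuous functions dominated by a summable sequence of constants may be
integrated term by term against any integrable function. -/
lemma hasSum_integral_mul {ι : Type*} [Countable ι] {a b : ℝ} {f : ℝ → ℂ}
    (hf : IntervalIntegrable f volume a b) (φ : ι → ℝ → ℂ) (ψ : ℝ → ℂ) (c : ι → ℝ)
    (hφ : ∀ i, Continuous (φ i)) (hc : Summable c)
    (hb : ∀ i, ∀ t ∈ Set.uIcc a b, ‖φ i t‖ ≤ c i)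
    (hs : ∀ t, HasSum (fun i => φ i t) (ψ t)) :
    HasSum (fun i => ∫ t in a..b, f t * φ i t) (∫ t in a..b, f t * ψ t) := by
  refine intervalIntegral.hasSum_integral_of_dominated_convergence (fun i t => ‖f t‖ * c i)
    ?_ ?_ ?_ ?_ ?_
  · exact fun i => hf.def'.aestronglyMeasurable.mul (hφ i).aestronglyMeasurable
  · refine fun i => Eventually.of_forall fun t ht => ?_
    rw [norm_mul]
    exact mul_le_mul_of_nonneg_left (hb i t (Set.uIoc_subset_uIcc ht)) (norm_nonneg _)
  · exact Eventually.of_forall fun t _ => hc.mul_left _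
  · simp_rw [tsum_mul_left]
    exact hf.norm.mul_const _
  · exact Eventually.of_forall fun t _ => (hs t).mul_left _

/-! ### Folding the half-line integral onto one period -/

/-- The contribution of one period to the half-line integral, translated back to `[-π, π]`; the
substitution `t ↦ -t` moves the odd part from `f` to the kernel. -/
lemma period_step {l : ℝ} (hl : 0 < l) {f : ℝ → ℂ} (hper : Function.Periodic f (2 * Real.pi))
    (hf : ∀ a b, IntervalIntegrable f volume a b) (n : ℕ) :
    ∫ t in (2 * n + 1) * Real.pi..(2 * (n + 1 : ℕ) + 1) * Real.pi,
        (cker l t : ℂ) * ((f t - f (-t)) / 2) =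
      ∫ t in -Real.pi..Real.pi, f t *
        (((cker l (t + 2 * Real.pi * (n + 1)) - cker l (-t + 2 * Real.pi * (n + 1))) / 2 : ℝ) : ℂ)
        := by
  set a : ℝ := 2 * Real.pi * (n + 1) with ha
  have hc : ∀ t, f (t + a) = f t := fun t => by
    have := hper.nat_mul (n + 1) t
    rw [← this, ha]; congr 1; push_cast; ring
  have hc' : ∀ t, f (-(t + a)) = f (-t) := fun t => by
    rw [← hc (-(t + a))]; congr 1; ring
  have hcont := continuous_cker hl
  have hfn : IntervalIntegrable (fun t => f (-t)) volume (-Real.pi) Real.pi := by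
    simpa using (IntervalIntegrable.iff_comp_neg).mp (hf Real.pi (-Real.pi))
  have i1 : IntervalIntegrable (fun t => f t * ((cker l (t + a) / 2 : ℝ) : ℂ)) volume
      (-Real.pi) Real.pi :=
    (hf _ _).mul_continuousOn (Continuous.continuousOn (by fun_prop))
  have i2 : IntervalIntegrable (fun t => f (-t) * ((cker l (t + a) / 2 : ℝ) : ℂ)) volume
      (-Real.pi) Real.pi :=
    hfn.mul_continuousOn (Continuous.continuousOn (by fun_prop))
  have i3 : IntervalIntegrable (fun t => f t * ((cker l (-t + a) / 2 : ℝ) : ℂ)) volume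
      (-Real.pi) Real.pi :=
    (hf _ _).mul_continuousOn (Continuous.continuousOn (by fun_prop))
  rw [show (2 * n + 1) * Real.pi = -Real.pi + a by rw [ha]; ring,
    show (2 * (n + 1 : ℕ) + 1) * Real.pi = Real.pi + a by rw [ha]; push_cast; ring,
    ← intervalIntegral.integral_comp_add_right]
  have hflip := intervalIntegral.integral_comp_neg (a := -Real.pi) (b := Real.pi)
    (fun t => f t * ((cker l (-t + a) / 2 : ℝ) : ℂ))
  simp only [neg_neg] at hflip
  calc _ = ∫ t in -Real.pi..Real.pi, (f t * ((cker l (t + a) / 2 : ℝ) : ℂ) -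
        f (-t) * ((cker l (t + a) / 2 : ℝ) : ℂ)) := by
        congr 1; funext t; rw [hc, hc']; push_cast; ring
    _ = (∫ t in -Real.pi..Real.pi, f t * ((cker l (t + a) / 2 : ℝ) : ℂ)) -
        ∫ t in -Real.pi..Real.pi, f t * ((cker l (-t + a) / 2 : ℝ) : ℂ) := by
        rw [intervalIntegral.integral_sub i1 i2, hflip]
    _ = _ := by
        rw [← intervalIntegral.integral_sub i1 i3]
        congr 1; funext t; push_cast; ring

/-- The half period `[0, π]`, unfolded to `[-π, π]` because `cker l` and the odd part of `f` are
both odd. -/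
lemma first_step {l : ℝ} (hl : 0 < l) {f : ℝ → ℂ}
    (hf : ∀ a b, IntervalIntegrable f volume a b) :
    ∫ t in (0:ℝ)..Real.pi, (cker l t : ℂ) * ((f t - f (-t)) / 2) =
      ∫ t in -Real.pi..Real.pi, f t * ((cker l t / 2 : ℝ) : ℂ) := by
  have hcont := continuous_cker hl
  have i1 : ∀ a b, IntervalIntegrable (fun t => f t * ((cker l t / 2 : ℝ) : ℂ)) volume a b :=
    fun a b => (hf a b).mul_continuousOn (Continuous.continuousOn (by fun_prop))
  have i2 : IntervalIntegrable (fun t => f (-t) * ((cker l (-t) / 2 : ℝ) : ℂ)) volume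
      0 Real.pi := by
    simpa using (IntervalIntegrable.iff_comp_neg).mp (i1 0 (-Real.pi))
  have hflip := intervalIntegral.integral_comp_neg (a := 0) (b := Real.pi)
    (fun t => f t * ((cker l t / 2 : ℝ) : ℂ))
  rw [← intervalIntegral.integral_add_adjacent_intervals (i1 (-Real.pi) 0) (i1 0 Real.pi),
    ← neg_zero, ← hflip, neg_zero, ← intervalIntegral.integral_add i2 (i1 0 Real.pi)]
  congr 1; funext t; rw [cker_neg]; push_cast; ring

lemma remainder_bound {l : ℝ} (hl : 0 < l) {g : ℝ → ℂ} (hper : Function.Periodic g (2 * Real.pi))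
    (hg : ∀ a b, IntervalIntegrable g volume a b) {a b : ℝ} (ha : 0 < a) (hab : a ≤ b)
    (hba : b ≤ a + 2 * Real.pi) :
    ‖∫ t in a..b, (cker l t : ℂ) * g t‖ ≤ a⁻¹ * ∫ t in (0:ℝ)..2 * Real.pi, ‖g t‖ := by
  have hcont := continuous_cker hl
  have hperN : Function.Periodic (fun t => ‖g t‖) (2 * Real.pi) := fun t => by simp only [hper t]
  calc _ ≤ ∫ t in a..b, ‖(cker l t : ℂ) * g t‖ :=
        intervalIntegral.norm_integral_le_integral_norm hab
    _ ≤ ∫ t in a..b, a⁻¹ * ‖g t‖ := by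
        refine intervalIntegral.integral_mono_on hab ?_ ((hg a b).norm.const_mul _) ?_
        · exact ((hg a b).continuousOn_mul (Continuous.continuousOn (by fun_prop))).norm
        · intro t ht
          have ht0 : 0 < t := ha.trans_le ht.1
          rw [norm_mul, Complex.norm_real, Real.norm_eq_abs]
          refine mul_le_mul_of_nonneg_right ?_ (norm_nonneg _)
          have hk : 0 ≤ cker l t := by unfold cker; positivity
          rw [abs_of_nonneg hk]
          calc cker l t ≤ t⁻¹ := by
                rw [cker, div_le_iff₀ (by positivity), ← div_eq_inv_mul, le_div_iff₀ ht0]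
                nlinarith [sq_nonneg l]
            _ ≤ a⁻¹ := inv_anti₀ ha ht.1
    _ = a⁻¹ * ∫ t in a..b, ‖g t‖ := intervalIntegral.integral_const_mul _ _
    _ ≤ a⁻¹ * ∫ t in a..a + 2 * Real.pi, ‖g t‖ := by
        refine mul_le_mul_of_nonneg_left ?_ (by positivity)
        exact intervalIntegral.integral_mono_interval le_rfl hab hba
          (Eventually.of_forall fun t => norm_nonneg _) (hg _ _).norm
    _ = _ := by rw [hperN.intervalIntegral_add_eq a 0, zero_add]

/-! ### The improper integral -/

theorem stmt9 (f : ℝ → ℂ) (hper : ∀ t : ℝ, f (t + 2 * Real.pi) = f t)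
    (hint : IntervalIntegrable f volume 0 (2 * Real.pi))
    (l : ℝ) (hl : 0 < l) :
    Tendsto (fun a : ℝ => ∫ t in (0:ℝ)..a,
        (t : ℂ) * ((f t - f (-t)) / 2) / ((l ^ 2 + t ^ 2 : ℝ) : ℂ)) atTop
      (𝓝 (Complex.I * Real.pi / 2 * ∑' n : ℤ,
        (Int.sign n : ℂ) * Real.exp (-|(n : ℝ)| * l) *
          ((1 / (2 * Real.pi) : ℂ) *
            ∫ t in (0:ℝ)..(2 * Real.pi), f t * Complex.exp (-Complex.I * n * t)))) := by
  have hpi := Real.pi_pos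
  have hP : Function.Periodic f (2 * Real.pi) := hper
  have hf : ∀ a b, IntervalIntegrable f volume a b :=
    hP.intervalIntegrable₀ (by positivity) hint
  have hfn : ∀ a b, IntervalIntegrable (fun t => f (-t)) volume a b := fun a b => by
    simpa using (IntervalIntegrable.iff_comp_neg).mp (hf (-a) (-b))
  set g : ℝ → ℂ := fun t => (f t - f (-t)) / 2 with hg
  have hgP : Function.Periodic g (2 * Real.pi) := fun t => by
    have : f (-(t + 2 * Real.pi)) = f (-t) := by
      rw [← hper (-(t + 2 * Real.pi))]; congr 1; ring
    simp only [hg, hper, this]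
  have hgI : ∀ a b, IntervalIntegrable g volume a b := fun a b =>
    ((hf a b).sub (hfn a b)).div_const 2
  have hcont := continuous_cker hl
  have hScont := continuous_perKer hl
  have hhI : ∀ a b, IntervalIntegrable (fun t => (cker l t : ℂ) * g t) volume a b := fun a b =>
    (hgI a b).continuousOn_mul (Continuous.continuousOn (by fun_prop))
  have hK : ∀ t : ℝ, (t : ℂ) * ((f t - f (-t)) / 2) / ((l ^ 2 + t ^ 2 : ℝ) : ℂ) =
      (cker l t : ℂ) * g t := fun t => by
    simp only [cker, hg]; push_cast; ring
  simp_rw [hK]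
  set F : ℝ → ℂ := fun a => ∫ t in (0:ℝ)..a, (cker l t : ℂ) * g t with hF
  -- Termwise integration of the Fourier expansion of the periodized kernel.
  have hlim : Complex.I * Real.pi / 2 * ∑' n : ℤ,
      (Int.sign n : ℂ) * Real.exp (-|(n : ℝ)| * l) *
          ((1 / (2 * Real.pi) : ℂ) *
            ∫ t in (0:ℝ)..(2 * Real.pi), f t * Complex.exp (-Complex.I * n * t)) =
      ∫ t in -Real.pi..Real.pi, f t * ((perKer l t / 2 : ℝ) : ℂ) := by
    have hsumc : Summable fun n : ℤ => Real.exp (-|(n : ℝ)| * l) := by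
      have hgeo : Summable fun n : ℕ => Real.exp (-l) ^ n :=
        summable_geometric_of_lt_one (Real.exp_pos _).le (by simpa using hl)
      refine Summable.of_nat_of_neg ?_ ?_ <;> refine hgeo.congr fun n => ?_ <;>
        simp [← Real.exp_nat_mul]
    have hs := hasSum_integral_mul (hf (-Real.pi) Real.pi)
      (fun (n : ℤ) t => (Int.sign n : ℂ) * Real.exp (-|(n : ℝ)| * l) *
        Complex.exp (-Complex.I * n * t)) (fun t => -2 * Complex.I * perKer l t)
      (fun n => Real.exp (-|(n : ℝ)| * l)) (fun n => by fun_prop) hsumc ?_ (hasSum_exp hl)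
    · have hper_int : ∀ n : ℤ, ∫ t in (0:ℝ)..(2 * Real.pi), f t * Complex.exp (-Complex.I * n * t)
          = ∫ t in -Real.pi..Real.pi, f t * Complex.exp (-Complex.I * n * t) := fun n => by
        have hp : Function.Periodic (fun t : ℝ => f t * Complex.exp (-Complex.I * n * t))
            (2 * Real.pi) := fun t => by
          simp only [hper]
          congr 1
          have := Complex.exp_periodic.int_mul (-n) (-Complex.I * n * t)
          rw [← this]; congr 1; push_cast; ring
        have := hp.intervalIntegral_add_eq 0 (-Real.pi)
        rw [zero_add] at this
        rw [this]; congr 1; ring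
      have hs2 := hs.mul_left (Complex.I / 4)
      have e1 : ∀ n : ℤ, Complex.I * Real.pi / 2 * ((Int.sign n : ℂ) *
          Real.exp (-|(n : ℝ)| * l) * ((1 / (2 * Real.pi) : ℂ) *
            ∫ t in (0:ℝ)..(2 * Real.pi), f t * Complex.exp (-Complex.I * n * t))) =
          Complex.I / 4 * ∫ t in -Real.pi..Real.pi, f t * ((Int.sign n : ℂ) *
            Real.exp (-|(n : ℝ)| * l) * Complex.exp (-Complex.I * n * t)) := fun n => by
        have hpi' : (Real.pi : ℂ) ≠ 0 := by exact_mod_cast hpi.ne'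
        simp_rw [mul_left_comm (f _)]
        rw [intervalIntegral.integral_const_mul, hper_int]
        field_simp
        ring
      rw [← tsum_mul_left, tsum_congr e1, hs2.tsum_eq, ← intervalIntegral.integral_const_mul]
      congr 1; funext t; push_cast
      linear_combination (-(1 / 2) * f t * perKer l t) * Complex.I_sq
    · intro n t _
      rw [norm_mul, norm_mul, Complex.norm_real, Real.norm_eq_abs, Real.abs_exp,
        show -Complex.I * n * t = ((-n * t : ℝ) : ℂ) * Complex.I by push_cast; ring,
        Complex.norm_exp_ofReal_mul_I, mul_one]
      refine mul_le_of_le_one_left (Real.exp_pos _).le ?_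
      rcases lt_trichotomy n 0 with h | h | h
      · simp [Int.sign_eq_neg_one_of_neg h]
      · simp [h]
      · simp [Int.sign_eq_one_of_pos h]
  rw [hlim]
  -- Along odd multiples of `π` the integral is a partial sum of the symmetric periodization.
  have hseq : Tendsto (fun N : ℕ => F ((2 * N + 1) * Real.pi)) atTop
      (𝓝 (∫ t in -Real.pi..Real.pi, f t * ((perKer l t / 2 : ℝ) : ℂ))) := by
    have hsc : Summable fun k : ℕ => 32 * Real.pi / (2 * Real.pi * (k + 1)) ^ 2 := by
      have h0 : Summable fun k : ℕ => 1 / ((k : ℝ) + 1) ^ 2 := by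
        have := (summable_nat_add_iff 1).mpr (Real.summable_one_div_nat_pow.mpr one_lt_two)
        simpa using this
      refine (h0.mul_left (8 / Real.pi)).congr fun k => ?_
      field_simp
      ring
    have hs := hasSum_integral_mul (hf (-Real.pi) Real.pi)
      (fun (k : ℕ) t => (((cker l (t + 2 * Real.pi * (k + 1)) -
        cker l (-t + 2 * Real.pi * (k + 1))) / 2 : ℝ) : ℂ))
      (fun t => (((perKer l t - cker l t) / 2 : ℝ) : ℂ))
      (fun k => 32 * Real.pi / (2 * Real.pi * (k + 1)) ^ 2) (fun k => by fun_prop) hsc ?_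
      (fun t => Complex.hasSum_ofReal.mpr ((hasSum_pair hl t).div_const 2))
    · have hlimS := (hs.tendsto_sum_nat).const_add
        (∫ t in -Real.pi..Real.pi, f t * ((cker l t / 2 : ℝ) : ℂ))
      rw [← intervalIntegral.integral_add
        ((hf _ _).mul_continuousOn (Continuous.continuousOn (by fun_prop)))
        ((hf _ _).mul_continuousOn (Continuous.continuousOn (by fun_prop)))] at hlimS
      convert hlimS using 1
      · funext N
        induction N with
        | zero =>
          simpa [hF] using first_step hl hf
        | succ n ih =>
          rw [Finset.sum_range_succ, ← add_assoc, ← ih, ← period_step hl hP hf n, hF]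
          exact (intervalIntegral.integral_add_adjacent_intervals (hhI _ _) (hhI _ _)).symm
      · congr 2; funext t; push_cast; ring
    · intro k t ht
      rw [Set.uIcc_of_le (by linarith)] at ht
      have hb := pair_bound (l := l) t (2 * Real.pi * (k + 1)) (abs_le.mpr ht)
        (by nlinarith [(Nat.cast_nonneg k : (0:ℝ) ≤ k)])
      rw [Complex.norm_real, Real.norm_eq_abs, abs_div, abs_two]
      linarith [abs_nonneg (cker l (t + 2 * Real.pi * (k + 1)) -
        cker l (-t + 2 * Real.pi * (k + 1)))]
  -- `(2 * N b + 1) * π` is the last odd multiple of `π` not exceeding `b`, once `π ≤ b`.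
  set N : ℝ → ℕ := fun b => ⌊(b / Real.pi - 1) / 2⌋₊ with hN
  have hNt : Tendsto N atTop atTop := by
    refine tendsto_nat_floor_atTop.comp ?_
    refine Tendsto.atTop_div_const two_pos (tendsto_atTop_add_const_right _ (-1) ?_)
    exact tendsto_id.atTop_div_const hpi
  have hlow : Tendsto (fun b => (2 * (N b : ℝ) + 1) * Real.pi) atTop atTop := by
    refine Tendsto.atTop_mul_const hpi (tendsto_atTop_add_const_right _ 1 ?_)
    exact Tendsto.const_mul_atTop two_pos (tendsto_natCast_atTop_atTop.comp hNt)
  have hrem : Tendsto (fun b => ∫ t in (2 * (N b : ℝ) + 1) * Real.pi..b, (cker l t : ℂ) * g t)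
      atTop (𝓝 0) := by
    have hz := (tendsto_inv_atTop_zero.comp hlow).mul_const (∫ t in (0:ℝ)..2 * Real.pi, ‖g t‖)
    rw [zero_mul] at hz
    refine squeeze_zero_norm' ?_ hz
    filter_upwards [eventually_ge_atTop Real.pi] with b hb
    have hx : 0 ≤ (b / Real.pi - 1) / 2 := by
      have : 1 ≤ b / Real.pi := (one_le_div hpi).mpr hb
      linarith
    have h1 := Nat.floor_le hx
    have h2 := Nat.lt_floor_add_one ((b / Real.pi - 1) / 2)
    have hbp : b = b / Real.pi * Real.pi := by field_simp
    refine remainder_bound hl hgP hgI (by positivity) ?_ ?_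
    · calc _ ≤ b / Real.pi * Real.pi := mul_le_mul_of_nonneg_right (by simp only [hN]; linarith) hpi.le
        _ = b := hbp.symm
    · calc b = b / Real.pi * Real.pi := hbp
        _ ≤ (2 * (N b : ℝ) + 3) * Real.pi :=
          mul_le_mul_of_nonneg_right (by simp only [hN]; linarith) hpi.le
        _ = _ := by ring
  have hfin := (hseq.comp hNt).add hrem
  rw [add_zero] at hfin
  refine hfin.congr fun b => ?_
  exact intervalIntegral.integral_add_adjacent_intervals (hhI _ _) (hhI _ _)
end

section
/- Let f : ℝ → ℝ be an even, 2π-periodic function that is integrable on [0, 2π], with Fourier cosine coefficients a_n = (1/π)∫₀^{2π} f(t) cos(nt) dt for n ≥ 0. Then for every λ > 0, ∫₀^∞ f(t)/(λ² + t²) dt = (π/(2λ))·(a₀/2 + Σ_{n=1}^∞ a_n e^{−nλ}). -/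
open MeasureTheory Filter Topology

/-!
By evenness the integral is half of `∫ f(t) / (l² + t²)` over `ℝ`. Cutting `ℝ` into translates of
`(-π, π]` and using periodicity turns the latter into the integral over one period of `f` against
the periodization `∑_{n ∈ ℤ} 1 / (l² + (t + 2πn)²)` (`hasSum_integral_translates`). This
periodization is the Poisson kernel `(1 / (2l)) (1 + 2 ∑_{n ≥ 1} e^{-nl} cos (nt))`
(`tsum_kernel_eq`): it is, up to a factor, the imaginary part of `π cot (πz)` at
`z = (t + il) / (2π)`, computed once from the Mittag-Leffler expansion of the cotangent and once
from its `q`-expansion. Integrating the cosine series against `f` term by term produces the `a n`.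

Both interchanges of sum and integral are justified in the same way
(`integrable_mul_and_summable`): on `|t| ≤ π` each series is dominated by a summable series of
constants, while `f` is merely integrable.
-/

/-- The periodization of `1 / (l² + t²)` is the Poisson kernel with parameter `e^{-l}`, up to
normalization. Both sides arise as imaginary parts of expansions of `π cot (πz)` at
`z = (t + il) / (2π)`. -/
theorem tsum_kernel_eq {l t : ℝ} (hl : 0 < l)
    (hs : Summable fun n : ℤ => 1 / (l ^ 2 + (t + n * (2 * Real.pi)) ^ 2)) :
    ∑' n : ℤ, 1 / (l ^ 2 + (t + n * (2 * Real.pi)) ^ 2) =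
      1 / (2 * l) + ∑' n : ℕ, 1 / l * (Real.exp (-(n + 1) * l) * Real.cos ((n + 1 : ℕ) * t)) := by
  have hpi := Real.pi_pos
  set z : UpperHalfPlane := ⟨⟨t / (2 * Real.pi), l / (2 * Real.pi)⟩, by simp; positivity⟩ with hz
  have hzc : (z : ℂ) ∈ Complex.integerComplement := UpperHalfPlane.coe_mem_integerComplement z
  have hzre : (z : ℂ).re = t / (2 * Real.pi) := rfl
  have hzim : (z : ℂ).im = l / (2 * Real.pi) := rfl
  have hzre' : z.re = t / (2 * Real.pi) := rfl
  have hzim' : z.im = l / (2 * Real.pi) := rfl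
  have hterm (n : ℤ) : (1 / ((z : ℂ) + n)).im =
      -(2 * Real.pi * l) * (1 / (l ^ 2 + (t + n * (2 * Real.pi)) ^ 2)) := by
    have h0 : l ^ 2 + (t + n * (2 * Real.pi)) ^ 2 ≠ 0 := by positivity
    rw [one_div, Complex.inv_im, Complex.normSq_apply]
    simp only [Complex.add_re, Complex.add_im, hzre, hzim, Complex.intCast_re, Complex.intCast_im]
    have h1 : (t / (2 * Real.pi) + n) * (t / (2 * Real.pi) + n) +
      (l / (2 * Real.pi) + 0) * (l / (2 * Real.pi) + 0) =
        (l ^ 2 + (t + n * (2 * Real.pi)) ^ 2) / (2 * Real.pi) ^ 2 := by field_simp; ring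
    rw [h1]; field_simp; ring
  have hcot := (cot_series_rep' hzc).symm
  have hsc := summable_cotTerm hzc
  have him := (Complex.hasSum_im hsc.hasSum)
  have hq : (∑' n : ℕ, cotTerm (z : ℂ) n) =
      Real.pi * Complex.cot (Real.pi * z) - 1 / z := hcot
  rw [hq, pi_mul_cot_pi_q_exp] at him
  have hE : Complex.exp (2 * Real.pi * Complex.I * z) = Complex.exp (⟨-l, t⟩ : ℂ) := by
    congr 1
    apply Complex.ext <;> simp [hzre', hzim'] <;> field_simp
  have hgeo : HasSum (fun n : ℕ => Real.exp (-n * l) * Real.cos (n * t))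
      (∑' n : ℕ, Complex.exp (2 * Real.pi * Complex.I * z) ^ n).re := by
    have h : ‖Complex.exp (2 * Real.pi * Complex.I * z)‖ < 1 := by
      rw [hE, Complex.norm_exp]; simpa using hl
    convert! Complex.hasSum_re (summable_geometric_of_norm_lt_one h).hasSum using 2 with n
    rw [hE, ← Complex.exp_nat_mul, Complex.exp_re]
    simp
  have hs1 := hs.comp_injective (i := fun n : ℕ => (n : ℤ) + 1) (fun a b h => by simpa using h)
  have hs2 := hs.comp_injective (i := fun n : ℕ => -((n : ℤ) + 1)) (fun a b h => by simpa using h)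
  have hZ := (HasSum.of_add_one_of_neg_add_one
    (f := fun n : ℤ => 1 / (l ^ 2 + (t + n * (2 * Real.pi)) ^ 2)) hs1.hasSum hs2.hasSum).tsum_eq
  have hpair := ((hs1.hasSum.add hs2.hasSum).mul_left (-(2 * Real.pi * l)))
  have huniq := hpair.unique (by
    convert! him using 2 with n
    have e1 := hterm (n + 1)
    have e2 := hterm (-(n + 1))
    simp only [cotTerm, Complex.add_im, Function.comp]
    push_cast at e1 e2 ⊢
    rw [e1, sub_eq_add_neg, e2]; ring)
  have h0 := hterm 0
  simp only [Int.cast_zero, add_zero] at h0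
  -- The `q`-expansion of the cotangent includes the constant term `n = 0`, removed here.
  have hgeo' := (hasSum_nat_add_iff' 1).mpr hgeo
  simp only [Finset.sum_range_one] at hgeo'
  have hT := hgeo'.tsum_eq
  rw [tsum_mul_left, hZ]
  have hi : ((Real.pi : ℂ) * Complex.I - 2 * Real.pi * Complex.I *
      ∑' n : ℕ, Complex.exp (2 * Real.pi * Complex.I * z) ^ n - 1 / z).im =
      Real.pi - 2 * Real.pi * (∑' n : ℕ, Complex.exp (2 * Real.pi * Complex.I * z) ^ n).re
       - (1 / (z : ℂ)).im := by
    simp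
  rw [hi, h0] at huniq
  have hT' : ∑' n : ℕ, Real.exp (-(n + 1) * l) * Real.cos ((n + 1 : ℕ) * t) =
    (∑' n : ℕ, Complex.exp (2 * Real.pi * Complex.I * z) ^ n).re - 1 := by
    push_cast at hT ⊢
    rw [hT]; simp
  rw [hT']
  simp only [Int.cast_zero]
  generalize (∑' n : ℕ, Complex.exp (2 * Real.pi * Complex.I * z) ^ n).re = G at huniq ⊢
  apply mul_left_cancel₀ (show Real.pi * l ≠ 0 by positivity)
  rw [show Real.pi * l * (1 / (2 * l) + 1 / l * (G - 1)) = Real.pi * (G - 1 / 2) by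
    field_simp; ring]
  linear_combination (-1 / 2) * huniq

/-- If `q n` is bounded by constants `b n` with `∑ b n` finite, then the products of an
integrable `f` with the `q n` satisfy the hypotheses for termwise integration. -/
theorem integrable_mul_and_summable {ι : Type*} {μ : Measure ℝ} {f : ℝ → ℝ} (hf : Integrable f μ) {q : ι → ℝ → ℝ}
    (hq : ∀ n, Continuous (q n)) {b : ι → ℝ} (hb : Summable b)
    (hqb : ∀ n, ∀ᵐ t ∂μ, ‖q n t‖ ≤ b n) :
    (∀ n, Integrable (fun t => f t * q n t) μ) ∧
      Summable fun n => ∫ t, ‖f t * q n t‖ ∂μ := by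
  have hi n : Integrable (fun t => f t * q n t) μ :=
    hf.mul_bdd (c := b n) (hq n).aestronglyMeasurable (hqb n)
  refine ⟨hi, Summable.of_nonneg_of_le (fun n => integral_nonneg fun t => norm_nonneg _)
    (fun n => ?_) (hb.mul_left (∫ t, ‖f t‖ ∂μ))⟩
  rw [← integral_mul_const]
  refine integral_mono_ae (hi n).norm (hf.norm.mul_const _) ?_
  filter_upwards [hqb n] with t ht
  rw [norm_mul]
  gcongr

/-- The integral over the line is the sum of the integrals over the translates of one period.
Integrability of `g` on the whole line is not assumed; it follows from `hi` and `hs`. -/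
theorem hasSum_integral_translates {g : ℝ → ℝ} {p x : ℝ} (hp : 0 < p)
    (hi : ∀ n : ℤ, IntegrableOn (fun t => g (t + n * p)) (Set.Ioc x (x + p)))
    (hs : Summable fun n : ℤ => ∫ t in Set.Ioc x (x + p), ‖g (t + n * p)‖) :
    HasSum (fun n : ℤ => ∫ t in Set.Ioc x (x + p), g (t + n * p)) (∫ t, g t) := by
  have hpre (n : ℤ) : Set.Ioc x (x + p) =
      (fun t => t + n * p) ⁻¹' Set.Ioc (x + n • p) (x + (n + 1) • p) := by
    ext t
    simp only [Set.mem_Ioc, Set.mem_preimage, zsmul_eq_mul]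
    push_cast
    constructor <;> rintro ⟨h1, h2⟩ <;> constructor <;> linarith
  have hmp (n : ℤ) := measurePreserving_add_right (volume : Measure ℝ) (n * p)
  have hme (n : ℤ) := measurableEmbedding_addRight ((n : ℝ) * p)
  have hint (h : ℝ → ℝ) (n : ℤ) : ∫ t in Set.Ioc x (x + p), h (t + n * p) =
      ∫ t in Set.Ioc (x + n • p) (x + (n + 1) • p), h t := by
    rw [hpre n]; exact (hmp n).setIntegral_preimage_emb (hme n) h _
  have hi' (n : ℤ) : IntegrableOn g (Set.Ioc (x + n • p) (x + (n + 1) • p)) := by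
    rw [← (hmp n).integrableOn_comp_preimage (hme n), ← hpre n]
    exact hi n
  simp_rw [hint g]
  simp_rw [hint fun t => ‖g t‖] at hs
  rw [← setIntegral_univ, ← iUnion_Ioc_add_zsmul hp x]
  exact hasSum_integral_iUnion (fun n => measurableSet_Ioc)
    (Set.pairwise_disjoint_Ioc_add_zsmul x p) (integrableOn_iUnion_of_summable_integral_norm hi' hs)

theorem summable_kernelBound {l : ℝ} (hl : 0 < l) :
    Summable fun n : ℤ => 1 / (l ^ 2 + (n : ℝ) ^ 2) := by
  refine Summable.of_norm_bounded_eventually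
    (Real.summable_one_div_int_pow.mpr one_lt_two) ?_
  filter_upwards [(Set.finite_singleton (0 : ℤ)).compl_mem_cofinite] with n hn
  have hn' : (n : ℝ) ≠ 0 := by exact_mod_cast hn
  rw [Real.norm_of_nonneg (by positivity)]
  exact one_div_le_one_div_of_le (by positivity) (by nlinarith)

/-- On the centred period `|t| ≤ π` the translated kernels are dominated uniformly in `t`, since
`|t + 2πn| ≥ 2π|n| - π ≥ |n|` for `n ≠ 0`. -/
theorem kernel_le {l t : ℝ} (hl : 0 < l) (ht : |t| ≤ Real.pi) (n : ℤ) :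
    1 / (l ^ 2 + (t + n * (2 * Real.pi)) ^ 2) ≤ 1 / (l ^ 2 + (n : ℝ) ^ 2) := by
  refine one_div_le_one_div_of_le (by positivity) (add_le_add_right (sq_le_sq.mpr ?_) _)
  rcases eq_or_ne n 0 with rfl | hn
  · simp
  have h1 : (1 : ℝ) ≤ |(n : ℝ)| := by exact_mod_cast Int.one_le_abs hn
  have h2 : |(n : ℝ) * (2 * Real.pi)| = |(n : ℝ)| * (2 * Real.pi) := by
    rw [abs_mul, abs_of_pos Real.two_pi_pos]
  have h3 := abs_sub_abs_le_abs_add (n * (2 * Real.pi)) t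
  rw [add_comm t]
  nlinarith [Real.pi_gt_three]

theorem stmt10 (f : ℝ → ℝ) (heven : ∀ t : ℝ, f (-t) = f t)
    (hper : ∀ t : ℝ, f (t + 2 * Real.pi) = f t)
    (hint : IntervalIntegrable f volume 0 (2 * Real.pi))
    (a : ℕ → ℝ)
    (ha : ∀ n : ℕ, a n = (1 / Real.pi) * ∫ t in (0:ℝ)..(2 * Real.pi), f t * Real.cos (n * t))
    (l : ℝ) (hl : 0 < l) :
    (∫ t in Set.Ici (0:ℝ), f t / (l ^ 2 + t ^ 2))
      = Real.pi / (2 * l) * (a 0 / 2 + ∑' n : ℕ, a (n + 1) * Real.exp (-(n + 1) * l)) := by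
  have hpi := Real.pi_pos
  have hP : Function.Periodic f (2 * Real.pi) := hper
  have hle : -Real.pi ≤ -Real.pi + 2 * Real.pi := by linarith
  -- The period is centred at `0`, as `kernel_le` requires `|t| ≤ π`.
  set μ := volume.restrict (Set.Ioc (-Real.pi) (-Real.pi + 2 * Real.pi)) with hμ
  have hf : Integrable f μ := by
    have h := hP.intervalIntegrable₀ Real.two_pi_pos.ne' hint (-Real.pi) (-Real.pi + 2 * Real.pi)
    exact (intervalIntegrable_iff_integrableOn_Ioc_of_le hle).mp h
  have hmem : ∀ᵐ t ∂μ, |t| ≤ Real.pi := by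
    filter_upwards [ae_restrict_mem measurableSet_Ioc] with t ht
    exact abs_le.mpr ⟨ht.1.le, by linarith [ht.2]⟩
  have ha' (n : ℕ) : ∫ t, f t * Real.cos (n * t) ∂μ = Real.pi * a n := by
    have hQ : Function.Periodic (fun t => f t * Real.cos (n * t)) (2 * Real.pi) := fun t => by
      simp only [hper, mul_add, Real.cos_add_nat_mul_two_pi]
    rw [ha n, hμ, ← intervalIntegral.integral_of_le hle,
      hQ.intervalIntegral_add_eq (-Real.pi) 0, zero_add]
    field_simp
  have hfn (n : ℤ) (t : ℝ) : f (t + n * (2 * Real.pi)) = f t := hP.int_mul n t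
  obtain ⟨hi1, hs1⟩ := integrable_mul_and_summable hf
    (q := fun (n : ℤ) t => 1 / (l ^ 2 + (t + n * (2 * Real.pi)) ^ 2))
    (fun n => continuous_const.div (by fun_prop) fun t => by positivity)
    (summable_kernelBound hl) (fun n => by
      filter_upwards [hmem] with t ht
      rw [Real.norm_of_nonneg (by positivity)]
      exact kernel_le hl ht n)
  have hexp : Summable fun n : ℕ => 1 / l * Real.exp (-(n + 1) * l) := by
    have := (summable_nat_add_iff 1).mpr (Real.summable_exp_nat_mul_iff.mpr (neg_lt_zero.mpr hl))
    refine (this.mul_left (1 / l)).congr fun n => ?_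
    push_cast; congr 2; ring
  have hqc (n : ℕ) : Continuous fun t : ℝ =>
      1 / l * (Real.exp (-(n + 1) * l) * Real.cos ((n + 1 : ℕ) * t)) := by fun_prop
  have hqb (n : ℕ) (t : ℝ) :
      ‖1 / l * (Real.exp (-(n + 1) * l) * Real.cos ((n + 1 : ℕ) * t))‖ ≤
        1 / l * Real.exp (-(n + 1) * l) := by
    rw [norm_mul, norm_mul, Real.norm_of_nonneg (by positivity : 0 ≤ 1 / l),
      Real.norm_of_nonneg (Real.exp_pos _).le]
    gcongr
    exact mul_le_of_le_one_right (Real.exp_pos _).le (Real.abs_cos_le_one _)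
  obtain ⟨hi2, hs2⟩ := integrable_mul_and_summable hf hqc hexp (fun n => ae_of_all _ (hqb n))
  have hunf := hasSum_integral_translates (g := fun t => f t * (1 / (l ^ 2 + t ^ 2))) (x := -Real.pi)
    Real.two_pi_pos (fun n => by simpa only [hfn] using! hi1 n)
    (by simpa only [hfn] using! hs1)
  simp only [hfn] at hunf
  have hsum1 := hasSum_integral_of_summable_integral_norm hi1 hs1
  have hsum2 := hasSum_integral_of_summable_integral_norm hi2 hs2
  have hI2 : Integrable (fun t => ∑' n : ℕ, f t *
      (1 / l * (Real.exp (-(n + 1) * l) * Real.cos ((n + 1 : ℕ) * t)))) μ := by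
    simp_rw [tsum_mul_left (a := f _)]
    exact hf.mul_bdd (continuous_tsum hqc hexp hqb).aestronglyMeasurable
      (ae_of_all _ fun t => tsum_of_norm_bounded hexp.hasSum (hqb · t))
  have hK : ∫ t, (∑' n : ℤ, f t * (1 / (l ^ 2 + (t + n * (2 * Real.pi)) ^ 2))) ∂μ =
      1 / (2 * l) * (Real.pi * a 0) + ∫ t, (∑' n : ℕ, f t *
        (1 / l * (Real.exp (-(n + 1) * l) * Real.cos ((n + 1 : ℕ) * t)))) ∂μ := by
    rw [← ha' 0, ← integral_const_mul, ← integral_add (by simpa using hf.const_mul _) hI2]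
    refine integral_congr_ae ?_
    filter_upwards [hmem] with t ht
    rw [tsum_mul_left, tsum_mul_left, tsum_kernel_eq hl
      (Summable.of_nonneg_of_le (fun n => by positivity) (kernel_le hl ht)
        (summable_kernelBound hl))]
    simp; ring
  -- No integrability is needed here: the integrand is a function of `|t|`.
  have habs : ∫ t, f t * (1 / (l ^ 2 + t ^ 2)) =
      2 * ∫ t in Set.Ici (0 : ℝ), f t / (l ^ 2 + t ^ 2) := by
    rw [integral_Ici_eq_integral_Ioi, ← integral_comp_abs]
    refine integral_congr_ae (ae_of_all _ fun t => ?_)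
    rcases abs_choice t with h | h <;> simp [h, heven, div_eq_mul_inv]
  have hfin : ∑' n : ℕ, ∫ t, f t *
        (1 / l * (Real.exp (-(n + 1) * l) * Real.cos ((n + 1 : ℕ) * t))) ∂μ =
      Real.pi / l * ∑' n : ℕ, a (n + 1) * Real.exp (-(n + 1) * l) := by
    rw [← tsum_mul_left]
    refine tsum_congr fun n => ?_
    have h (t : ℝ) : f t * (1 / l * (Real.exp (-(n + 1) * l) * Real.cos ((n + 1 : ℕ) * t))) =
      1 / l * Real.exp (-(n + 1) * l) * (f t * Real.cos ((n + 1 : ℕ) * t)) := by ring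
    simp_rw [h]
    rw [integral_const_mul, ha' (n + 1)]; ring
  have key := hunf.unique hsum1
  rw [habs, hK, ← hsum2.tsum_eq, hfin] at key
  rw [← mul_right_inj' (two_ne_zero (α := ℝ)), key]
  field_simp
end
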